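/- Let p > 0 and let (u,v) be a classical solution of the system (S₃) on ℝ³ such that u ≥ 0 on ℝ³, the finite total mass condition ∬_{ℝ³×ℝ³} u²(x)u²(y)/|x−y|² dx dy < ∞ holds, v(x)/|x|² → 0 as |x| → ∞, and there exist K > 0, C > 0, R > 0 with u(x) ≤ C|x|^K for all |x| ≥ R. Set α := (1/(2π²)) ∫_{ℝ³} P₃(y) dy and assume α > 3/p. Then ∫_{ℝ³} |x|²·u²(y)/|x−y|² dy → ∫_{ℝ³} u²(y) dy as |x| → ∞. -/

import Mathlib

/-!
The half-Laplacian enters only through a weak formulation tested against the explicit kernels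
`rker t x = 1 / (t² + |x|²)`. The kernel `rker s ^ 2` is, up to a factor, the half-space Poisson
kernel at height `s`, and convolution with it sends `rker t` to a multiple of `rker (s + t)`
(`poisson_ker`, by Feynman parametrization). Differentiating in `s` gives the half-Laplacian of
`dker t T = rker t - rker T` in closed form (`Aop_dker`). Testing `(-Δ)^{1/2} u = f ≥ 0` against
`dker t T`, after a cutoff argument, and letting `t → 0` and `T → ∞` yields
`u(x) = l + κ ∫ f(y) / |x - y|² dy` with `κ = kap` (`Good.repr`). This applies to
`u` itself, with `f = exp (p v)`, and to `-Δv`, with `f = P₃`. For `u` the constant vanishes because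
the total mass is finite (`u_repr`). Since `α ≠ 0`, the Bochner integral of `P₃` is nonzero, hence
`P₃` is integrable; together with the growth of `u` this bounds `P₃` by a polynomial (`P3_poly`).

To pass from `-Δv = l + κ ∫ P₃(y) / |· - y|² dy` to `v`, averages against `(1 - |y|²)₊²` are used:
the divergence theorem turns the radial derivative of such an average into an integral of `Δv`
against `(1 - |y|²)₊³` (`mean_formula`). The same formula for `log (t² + |x|²) / 2` evaluates the
average `ER` of `1 / |·|²` over scales up to `R`. Subquadratic growth of `v` forces `l = 0`
(`Pot.l_zero`). The averages of `v` around two centres differ by `o(1)` as `R → ∞`, because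
`∫ exp (p v) / |y|² < ∞` controls the positive part of `v`, so
`v(x) - v(0) ≤ κ ∫ P₃(z) (log |z| - log |x - z|) dz` (`Pot.v_le`).

The inequality `1 - cos t ≥ 2 t² / π²` on `[-π, π]` gives `C₃⁻¹ ≥ 16π/3`, and with `α > 3/p` this
implies `p κ ∫ P₃ > 4` (`mass_gt_four`). The logarithmic bound then gives
`exp (p v) = O((1 + |x|)⁻⁴)` (`Pot.decay`). For `0 ≤ f = O((1 + |y|)⁻⁴)` one has
`|x|² ∫ f(y) / |x - y|² dy → ∫ f` (`tendsto_potential`). With `f = exp (p v)` this shows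
`u = O((1 + |x|)⁻²)`, so `u²` is an admissible density as well, and `f = u²` is the claim.
-/

open MeasureTheory Filter Topology
open scoped NNReal

noncomputable section

abbrev E3 := EuclideanSpace ℝ (Fin 3)

/-- The normalizing constant `C₃ = (∫_{ℝ³} (1 − cos(2πζ₁))/|ζ|⁴ dζ)⁻¹`. -/
def C3 : ℝ := (∫ ζ : E3, (1 - Real.cos (2 * Real.pi * ζ 0)) / ‖ζ‖ ^ 4)⁻¹

/-- The assertion `(−Δ)^{1/2} w (x) = h`, i.e. the principal-value limit exists and equals `h`. -/
def HalfLapEq3 (w : E3 → ℝ) (x : E3) (h : ℝ) : Prop :=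
  Tendsto (fun ε : ℝ =>
      C3 * ∫ y in {y : E3 | ε ≤ ‖y - x‖}, (w x - w y) / ‖x - y‖ ^ 4)
    (𝓝[>] (0 : ℝ)) (𝓝 h)

/-- The Euclidean Laplacian `Δw(x) = ∑ᵢ ∂²w/∂xᵢ²`. -/
def lap3 (w : E3 → ℝ) (x : E3) : ℝ :=
  ∑ i : Fin 3,
    fderiv ℝ (fun z => fderiv ℝ w z (EuclideanSpace.single i 1)) x (EuclideanSpace.single i 1)

/-- Local Hölder continuity of a map `g`. -/
def LocHolder3 {F : Type*} [NormedAddCommGroup F] (g : E3 → F) : Prop :=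
  ∀ x : E3, ∃ (C a : ℝ≥0) (r : ℝ), 0 < r ∧ 0 < (a : ℝ) ∧ (a : ℝ) ≤ 1 ∧
    HolderOnWith C a g (Metric.ball x r)

/-- `P₃(y) = (∫ u²(z)/|y−z|² dz) · u²(y)`. -/
def P3 (u : E3 → ℝ) (y : E3) : ℝ := (∫ z : E3, u z ^ 2 / ‖y - z‖ ^ 2) * u y ^ 2

/-- `(u,v)` is a classical solution of the system (S₃) on ℝ³. -/
structure IsSolution3 (p : ℝ) (u v : E3 → ℝ) : Prop where
  u_C1 : ContDiff ℝ 1 u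
  u_grad_holder : LocHolder3 (fderiv ℝ u)
  u_int : Integrable (fun x : E3 => |u x| / (1 + ‖x‖ ^ 4))
  v_C3 : ContDiff ℝ 3 v
  v_D3_holder : LocHolder3 (iteratedFDeriv ℝ 3 v)
  lapv_int : Integrable (fun x : E3 => |lap3 v x| / (1 + ‖x‖ ^ 4))
  eq_u : ∀ x : E3, HalfLapEq3 u x (Real.exp (p * v x))
  eq_v : ∀ x : E3, HalfLapEq3 (fun z => -lap3 v z) x (P3 u x)

/-- The finite total mass condition `∬ u²(x)u²(y)/|x−y|² dx dy < ∞`. -/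
def FiniteMass3 (u : E3 → ℝ) : Prop :=
  Integrable (fun q : E3 × E3 => u q.1 ^ 2 * u q.2 ^ 2 / ‖q.1 - q.2‖ ^ 2)

/-! ### Radial integrals on three-dimensional space -/

lemma volReal_ball_one : (volume : Measure E3).real (Metric.ball 0 1) = 4 * Real.pi / 3 := by
  rw [Measure.real, EuclideanSpace.volume_ball_fin_three]
  rw [ENNReal.toReal_mul, ENNReal.toReal_pow, ENNReal.toReal_ofReal (by norm_num),
    ENNReal.toReal_ofReal (by positivity)]
  ring

lemma integral_radial (f : ℝ → ℝ) :
    ∫ x : E3, f ‖x‖ = 4 * Real.pi * ∫ r in Set.Ioi (0 : ℝ), r ^ 2 * f r := by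
  rw [integral_fun_norm_addHaar volume f, volReal_ball_one]
  simp
  ring

lemma integrable_radial {f : ℝ → ℝ} :
    Integrable (fun x : E3 => f ‖x‖) ↔ IntegrableOn (fun r : ℝ => r ^ 2 * f r) (Set.Ioi 0) := by
  rw [integrable_fun_norm_addHaar volume]
  simp

lemma integrableOn_ball_rpow {s : ℝ} (hs : s < 3) (r : ℝ) :
    IntegrableOn (fun x : E3 => ‖x‖ ^ (-s)) (Metric.ball 0 r) := by
  refine integrableOn_ball_of_norm_le_rpow (C := 1) (α := s) (by simp) (by simpa using hs) ?_ ?_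
  · refine Eventually.of_forall fun x => ?_
    rw [one_mul, Real.norm_of_nonneg (by positivity)]
  · exact (measurable_norm.pow_const _).aestronglyMeasurable

lemma integrableOn_ball_inv_sq (r : ℝ) :
    IntegrableOn (fun x : E3 => 1 / ‖x‖ ^ 2) (Metric.ball 0 r) := by
  refine (integrableOn_ball_rpow (s := 2) (by norm_num) r).congr_fun (fun x _ => ?_)
    measurableSet_ball
  simp only [Real.rpow_neg (norm_nonneg x), one_div]
  norm_cast

lemma integrableOn_ball_inv (r : ℝ) :
    IntegrableOn (fun x : E3 => 1 / ‖x‖) (Metric.ball 0 r) := by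
  refine (integrableOn_ball_rpow (s := 1) (by norm_num) r).congr_fun (fun x _ => ?_)
    measurableSet_ball
  simp only [Real.rpow_neg (norm_nonneg x), one_div, Real.rpow_one]

lemma integral_ball_inv_sq {R : ℝ} (hR : 0 ≤ R) :
    ∫ x in Metric.ball (0 : E3) R, 1 / ‖x‖ ^ 2 = 4 * Real.pi * R := by
  rw [← integral_indicator measurableSet_ball]
  have : (Metric.ball (0 : E3) R).indicator (fun x : E3 => 1 / ‖x‖ ^ 2)
      = fun x : E3 => (Set.Iio R).indicator (fun r : ℝ => 1 / r ^ 2) ‖x‖ := by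
    ext x
    simp [Set.indicator]
  rw [this, integral_radial]
  congr 1
  have h2 : ∀ r ∈ Set.Ioi (0 : ℝ), r ^ 2 * (Set.Iio R).indicator (fun r : ℝ => 1 / r ^ 2) r
      = (Set.Iio R).indicator (fun _ => (1 : ℝ)) r := by
    intro r hr
    have : r ≠ 0 := (Set.mem_Ioi.1 hr).ne'
    by_cases h : r < R <;> simp [h, this]
  rw [setIntegral_congr_fun measurableSet_Ioi h2, setIntegral_indicator measurableSet_Iio,
    Set.Ioi_inter_Iio]
  simp [hR]

lemma not_integrable_inv_sq : ¬ Integrable (fun x : E3 => 1 / ‖x‖ ^ 2) := by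
  intro h
  have h1 := (integrable_radial (f := fun r => 1 / r ^ 2)).1 h
  have h2 : IntegrableOn (fun _ : ℝ => (1 : ℝ)) (Set.Ioi 0) := by
    refine h1.congr_fun (fun r hr => ?_) measurableSet_Ioi
    have : r ≠ 0 := (Set.mem_Ioi.1 hr).ne'
    field_simp
  simp [integrableOn_const_iff] at h2

lemma integrable_om {n : ℕ} (hn : 3 < n) : Integrable (fun x : E3 => ((1 + ‖x‖) ^ n)⁻¹) := by
  have := integrable_one_add_norm (μ := (volume : Measure E3)) (r := n) (by simpa using hn)
  refine this.congr (Eventually.of_forall fun x => ?_)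
  simp only [Real.rpow_neg (by positivity : (0:ℝ) ≤ 1 + ‖x‖), Real.rpow_natCast]

lemma one_add_sq_ge (r : ℝ) : (1 + r) ^ 2 ≤ 2 * (1 + r ^ 2) := by nlinarith [sq_nonneg (1 - r)]

lemma integrable_om2 {n : ℕ} (hn : 2 ≤ n) : Integrable (fun x : E3 => ((1 + ‖x‖ ^ 2) ^ n)⁻¹) := by
  refine ((integrable_om (n := 2 * n) (by omega)).const_mul (2 ^ n)).mono'
    (by fun_prop) (Eventually.of_forall fun x => ?_)
  rw [Real.norm_of_nonneg (by positivity), pow_mul, inv_eq_one_div, inv_eq_one_div, mul_one_div,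
    div_le_div_iff₀ (by positivity) (by positivity), one_mul, ← mul_pow]
  gcongr
  exact one_add_sq_ge _

lemma tendsto_inv_one_add_sq : Tendsto (fun r : ℝ => 1 / (1 + r ^ 2)) atTop (𝓝 0) := by
  refine Tendsto.div_atTop tendsto_const_nhds ?_
  exact tendsto_atTop_add_const_left _ _ (tendsto_pow_atTop two_ne_zero)

lemma tendsto_div_one_add_sq : Tendsto (fun r : ℝ => r / (1 + r ^ 2)) atTop (𝓝 0) := by
  refine squeeze_zero' (g := fun r : ℝ => r⁻¹) ?_ ?_ tendsto_inv_atTop_zero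
  · filter_upwards [eventually_ge_atTop 0] with r hr
    positivity
  · filter_upwards [eventually_gt_atTop 0] with r hr
    rw [inv_eq_one_div, div_le_div_iff₀ (by positivity) hr]
    nlinarith

lemma integral_c2 : ∫ x : E3, ((1 + ‖x‖ ^ 2) ^ 2)⁻¹ = Real.pi ^ 2 := by
  rw [integral_radial (fun r => ((1 + r ^ 2) ^ 2)⁻¹)]
  have h : ∫ r in Set.Ioi (0 : ℝ), r ^ 2 * ((1 + r ^ 2) ^ 2)⁻¹ = Real.pi / 4 := by
    have := integral_Ioi_of_hasDerivAt_of_tendsto (a := 0)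
      (f := fun r : ℝ => 1 / 2 * (Real.arctan r - r / (1 + r ^ 2))) (m := 1 / 2 * (Real.pi / 2 - 0))
      (f' := fun r : ℝ => r ^ 2 * ((1 + r ^ 2) ^ 2)⁻¹) ?_ ?_ ?_ ?_
    · rw [this]; simp; ring
    · exact Continuous.continuousWithinAt (by
        have : ∀ x : ℝ, 1 + x ^ 2 ≠ 0 := fun x => by positivity
        fun_prop (disch := assumption))
    · intro x _
      have h1 : (1 + x ^ 2) ≠ 0 := by positivity
      have h2 : HasDerivAt (fun r : ℝ => 1 + r ^ 2) (2 * x) x := by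
        simpa using (hasDerivAt_pow 2 x).const_add 1
      have := ((Real.hasDerivAt_arctan x).sub ((hasDerivAt_id x).div h2 h1)).const_mul (1 / 2 : ℝ)
      refine this.congr_deriv ?_
      simp
      field_simp
      ring
    · exact (integrable_radial (f := fun r => ((1 + r ^ 2) ^ 2)⁻¹)).1 (integrable_om2 le_rfl)
    · exact ((Real.tendsto_arctan_atTop.mono_right nhdsWithin_le_nhds).sub
        tendsto_div_one_add_sq).const_mul _
  rw [h]; ring

lemma integral_c3 : ∫ x : E3, ((1 + ‖x‖ ^ 2) ^ 3)⁻¹ = Real.pi ^ 2 / 4 := by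
  rw [integral_radial (fun r => ((1 + r ^ 2) ^ 3)⁻¹)]
  have h : ∫ r in Set.Ioi (0 : ℝ), r ^ 2 * ((1 + r ^ 2) ^ 3)⁻¹ = Real.pi / 16 := by
    have := integral_Ioi_of_hasDerivAt_of_tendsto (a := 0)
      (f := fun r : ℝ => 1 / 8 * (Real.arctan r + r / (1 + r ^ 2) - 2 * (r / (1 + r ^ 2) ) * (1 / (1 + r ^ 2))))
      (m := 1 / 8 * (Real.pi / 2 + 0 - 2 * 0 * 0))
      (f' := fun r : ℝ => r ^ 2 * ((1 + r ^ 2) ^ 3)⁻¹) ?_ ?_ ?_ ?_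
    · rw [this]; simp; ring
    · exact Continuous.continuousWithinAt (by
        have : ∀ x : ℝ, 1 + x ^ 2 ≠ 0 := fun x => by positivity
        fun_prop (disch := assumption))
    · intro x _
      have h1 : (1 + x ^ 2) ≠ 0 := by positivity
      have h2 : HasDerivAt (fun r : ℝ => 1 + r ^ 2) (2 * x) x := by
        simpa using (hasDerivAt_pow 2 x).const_add 1
      have h3 := ((hasDerivAt_id x).div h2 h1)
      have h4 := ((hasDerivAt_const x (1 : ℝ)).div h2 h1)
      have := (((Real.hasDerivAt_arctan x).add h3).sub ((h3.const_mul 2).mul h4)).const_mul (1 / 8 : ℝ)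
      refine this.congr_deriv ?_
      simp
      field_simp
      ring
    · exact (integrable_radial (f := fun r => ((1 + r ^ 2) ^ 3)⁻¹)).1 (integrable_om2 (by norm_num))
    · exact (((Real.tendsto_arctan_atTop.mono_right nhdsWithin_le_nhds).add
        tendsto_div_one_add_sq).sub ((tendsto_div_one_add_sq.const_mul 2).mul
          tendsto_inv_one_add_sq)).const_mul _
  rw [h]; ring

/-! ### The conformal bubble and its Poisson convolution -/

/-- The kernel `1 / (t² + |x|²)`, a regularization at scale `t` of the Riesz kernel `1 / |x|²`. -/
def rker (t : ℝ) (x : E3) : ℝ := (t ^ 2 + ‖x‖ ^ 2)⁻¹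

lemma rker_pos {t : ℝ} (ht : 0 < t) (x : E3) : 0 < rker t x := by unfold rker; positivity

lemma rker_nonneg (t : ℝ) (x : E3) : 0 ≤ rker t x := by unfold rker; positivity

lemma rker_neg (t : ℝ) (x : E3) : rker t (-x) = rker t x := by simp [rker]

lemma continuous_rker {t : ℝ} (ht : 0 < t) : Continuous (rker t) := by
  unfold rker
  have : ∀ x : E3, t ^ 2 + ‖x‖ ^ 2 ≠ 0 := fun x => by positivity
  fun_prop (disch := assumption)

lemma integral_scale (n : ℕ) {d : ℝ} (hd : 0 < d) :
    ∫ y : E3, ((d ^ 2 + ‖y‖ ^ 2) ^ n)⁻¹ = d ^ 3 / d ^ (2 * n) * ∫ y : E3, ((1 + ‖y‖ ^ 2) ^ n)⁻¹ := by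
  have h := Measure.integral_comp_smul (volume : Measure E3)
    (fun y : E3 => ((d ^ 2 + ‖y‖ ^ 2) ^ n)⁻¹) d
  have h2 : ∀ y : E3, ((d ^ 2 + ‖d • y‖ ^ 2) ^ n)⁻¹
      = (d ^ (2 * n))⁻¹ * ((1 + ‖y‖ ^ 2) ^ n)⁻¹ := by
    intro y
    rw [norm_smul, Real.norm_of_nonneg hd.le, ← mul_inv, pow_mul, ← mul_pow]
    congr 2; ring
  simp only [h2, integral_const_mul] at h
  rw [abs_of_pos (by simpa using by positivity)] at h
  simp at h
  field_simp at h ⊢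
  linarith

lemma integral_ker_sq {d : ℝ} (hd : 0 < d) : ∫ y : E3, rker d y ^ 2 = Real.pi ^ 2 / d := by
  have := integral_scale 2 hd
  rw [integral_c2] at this
  simp only [rker, inv_pow]
  rw [this]; field_simp

lemma integral_cube {d : ℝ} (hd : 0 < d) :
    ∫ y : E3, ((d ^ 2 + ‖y‖ ^ 2) ^ 3)⁻¹ = Real.pi ^ 2 / (4 * d ^ 3) := by
  rw [integral_scale 3 hd, integral_c3]; field_simp

/-- Feynman parametrization of `1 / (A² B)`. -/
lemma feynman {A B : ℝ} (hA : 0 < A) (hB : 0 < B) :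
    ∫ l in (0 : ℝ)..1, 2 * l / (l * A + (1 - l) * B) ^ 3 = (A⁻¹) ^ 2 * B⁻¹ := by
  have hN : ∀ l ∈ Set.uIcc (0 : ℝ) 1, l * A + (1 - l) * B ≠ 0 := by
    intro l hl
    rw [Set.uIcc_of_le zero_le_one] at hl
    have h0 := hl.1; have h1 := hl.2
    have : 0 < l * A + (1 - l) * B := by
      rcases h0.eq_or_lt with h | h
      · rw [← h]; simpa
      · have := mul_pos h hA
        have := mul_nonneg (sub_nonneg.2 h1) hB.le
        linarith
    exact this.ne'
  rw [intervalIntegral.integral_eq_sub_of_hasDerivAt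
    (f := fun l => l ^ 2 / (B * (l * A + (1 - l) * B) ^ 2))]
  · simp [field]
  · intro l hl
    have h1 := hN l hl
    have h2 : HasDerivAt (fun l : ℝ => l * A + (1 - l) * B) (A - B) l := by
      have := ((hasDerivAt_id l).mul_const A).add (((hasDerivAt_id l).const_sub 1).mul_const B)
      refine this.congr_deriv (by simp; ring)
    have := (hasDerivAt_pow 2 l).div ((h2.pow 2).const_mul B) (mul_ne_zero hB.ne' (pow_ne_zero _ h1))
    refine this.congr_deriv ?_
    simp
    field_simp
    ring
  · refine ContinuousOn.intervalIntegrable ?_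
    refine ContinuousOn.div (by fun_prop) (by fun_prop) (fun l hl => pow_ne_zero _ (hN l hl))

/-- The bubble `rker t` is carried to the bubble `rker (s + t)` by the Poisson kernel at height `s`. -/
lemma poisson_ker {s t : ℝ} (hs : 0 < s) (hst : s < t) (x : E3) :
    ∫ y : E3, rker s y ^ 2 * rker t (x + y) = Real.pi ^ 2 / s * rker (s + t) x := by
  have ht : 0 < t := hs.trans hst
  set ρ := ‖x‖ ^ 2 with hρ
  have hρ0 : 0 ≤ ρ := by positivity
  set D : ℝ → ℝ := fun l => l * (1 - l) * ρ + l * s ^ 2 + (1 - l) * t ^ 2 with hD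
  have hDpos : ∀ l ∈ Set.Icc (0 : ℝ) 1, 0 < D l := by
    intro l hl
    have h0 := hl.1; have h1 := hl.2
    have e1 : 0 ≤ l * (1 - l) * ρ := mul_nonneg (mul_nonneg h0 (sub_nonneg.2 h1)) hρ0
    have e2 : 0 ≤ (1 - l) * (t ^ 2 - s ^ 2) :=
      mul_nonneg (sub_nonneg.2 h1) (by nlinarith)
    have e3 : 0 < s ^ 2 := by positivity
    simp only [hD]; nlinarith
  set N : ℝ → E3 → ℝ := fun l y => l * (s ^ 2 + ‖y‖ ^ 2) + (1 - l) * (t ^ 2 + ‖x + y‖ ^ 2) with hNdef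
  have hN : ∀ l y, N l y = D l + ‖y + (1 - l) • x‖ ^ 2 := by
    intro l y
    simp only [hNdef, hD, hρ]
    rw [norm_add_sq_real, norm_add_sq_real, norm_smul, mul_pow, Real.norm_eq_abs, sq_abs,
      inner_smul_right, real_inner_comm]
    ring
  set K : ℝ := (1 + 1 / s ^ 2) + (2 + (1 + 2 * ρ) / t ^ 2) with hK
  have hKpos : 0 < K := by positivity
  have hKN : ∀ l ∈ Set.Icc (0 : ℝ) 1, ∀ y, 1 + ‖y‖ ^ 2 ≤ K * N l y := by
    intro l hl y
    have h0 := hl.1; have h1 := sub_nonneg.2 hl.2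
    have a1 : 1 + ‖y‖ ^ 2 ≤ K * (s ^ 2 + ‖y‖ ^ 2) := by
      have : 1 + ‖y‖ ^ 2 ≤ (1 + 1 / s ^ 2) * (s ^ 2 + ‖y‖ ^ 2) := by
        have : (1 + 1 / s ^ 2) * (s ^ 2 + ‖y‖ ^ 2) = s ^ 2 + ‖y‖ ^ 2 + 1 + ‖y‖ ^ 2 / s ^ 2 := by
          field_simp; ring
        rw [this]
        have : 0 ≤ ‖y‖ ^ 2 / s ^ 2 := by positivity
        nlinarith [sq_nonneg s]
      refine this.trans (mul_le_mul_of_nonneg_right ?_ (by positivity))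
      rw [hK]; have : 0 ≤ 2 + (1 + 2 * ρ) / t ^ 2 := by positivity
      linarith
    have a2 : 1 + ‖y‖ ^ 2 ≤ K * (t ^ 2 + ‖x + y‖ ^ 2) := by
      have h3 : ‖y‖ ^ 2 ≤ 2 * ‖x + y‖ ^ 2 + 2 * ρ := by
        have e : y = (x + y) - x := by abel
        have : ‖y‖ ≤ ‖x + y‖ + ‖x‖ := by
          conv_lhs => rw [e]
          exact norm_sub_le _ _
        have h4 : ‖y‖ ^ 2 ≤ (‖x + y‖ + ‖x‖) ^ 2 := by gcongr
        nlinarith [sq_nonneg (‖x + y‖ - ‖x‖)]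
      have : 1 + ‖y‖ ^ 2 ≤ (2 + (1 + 2 * ρ) / t ^ 2) * (t ^ 2 + ‖x + y‖ ^ 2) := by
        have e : (2 + (1 + 2 * ρ) / t ^ 2) * (t ^ 2 + ‖x + y‖ ^ 2)
          = 2 * t ^ 2 + 2 * ‖x + y‖ ^ 2 + (1 + 2 * ρ) + (1 + 2 * ρ) * ‖x + y‖ ^ 2 / t ^ 2 := by
          field_simp
          ring
        rw [e]
        have : 0 ≤ (1 + 2 * ρ) * ‖x + y‖ ^ 2 / t ^ 2 := by positivity
        nlinarith [sq_nonneg t]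
      refine this.trans (mul_le_mul_of_nonneg_right ?_ (by positivity))
      rw [hK]; have : 0 ≤ 1 + 1 / s ^ 2 := by positivity
      linarith
    simp only [hNdef]
    nlinarith [mul_le_mul_of_nonneg_left a1 h0, mul_le_mul_of_nonneg_left a2 h1]
  have e1 : ∀ y : E3, rker s y ^ 2 * rker t (x + y)
      = ∫ l in Set.Ioc (0 : ℝ) 1, 2 * l / (N l y) ^ 3 := by
    intro y
    rw [← intervalIntegral.integral_of_le zero_le_one]
    exact (feynman (by positivity) (by positivity)).symm
  simp only [e1]
  -- With the Feynman parameter `l` outside, completing the square turns the inner integrand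
  -- into a translate of the cube of a single kernel.
  rw [integral_integral_swap]
  swap
  · have hdom : Integrable (fun q : E3 × ℝ => (2 * K ^ 3 * ((1 + ‖q.1‖ ^ 2) ^ 3)⁻¹) * 1)
        ((volume : Measure E3).prod (volume.restrict (Set.Ioc (0 : ℝ) 1))) :=
      ((integrable_om2 (n := 3) (by norm_num)).const_mul _).mul_prod (integrable_const _)
    refine hdom.mono' ?_ ?_
    · refine Measurable.aestronglyMeasurable ?_
      simp only [hNdef, Function.uncurry_def]
      fun_prop
    · have : ∀ᵐ q : E3 × ℝ ∂((volume : Measure E3).prod (volume.restrict (Set.Ioc (0 : ℝ) 1))),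
          q.2 ∈ Set.Ioc (0 : ℝ) 1 := by
        refine Measure.quasiMeasurePreserving_snd.ae ?_
        exact ae_restrict_mem measurableSet_Ioc
      filter_upwards [this] with q hq
      have hq' : q.2 ∈ Set.Icc (0 : ℝ) 1 := ⟨hq.1.le, hq.2⟩
      have h1 := hKN q.2 hq' q.1
      have hNp : 0 < N q.2 q.1 := by
        rw [hN]; have := hDpos q.2 hq'; positivity
      simp only [Function.uncurry]
      rw [Real.norm_of_nonneg (div_nonneg (by linarith [hq.1]) (by positivity)), mul_one,
        ← div_eq_mul_inv, div_le_div_iff₀ (by positivity) (by positivity)]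
      have h2 : (1 + ‖q.1‖ ^ 2) ^ 3 ≤ (K * N q.2 q.1) ^ 3 := by gcongr
      rw [mul_pow] at h2
      calc 2 * q.2 * (1 + ‖q.1‖ ^ 2) ^ 3 ≤ 2 * 1 * (K ^ 3 * N q.2 q.1 ^ 3) := by
            gcongr
            exact hq.2
        _ = _ := by ring
  have e2 : ∀ l ∈ Set.Ioc (0 : ℝ) 1, ∫ y : E3, 2 * l / (N l y) ^ 3
      = Real.pi ^ 2 / 2 * (l / √(D l) ^ 3) := by
    intro l hl
    have hd := hDpos l ⟨hl.1.le, hl.2⟩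
    have : ∀ y : E3, 2 * l / (N l y) ^ 3
        = (fun z : E3 => 2 * l * ((√(D l) ^ 2 + ‖z‖ ^ 2) ^ 3)⁻¹) (y + (1 - l) • x) := by
      intro y
      simp only [hN, Real.sq_sqrt hd.le, div_eq_mul_inv]
    simp only [this]
    rw [integral_add_right_eq_self (μ := (volume : Measure E3))
      (fun z : E3 => 2 * l * ((√(D l) ^ 2 + ‖z‖ ^ 2) ^ 3)⁻¹), integral_const_mul,
      integral_cube (Real.sqrt_pos.2 hd)]
    have := Real.sqrt_pos.2 hd
    field_simp
    ring
  rw [setIntegral_congr_fun measurableSet_Ioc e2, integral_const_mul,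
    ← intervalIntegral.integral_of_le zero_le_one]
  set b := ρ + s ^ 2 - t ^ 2 with hb
  have hQ1 : 0 < ρ + (s - t) ^ 2 := by
    have : 0 < (s - t) ^ 2 := by
      have : s - t ≠ 0 := by linarith
      positivity
    linarith
  have hQ2 : 0 < (s + t) ^ 2 + ρ := by positivity
  have hQ : b ^ 2 + 4 * ρ * t ^ 2 = ((s + t) ^ 2 + ρ) * (ρ + (s - t) ^ 2) := by
    rw [hb]; ring
  have hQp : 0 < b ^ 2 + 4 * ρ * t ^ 2 := by rw [hQ]; positivity
  -- The integrand `l / D(l)^(3/2)` with `D` quadratic has an elementary primitive.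
  have hint : ∫ l in (0 : ℝ)..1, l / √(D l) ^ 3 = 2 / (s * ((s + t) ^ 2 + ρ)) := by
    rw [intervalIntegral.integral_eq_sub_of_hasDerivAt
      (f := fun l => (2 * b * l + 4 * t ^ 2) / ((b ^ 2 + 4 * ρ * t ^ 2) * √(D l)))]
    · have d1 : D 1 = s ^ 2 := by simp [hD]
      have d0 : D 0 = t ^ 2 := by simp [hD]
      rw [d1, d0, Real.sqrt_sq hs.le, Real.sqrt_sq ht.le, hQ, hb]
      field_simp
      ring
    · intro l hl
      rw [Set.uIcc_of_le zero_le_one] at hl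
      have hd := hDpos l hl
      have hD' : HasDerivAt D (b - 2 * ρ * l) l := by
        have h1 := ((((hasDerivAt_id l).mul ((hasDerivAt_id l).const_sub 1)).mul_const ρ).add
          ((hasDerivAt_id l).mul_const (s ^ 2))).add
          (((hasDerivAt_id l).const_sub 1).mul_const (t ^ 2))
        refine h1.congr_deriv ?_
        simp [hb]; ring
      have hS := hD'.sqrt hd.ne'
      have hnum : HasDerivAt (fun l : ℝ => 2 * b * l + 4 * t ^ 2) (2 * b) l := by
        simpa using ((hasDerivAt_id l).const_mul (2 * b)).add_const (4 * t ^ 2)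
      have hsq := Real.sqrt_pos.2 hd
      have := hnum.div (hS.const_mul (b ^ 2 + 4 * ρ * t ^ 2)) (by positivity)
      refine this.congr_deriv ?_
      have hDD : √(D l) ^ 2 = D l := Real.sq_sqrt hd.le
      have hDl : D l = -ρ * l ^ 2 + b * l + t ^ 2 := by simp only [hD, hb]; ring
      have hDs : √(D l) ^ 2 = -ρ * l ^ 2 + b * l + t ^ 2 := by rw [hDD, hDl]
      generalize √(D l) = w at *
      rw [div_eq_div_iff (by positivity) (by positivity)]
      field_simp
      have e4 : w ^ 4 = w ^ 2 * (-ρ * l ^ 2 + b * l + t ^ 2) := by rw [← hDs]; ring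
      rw [hDs]
      ring
    · refine ContinuousOn.intervalIntegrable ?_
      rw [Set.uIcc_of_le zero_le_one]
      refine ContinuousOn.div (by fun_prop) (by fun_prop) (fun l hl => ?_)
      have := Real.sqrt_pos.2 (hDpos l hl)
      positivity
  rw [hint, rker, ← hρ]
  field_simp

/-! ### Test functions and the regularized half-Laplacian -/

/-- The weight `(1 + |x|)⁻⁴`. -/
def om (x : E3) : ℝ := ((1 + ‖x‖) ^ 4)⁻¹

lemma om_pos (x : E3) : 0 < om x := by unfold om; positivity

lemma continuous_om : Continuous om := by
  unfold om
  have : ∀ x : E3, (1 + ‖x‖) ^ 4 ≠ 0 := fun x => by positivity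
  fun_prop (disch := assumption)

lemma integrable_om4 : Integrable om := integrable_om (by norm_num)

lemma om_mul_le (x z : E3) : om (x + z) * om z ≤ 16 * om x * (om (x + z) + om z) := by
  unfold om
  have h : ‖x‖ ≤ ‖x + z‖ + ‖z‖ := by
    have e : x = (x + z) - z := by abel
    conv_lhs => rw [e]
    exact norm_sub_le _ _
  have ha := norm_nonneg (x + z)
  have hb := norm_nonneg z
  have hx := norm_nonneg x
  generalize ‖x + z‖ = a at *
  generalize ‖z‖ = b at *
  generalize ‖x‖ = c at *
  have key : (1 + c) ^ 4 ≤ 16 * ((1 + a) ^ 4 + (1 + b) ^ 4) := by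
    have h1 : 1 + c ≤ (1 + a) + (1 + b) := by linarith
    have h2 : (1 + c) ^ 4 ≤ ((1 + a) + (1 + b)) ^ 4 := by gcongr
    have h3 := add_pow_le (show 0 ≤ 1 + a by linarith) (show 0 ≤ 1 + b by linarith) 4
    norm_num at h3
    nlinarith [pow_nonneg (show 0 ≤ 1 + a by linarith) 4, pow_nonneg (show 0 ≤ 1 + b by linarith) 4]
  have e : 16 * ((1 + c) ^ 4)⁻¹ * (((1 + a) ^ 4)⁻¹ + ((1 + b) ^ 4)⁻¹)
      = (16 * ((1 + a) ^ 4 + (1 + b) ^ 4)) / ((1 + c) ^ 4 * ((1 + a) ^ 4 * (1 + b) ^ 4)) := by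
    field_simp
    ring
  rw [e, ← mul_inv, le_div_iff₀ (by positivity)]
  have : ((1 + a) ^ 4 * (1 + b) ^ 4)⁻¹ * ((1 + c) ^ 4 * ((1 + a) ^ 4 * (1 + b) ^ 4)) = (1 + c) ^ 4 := by
    field_simp
  rw [this]; exact key

lemma om_shift_le (x y : E3) : om (y - x) ≤ om y * (1 + ‖x‖) ^ 4 := by
  unfold om
  have h : ‖y‖ ≤ ‖y - x‖ + ‖x‖ := by
    have e : y = (y - x) + x := by abel
    conv_lhs => rw [e]
    exact norm_add_le _ _
  rw [inv_eq_one_div, inv_mul_eq_div, div_le_div_iff₀ (by positivity) (by positivity), one_mul,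
    ← mul_pow]
  gcongr
  nlinarith [norm_nonneg (y - x), norm_nonneg x]

lemma om_eq (r : E3) : om r ≤ (1 + ‖r‖ ^ 4)⁻¹ ∧ (1 + ‖r‖ ^ 4)⁻¹ ≤ 8 * om r := by
  unfold om
  have hr := norm_nonneg r
  generalize ‖r‖ = c at *
  constructor
  · apply inv_anti₀ (by positivity)
    have : 0 ≤ c * (4 + 6 * c + 4 * c ^ 2) := by positivity
    nlinarith
  · have h3 := add_pow_le (show (0:ℝ) ≤ 1 by norm_num) hr 4
    norm_num at h3
    rw [inv_eq_one_div, ← div_eq_mul_inv, div_le_div_iff₀ (by positivity) (by positivity)]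
    linarith

lemma rker_zero_sq (z : E3) : rker 0 z ^ 2 = 1 / ‖z‖ ^ 4 := by
  simp [rker]; ring

lemma rker_anti {s t : ℝ} (hs : 0 < s) (hst : s ≤ t) (z : E3) : rker t z ≤ rker s z := by
  unfold rker
  apply inv_anti₀ (by positivity)
  gcongr

lemma rker_le_zero (s : ℝ) {z : E3} (hz : z ≠ 0) : rker s z ≤ rker 0 z := by
  unfold rker
  have := norm_pos_iff.2 hz
  apply inv_anti₀ (by positivity)
  nlinarith [sq_nonneg s]

lemma rker_sq_le_zero (s : ℝ) {z : E3} (hz : z ≠ 0) : rker s z ^ 2 ≤ 1 / ‖z‖ ^ 4 := by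
  rw [← rker_zero_sq]
  gcongr
  · exact rker_nonneg _ _
  · exact rker_le_zero s hz

lemma measurable_rker (s : ℝ) : Measurable (rker s) := by unfold rker; fun_prop

lemma tendsto_rker (x : E3) (hx : x ≠ 0) : Tendsto (fun s => rker s x) (𝓝[>] 0) (𝓝 (rker 0 x)) := by
  unfold rker
  have : ContinuousAt (fun s : ℝ => (s ^ 2 + ‖x‖ ^ 2)⁻¹) 0 := by
    have := norm_pos_iff.2 hx
    refine ContinuousAt.inv₀ (by fun_prop) (by positivity)
  exact this.tendsto.mono_left nhdsWithin_le_nhds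

lemma rker_sq_le_om {s : ℝ} (hs : 0 < s) : ∃ C, 0 < C ∧ ∀ z, rker s z ^ 2 ≤ C * om z := by
  refine ⟨(2 * (1 + 1 / s ^ 2)) ^ 2, by positivity, fun z => ?_⟩
  unfold rker om
  have h := one_add_sq_ge ‖z‖
  rw [inv_pow, ← div_eq_mul_inv, inv_eq_one_div, div_le_div_iff₀ (by positivity) (by positivity),
    one_mul, show (1 + ‖z‖) ^ 4 = ((1 + ‖z‖) ^ 2) ^ 2 by ring, ← mul_pow]
  gcongr
  have e : 2 * (1 + 1 / s ^ 2) * (s ^ 2 + ‖z‖ ^ 2) = 2 * (s ^ 2 + ‖z‖ ^ 2 + 1 + ‖z‖ ^ 2 / s ^ 2) := by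
    field_simp; ring
  rw [e]
  have : 0 ≤ ‖z‖ ^ 2 / s ^ 2 := by positivity
  nlinarith [sq_nonneg s]

/-- The symmetric second difference of `u` at `x` in the direction `z`, with the sign of `-D²`. -/
def sd (u : E3 → ℝ) (x z : E3) : ℝ := 2 * u x - u (x + z) - u (x - z)

lemma continuous_sd {u : E3 → ℝ} (hu : Continuous u) (x : E3) : Continuous (sd u x) := by
  unfold sd; fun_prop

/-- The half-Laplacian (up to a constant) with kernel regularized at scale `s`, written with
symmetric differences; `s = 0` is the half-Laplacian itself, because `rker 0 z ^ 2 = |z|⁻⁴`. -/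
def Aop (s : ℝ) (u : E3 → ℝ) (x : E3) : ℝ := 1 / 2 * ∫ z : E3, sd u x z * rker s z ^ 2

lemma ae_ne_zero : ∀ᵐ z : E3, z ≠ 0 := by
  simp [ae_iff, measure_singleton]

lemma Aop_tendsto {u : E3 → ℝ} (hu : Continuous u) (x : E3)
    (hi : Integrable (fun z => sd u x z * rker 0 z ^ 2)) :
    Tendsto (fun s => Aop s u x) (𝓝[>] 0) (𝓝 (Aop 0 u x)) := by
  unfold Aop
  refine Tendsto.const_mul _ ?_
  refine tendsto_integral_filter_of_dominated_convergence (fun z => ‖sd u x z * rker 0 z ^ 2‖)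
    ?_ ?_ hi.norm ?_
  · refine Eventually.of_forall fun s => ?_
    exact ((continuous_sd hu x).measurable.mul ((measurable_rker s).pow_const 2)).aestronglyMeasurable
  · refine Eventually.of_forall fun s => ?_
    filter_upwards [ae_ne_zero] with z hz
    rw [norm_mul, norm_mul, Real.norm_of_nonneg (sq_nonneg (rker s z)),
      Real.norm_of_nonneg (sq_nonneg (rker 0 z))]
    gcongr
    · exact rker_nonneg _ _
    · exact rker_le_zero s hz
  · filter_upwards [ae_ne_zero] with z hz
    exact ((tendsto_rker z hz).pow 2).const_mul _

/-- Decay of order `n` for a function together with its first and second differences; the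
bounds on differences are only required for increments of length at most one. -/
structure Adm (n : ℕ) (M : ℝ) (φ : E3 → ℝ) : Prop where
  cont : Continuous φ
  nn : 0 ≤ M
  bd : ∀ x, |φ x| ≤ M * ((1 + ‖x‖) ^ n)⁻¹
  lip : ∀ x z, ‖z‖ ≤ 1 → |φ (x + z) - φ x| ≤ M * ‖z‖ * ((1 + ‖x‖) ^ n)⁻¹
  sd2 : ∀ x z, ‖z‖ ≤ 1 → |sd φ x z| ≤ M * ‖z‖ ^ 2 * ((1 + ‖x‖) ^ n)⁻¹

lemma Adm.mul {m n : ℕ} {M N : ℝ} {φ ψ : E3 → ℝ} (h : Adm m M φ) (k : Adm n N ψ) :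
    Adm (m + n) (4 * M * N) (fun x => φ x * ψ x) := by
  have hM := h.nn
  have hN := k.nn
  have P : ∀ x : E3, ((1 + ‖x‖) ^ (m + n))⁻¹ = ((1 + ‖x‖) ^ m)⁻¹ * ((1 + ‖x‖) ^ n)⁻¹ := by
    intro x; rw [pow_add, mul_inv]
  refine ⟨h.cont.mul k.cont, by positivity, fun x => ?_, fun x z hz => ?_, fun x z hz => ?_⟩
  · rw [abs_mul, P]
    have := mul_le_mul (h.bd x) (k.bd x) (abs_nonneg _) (by positivity)
    have h3 : 0 ≤ M * N * (((1 + ‖x‖) ^ m)⁻¹ * ((1 + ‖x‖) ^ n)⁻¹) := by positivity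
    nlinarith
  · have e : φ (x + z) * ψ (x + z) - φ x * ψ x = (φ (x + z) - φ x) * (ψ (x + z) - ψ x)
        + φ x * (ψ (x + z) - ψ x) + (φ (x + z) - φ x) * ψ x := by ring
    rw [e, P]
    have a1 := mul_le_mul (h.lip x z hz) (k.lip x z hz) (abs_nonneg _) (by positivity)
    have a2 := mul_le_mul (h.bd x) (k.lip x z hz) (abs_nonneg _) (by positivity)
    have a3 := mul_le_mul (h.lip x z hz) (k.bd x) (abs_nonneg _) (by positivity)
    rw [← abs_mul] at a1 a2 a3
    have b := abs_add_three ((φ (x + z) - φ x) * (ψ (x + z) - ψ x)) (φ x * (ψ (x + z) - ψ x))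
      ((φ (x + z) - φ x) * ψ x)
    have c : 0 ≤ M * N * (((1 + ‖x‖) ^ m)⁻¹ * ((1 + ‖x‖) ^ n)⁻¹) := by positivity
    have d := mul_le_mul_of_nonneg_left hz (mul_nonneg c (norm_nonneg z))
    have c2 := mul_nonneg c (norm_nonneg z)
    nlinarith
  · have e : sd (fun x => φ x * ψ x) x z = φ x * sd ψ x z + ψ x * sd φ x z
        + (-((φ (x + z) - φ x) * (ψ (x + z) - ψ x))
        - ((φ (x + -z) - φ x) * (ψ (x + -z) - ψ x))) := by
      simp only [sd, sub_eq_add_neg]; ring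
    have hz' : ‖-z‖ ≤ 1 := by rwa [norm_neg]
    rw [e, P]
    have a1 := mul_le_mul (h.lip x z hz) (k.lip x z hz) (abs_nonneg _) (by positivity)
    have a2 := mul_le_mul (h.lip x _ hz') (k.lip x _ hz') (abs_nonneg _) (by positivity)
    have a3 := mul_le_mul (h.bd x) (k.sd2 x z hz) (abs_nonneg _) (by positivity)
    have a4 := mul_le_mul (k.bd x) (h.sd2 x z hz) (abs_nonneg _) (by positivity)
    rw [norm_neg] at a2
    rw [← abs_mul] at a1 a2 a3 a4
    have b := abs_add_three (φ x * sd ψ x z) (ψ x * sd φ x z)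
      (-((φ (x + z) - φ x) * (ψ (x + z) - ψ x)) - ((φ (x + -z) - φ x) * (ψ (x + -z) - ψ x)))
    have b2 := abs_sub (-((φ (x + z) - φ x) * (ψ (x + z) - ψ x)))
      ((φ (x + -z) - φ x) * (ψ (x + -z) - ψ x))
    rw [abs_neg] at b2
    nlinarith

lemma Adm.add {n : ℕ} {M N : ℝ} {φ ψ : E3 → ℝ} (h : Adm n M φ) (k : Adm n N ψ) :
    Adm n (M + N) (fun x => φ x + ψ x) := by
  refine ⟨h.cont.add k.cont, add_nonneg h.nn k.nn, fun x => ?_, fun x z hz => ?_, fun x z hz => ?_⟩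
  · have := abs_add_le (φ x) (ψ x)
    linarith [h.bd x, k.bd x]
  · have := abs_add_le (φ (x + z) - φ x) (ψ (x + z) - ψ x)
    rw [show φ (x + z) + ψ (x + z) - (φ x + ψ x) = (φ (x + z) - φ x) + (ψ (x + z) - ψ x) by ring]
    linarith [h.lip x z hz, k.lip x z hz]
  · have := abs_add_le (sd φ x z) (sd ψ x z)
    rw [show sd (fun x => φ x + ψ x) x z = sd φ x z + sd ψ x z by simp only [sd]; ring]
    linarith [h.sd2 x z hz, k.sd2 x z hz]

/-- The integrable majorant of `sd φ x z / |z|⁴` for `φ` of decay order four. -/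
def maj (x z : E3) : ℝ := (Metric.ball (0 : E3) 1).indicator (fun z => 1 / ‖z‖ ^ 2) z
  + 16 * (2 * om z + 16 * (om (x + z) + om z) + 16 * (om (x - z) + om z))

lemma integrable_om_add (x : E3) : Integrable (fun z => om (x + z)) := integrable_om4.comp_add_left x
lemma integrable_om_sub (x : E3) : Integrable (fun z => om (x - z)) := integrable_om4.comp_sub_left x

lemma integrable_maj (x : E3) : Integrable (maj x) := by
  unfold maj
  refine Integrable.add ?_ (Integrable.const_mul ?_ _)
  · rw [integrable_indicator_iff measurableSet_ball]
    exact integrableOn_ball_inv_sq 1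
  · exact ((integrable_om4.const_mul 2).add (((integrable_om_add x).add integrable_om4).const_mul 16)).add
      (((integrable_om_sub x).add integrable_om4).const_mul 16)

lemma integral_maj (x : E3) : ∫ z, maj x z = ∫ z, maj 0 z := by
  have h : ∀ x : E3, ∫ z, maj x z = (∫ z, (Metric.ball (0 : E3) 1).indicator (fun z => 1 / ‖z‖ ^ 2) z)
      + 16 * (66 * ∫ z, om z) := by
    intro x
    unfold maj
    have i1 := (integrable_om4.const_mul 2)
    have i2 := (((integrable_om_add x).add integrable_om4).const_mul 16)
    have i3 := (((integrable_om_sub x).add integrable_om4).const_mul 16)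
    simp only [Pi.add_apply] at i2 i3
    have i12 : Integrable (fun z => 2 * om z + 16 * (om (x + z) + om z)) := i1.add i2
    rw [integral_add, integral_const_mul, integral_add i12 i3, integral_add i1 i2,
      integral_const_mul, integral_const_mul, integral_const_mul,
      integral_add (integrable_om_add x) integrable_om4,
      integral_add (integrable_om_sub x) integrable_om4, integral_add_left_eq_self,
      integral_sub_left_eq_self]
    · ring
    · rw [integrable_indicator_iff measurableSet_ball]
      exact integrableOn_ball_inv_sq 1
    · exact Integrable.const_mul (i12.add i3) _
  rw [h x, h 0]

lemma maj_nonneg (x z : E3) : 0 ≤ maj x z := by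
  unfold maj
  have h : 0 ≤ (Metric.ball (0 : E3) 1).indicator (fun z => 1 / ‖z‖ ^ 2) z :=
    Set.indicator_nonneg (fun z _ => by positivity) z
  have := om_pos z
  have := om_pos (x + z)
  have := om_pos (x - z)
  positivity

/-- The integrand of `Aop s φ x` is dominated uniformly in `s`, with the decay of `om` in `x`. -/
lemma Adm.dom {M : ℝ} {φ : E3 → ℝ} (h : Adm 4 M φ) (s : ℝ) (x : E3) {z : E3} (hz : z ≠ 0) :
    |sd φ x z| * rker s z ^ 2 ≤ M * om x * maj x z := by
  have hM := h.nn
  have hzp := norm_pos_iff.2 hz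
  have hk := rker_sq_le_zero s hz
  have hk0 : 0 ≤ rker s z ^ 2 := sq_nonneg _
  have o0 := om_pos x
  have o1 := om_pos z
  have o2 := om_pos (x + z)
  have o3 := om_pos (x - z)
  refine (mul_le_mul_of_nonneg_left hk (abs_nonneg _)).trans ?_
  by_cases hz1 : ‖z‖ < 1
  · have h1 := h.sd2 x z hz1.le
    have e : M * om x * maj x z = M * om x * (1 / ‖z‖ ^ 2) + M * om x *
        (16 * (2 * om z + 16 * (om (x + z) + om z) + 16 * (om (x - z) + om z))) := by
      rw [maj, Set.indicator_of_mem (by simpa using hz1)]; ring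
    rw [e]
    have h2 : |sd φ x z| * (1 / ‖z‖ ^ 4) ≤ M * om x * (1 / ‖z‖ ^ 2) := by
      calc _ ≤ (M * ‖z‖ ^ 2 * om x) * (1 / ‖z‖ ^ 4) := by
            gcongr; exact h1
        _ = _ := by field_simp
    refine h2.trans (le_add_of_nonneg_right (by positivity))
  · push Not at hz1
    have hb : ∀ y, |φ y| ≤ M * om y := fun y => h.bd y
    have h1 : |sd φ x z| ≤ M * (2 * om x + om (x + z) + om (x - z)) := by
      have a := abs_sub (2 * φ x - φ (x + z)) (φ (x - z))
      have b := abs_sub (2 * φ x) (φ (x + z))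
      have c : |2 * φ x| = 2 * |φ x| := by rw [abs_mul]; norm_num
      unfold sd
      linarith [hb x, hb (x + z), hb (x - z)]
    have h2 : 1 / ‖z‖ ^ 4 ≤ 16 * om z := by
      unfold om
      rw [← div_eq_mul_inv, div_le_div_iff₀ (by positivity) (by positivity), one_mul]
      calc (1 + ‖z‖) ^ 4 ≤ (2 * ‖z‖) ^ 4 := by gcongr; linarith
        _ = _ := by ring
    have h3 : |sd φ x z| * (1 / ‖z‖ ^ 4) ≤ (M * (2 * om x + om (x + z) + om (x - z))) * (16 * om z) := by
      gcongr
    refine h3.trans ?_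
    have k1 := om_mul_le x z
    have k2 := om_mul_le x (-z)
    have e2 : om (-z) = om z := by simp [om]
    rw [e2, ← sub_eq_add_neg] at k2
    rw [maj, Set.indicator_of_notMem (by simpa using hz1)]
    have : (M * (2 * om x + om (x + z) + om (x - z))) * (16 * om z)
      = 16 * M * (2 * om x * om z + om (x + z) * om z + om (x - z) * om z) := by ring
    rw [this]
    have : M * om x * (0 + 16 * (2 * om z + 16 * (om (x + z) + om z) + 16 * (om (x - z) + om z)))
      = 16 * M * (2 * om x * om z + 16 * om x * (om (x + z) + om z) + 16 * om x * (om (x - z) + om z)) := by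
      ring
    rw [this]
    gcongr

lemma Adm.integrable {M : ℝ} {φ : E3 → ℝ} (h : Adm 4 M φ) (s : ℝ) (x : E3) :
    Integrable (fun z => sd φ x z * rker s z ^ 2) := by
  refine ((integrable_maj x).const_mul (M * om x)).mono' ?_ ?_
  · exact ((continuous_sd h.cont x).measurable.mul ((measurable_rker s).pow_const 2)).aestronglyMeasurable
  · filter_upwards [ae_ne_zero] with z hz
    rw [norm_mul, Real.norm_of_nonneg (sq_nonneg (rker s z))]
    exact h.dom s x hz

/-- The constant in the decay estimate for `Aop`. -/
def cmaj : ℝ := ∫ z, maj 0 z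

lemma Adm.Aop_le {M : ℝ} {φ : E3 → ℝ} (h : Adm 4 M φ) (s : ℝ) (x : E3) :
    |Aop s φ x| ≤ cmaj * M * om x := by
  unfold Aop
  have h1 : |∫ z, sd φ x z * rker s z ^ 2| ≤ ∫ z, M * om x * maj x z := by
    rw [← Real.norm_eq_abs]
    refine norm_integral_le_of_norm_le ((integrable_maj x).const_mul (M * om x)) ?_
    filter_upwards [ae_ne_zero] with z hz
    rw [norm_mul, Real.norm_of_nonneg (sq_nonneg (rker s z))]
    exact h.dom s x hz
  rw [integral_const_mul, integral_maj] at h1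
  rw [abs_mul, show |(1 : ℝ) / 2| = 1 / 2 by norm_num]
  have := abs_nonneg (∫ z, sd φ x z * rker s z ^ 2)
  have e : cmaj * M * om x = M * om x * ∫ z, maj 0 z := by unfold cmaj; ring
  rw [e]; linarith

/-! ### The Poisson-type kernels as test functions -/

lemma integrable_rker_sq {s : ℝ} (hs : 0 < s) : Integrable (fun y : E3 => rker s y ^ 2) := by
  obtain ⟨C, -, h⟩ := rker_sq_le_om hs
  refine (integrable_om4.const_mul C).mono' ?_ (Eventually.of_forall fun y => ?_)
  · exact ((continuous_rker hs).pow 2).aestronglyMeasurable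
  · rw [Real.norm_of_nonneg (sq_nonneg _)]; exact h y

lemma integrable_mul_rker_sq {s : ℝ} (hs : 0 < s) {u : E3 → ℝ} (hu : Continuous u)
    (hi : Integrable (fun y => |u y| * om y)) (x : E3) :
    Integrable (fun y => u y * rker s (y - x) ^ 2) := by
  obtain ⟨C, hC, h⟩ := rker_sq_le_om hs
  refine (hi.const_mul (C * (1 + ‖x‖) ^ 4)).mono' ?_ (Eventually.of_forall fun y => ?_)
  · exact (hu.mul (((continuous_rker hs).comp (continuous_id.sub continuous_const)).pow 2)).aestronglyMeasurable
  · rw [norm_mul, Real.norm_of_nonneg (sq_nonneg (rker _ _)), Real.norm_eq_abs]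
    have h1 := h (y - x)
    have h2 := om_shift_le x y
    have h3 : C * om (y - x) ≤ C * (om y * (1 + ‖x‖) ^ 4) := by gcongr
    have h4 := mul_le_mul_of_nonneg_left (h1.trans h3) (abs_nonneg (u y))
    linarith

lemma Aop_eq {s : ℝ} (hs : 0 < s) {u : E3 → ℝ} (hu : Continuous u)
    (hi : Integrable (fun y => |u y| * om y)) (x : E3) :
    Aop s u x = Real.pi ^ 2 / s * u x - ∫ y, u y * rker s (y - x) ^ 2 := by
  have i0 := integrable_mul_rker_sq hs hu hi x
  have i1 : Integrable (fun z => u (x + z) * rker s z ^ 2) := by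
    have := i0.comp_add_left x
    simpa using this
  have i2 : Integrable (fun z => u (x - z) * rker s z ^ 2) := by
    have := i0.comp_sub_left x
    simpa [rker_neg] using this
  have i3 := (integrable_rker_sq hs).const_mul (2 * u x)
  have e1 : ∫ z, u (x + z) * rker s z ^ 2 = ∫ y, u y * rker s (y - x) ^ 2 := by
    rw [← integral_add_left_eq_self (fun y => u y * rker s (y - x) ^ 2) x]
    simp
  have e2 : ∫ z, u (x - z) * rker s z ^ 2 = ∫ y, u y * rker s (y - x) ^ 2 := by
    rw [← integral_sub_left_eq_self (fun y => u y * rker s (y - x) ^ 2) _ x]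
    simp [rker_neg]
  have e : ∀ z, sd u x z * rker s z ^ 2 = 2 * u x * rker s z ^ 2 - u (x + z) * rker s z ^ 2
      - u (x - z) * rker s z ^ 2 := fun z => by unfold sd; ring
  unfold Aop
  simp_rw [e]
  have i31 : Integrable (fun z => 2 * u x * rker s z ^ 2 - u (x + z) * rker s z ^ 2) := i3.sub i1
  rw [integral_sub i31 i2, integral_sub i3 i1, integral_const_mul, e1, e2, integral_ker_sq hs]
  ring

lemma rker_le_w {t : ℝ} (ht : 0 < t) (x : E3) :
    rker t x ≤ 2 * (1 + 1 / t ^ 2) * ((1 + ‖x‖) ^ 2)⁻¹ := by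
  unfold rker
  have h := one_add_sq_ge ‖x‖
  rw [← div_eq_mul_inv, inv_eq_one_div, div_le_div_iff₀ (by positivity) (by positivity), one_mul]
  have e : 2 * (1 + 1 / t ^ 2) * (t ^ 2 + ‖x‖ ^ 2) = 2 * (t ^ 2 + ‖x‖ ^ 2 + 1 + ‖x‖ ^ 2 / t ^ 2) := by
    field_simp; ring
  rw [e]
  have : 0 ≤ ‖x‖ ^ 2 / t ^ 2 := by positivity
  nlinarith [sq_nonneg t]

lemma w_shift (x : E3) {z : E3} (hz : ‖z‖ ≤ 1) :
    ((1 + ‖x + z‖) ^ 2)⁻¹ ≤ 4 * ((1 + ‖x‖) ^ 2)⁻¹ := by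
  have h : ‖x‖ ≤ ‖x + z‖ + ‖z‖ := by
    have e : x = (x + z) - z := by abel
    conv_lhs => rw [e]
    exact norm_sub_le _ _
  rw [← div_eq_mul_inv, inv_eq_one_div, div_le_div_iff₀ (by positivity) (by positivity)]
  have : 1 + ‖x‖ ≤ 2 * (1 + ‖x + z‖) := by linarith [norm_nonneg (x + z)]
  have := pow_le_pow_left₀ (by positivity) this 2
  linarith

lemma adm_rker {t : ℝ} (ht : 0 < t) : ∃ M, Adm 2 M (rker t) := by
  set c := 2 * (1 + 1 / t ^ 2) with hc
  have hc0 : 0 < c := by positivity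
  have hw : ∀ y, rker t y ≤ c * ((1 + ‖y‖) ^ 2)⁻¹ := fun y => rker_le_w ht y
  clear_value c
  have hc2 := pow_pos hc0 2
  have hc3 := pow_pos hc0 3
  refine ⟨160 * (c ^ 3 + c ^ 2 + c), continuous_rker ht, by positivity, fun x => ?_,
    fun x z hz => ?_, fun x z hz => ?_⟩
  · rw [abs_of_nonneg (rker_nonneg t x)]
    refine (hw x).trans ?_
    refine mul_le_mul_of_nonneg_right ?_ (by positivity)
    nlinarith
  all_goals
    have hA := hw x
    have hP := (hw (x + z)).trans (mul_le_mul_of_nonneg_left (w_shift x hz) hc0.le)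
    have nA := rker_pos ht x
    have nP := rker_pos ht (x + z)
    have hW : 0 < ((1 + ‖x‖) ^ 2)⁻¹ := by positivity
    have hW1 : ((1 + ‖x‖) ^ 2)⁻¹ * (1 + ‖x‖) ^ 2 = 1 := by field_simp
    have hx := norm_nonneg x
    have hz0 := norm_nonneg z
    have hd := abs_real_inner_le_norm x z
  · set W := ((1 + ‖x‖) ^ 2)⁻¹ with hWd
    have e : rker t (x + z) - rker t x = -(2 * inner ℝ x z + ‖z‖ ^ 2) * (rker t x * rker t (x + z)) := by
      unfold rker
      have := norm_add_sq_real x z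
      have h1 : t ^ 2 + ‖x‖ ^ 2 ≠ 0 := by positivity
      have h2 : t ^ 2 + ‖x + z‖ ^ 2 ≠ 0 := by positivity
      field_simp
      rw [this]; ring
    rw [e, abs_mul, abs_neg, abs_of_nonneg (a := rker t x * _) (by positivity)]
    have h1 : |2 * inner ℝ x z + ‖z‖ ^ 2| ≤ 2 * ‖z‖ * (1 + ‖x‖) ^ 2 := by
      refine (abs_add_le _ _).trans ?_
      rw [abs_mul, abs_of_nonneg (sq_nonneg ‖z‖), show |(2:ℝ)| = 2 by norm_num]
      nlinarith [mul_nonneg hx hz0, mul_nonneg (sq_nonneg ‖x‖) hz0]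
    have h2 : rker t x * rker t (x + z) ≤ (c * W) * (c * (4 * W)) := by gcongr
    calc _ ≤ (2 * ‖z‖ * (1 + ‖x‖) ^ 2) * ((c * W) * (c * (4 * W))) := by gcongr
      _ = 8 * c ^ 2 * ‖z‖ * W * (W * (1 + ‖x‖) ^ 2) := by ring
      _ = 8 * c ^ 2 * ‖z‖ * W := by rw [hW1, mul_one]
      _ ≤ _ := by
        refine mul_le_mul_of_nonneg_right (mul_le_mul_of_nonneg_right ?_ hz0) hW.le
        nlinarith
  · have hM := (hw (x + -z)).trans
      (mul_le_mul_of_nonneg_left (w_shift x (z := -z) (by rwa [norm_neg])) hc0.le)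
    rw [← sub_eq_add_neg] at hM
    have nM := rker_pos ht (x - z)
    set W := ((1 + ‖x‖) ^ 2)⁻¹ with hWd
    have e : sd (rker t) x z = 2 * ‖z‖ ^ 2 * (rker t (x + z) * rker t (x - z))
        + 2 * (‖z‖ ^ 4 - 4 * (inner ℝ x z) ^ 2) * (rker t x * rker t (x + z) * rker t (x - z)) := by
      unfold rker sd
      have e1 := norm_add_sq_real x z
      have e2 := norm_sub_sq_real x z
      have h1 : t ^ 2 + ‖x‖ ^ 2 ≠ 0 := by positivity
      have h2 : t ^ 2 + ‖x + z‖ ^ 2 ≠ 0 := by positivity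
      have h3 : t ^ 2 + ‖x - z‖ ^ 2 ≠ 0 := by positivity
      rw [e1] at h2
      rw [e2] at h3
      simp only [e1, e2]
      field_simp
      ring
    rw [e]
    refine (abs_add_le _ _).trans ?_
    rw [abs_of_nonneg (a := 2 * ‖z‖ ^ 2 * _) (by positivity), abs_mul,
      abs_of_nonneg (a := rker t x * _ * _) (by positivity)]
    have h1 : |2 * (‖z‖ ^ 4 - 4 * (inner ℝ x z) ^ 2)| ≤ 10 * ‖z‖ ^ 2 * (1 + ‖x‖) ^ 2 := by
      have hsq : (inner ℝ x z) ^ 2 ≤ (‖x‖ * ‖z‖) ^ 2 := by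
        rw [← sq_abs]; gcongr
      have hz4 : ‖z‖ ^ 4 ≤ ‖z‖ ^ 2 := by nlinarith [pow_le_one₀ (n := 2) hz0 hz, sq_nonneg ‖z‖]
      have hq : 0 ≤ ‖x‖ * ‖z‖ ^ 2 := by positivity
      rw [abs_le]
      have hq2 : 0 ≤ (inner ℝ x z) ^ 2 := sq_nonneg _
      have hz5 : 0 ≤ ‖z‖ ^ 4 := by positivity
      have hq3 : 0 ≤ (‖x‖ * ‖z‖) ^ 2 := by positivity
      have hq4 : 0 ≤ ‖z‖ ^ 2 := by positivity
      constructor <;> nlinarith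
    have h2 : rker t (x + z) * rker t (x - z) ≤ (c * (4 * W)) * (c * (4 * W)) := by gcongr
    have h3 : rker t x * rker t (x + z) * rker t (x - z) ≤ (c * W) * (c * (4 * W)) * (c * (4 * W)) := by
      gcongr
    have hWle : W ≤ 1 := by
      rw [hWd]; apply inv_le_one_of_one_le₀; nlinarith
    calc _ ≤ 2 * ‖z‖ ^ 2 * ((c * (4 * W)) * (c * (4 * W)))
          + (10 * ‖z‖ ^ 2 * (1 + ‖x‖) ^ 2) * ((c * W) * (c * (4 * W)) * (c * (4 * W))) := by gcongr
      _ = (32 * c ^ 2 * ‖z‖ ^ 2 * W) * W + (160 * c ^ 3 * ‖z‖ ^ 2 * W) * W * (W * (1 + ‖x‖) ^ 2) := by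
          ring
      _ ≤ (32 * c ^ 2 * ‖z‖ ^ 2 * W) * 1 + (160 * c ^ 3 * ‖z‖ ^ 2 * W) * 1 * 1 := by
          rw [hW1]; gcongr
      _ ≤ _ := by
        have : 0 ≤ ‖z‖ ^ 2 * W := by positivity
        nlinarith [mul_nonneg this (pow_pos hc0 2).le, mul_nonneg this hc0.le]

lemma Adm.const_mul {n : ℕ} {M : ℝ} {φ : E3 → ℝ} (h : Adm n M φ) {c : ℝ} (hc : 0 ≤ c) :
    Adm n (c * M) (fun x => c * φ x) := by
  refine ⟨continuous_const.mul h.cont, mul_nonneg hc h.nn, fun x => ?_, fun x z hz => ?_,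
    fun x z hz => ?_⟩
  · rw [abs_mul, abs_of_nonneg hc, mul_assoc]; exact mul_le_mul_of_nonneg_left (h.bd x) hc
  · rw [← mul_sub, abs_mul, abs_of_nonneg hc, mul_assoc, mul_assoc, ← mul_assoc M]
    exact mul_le_mul_of_nonneg_left (h.lip x z hz) hc
  · rw [show sd (fun x => c * φ x) x z = c * sd φ x z by simp only [sd]; ring,
      abs_mul, abs_of_nonneg hc, mul_assoc, mul_assoc, ← mul_assoc M]
    exact mul_le_mul_of_nonneg_left (h.sd2 x z hz) hc

/-- The difference of two kernels: a positive test function decaying like `|x|⁻⁴`. -/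
def dker (t T : ℝ) (x : E3) : ℝ := rker t x - rker T x

lemma dker_eq {t T : ℝ} (ht : 0 < t) (hT : 0 < T) (x : E3) :
    dker t T x = (T ^ 2 - t ^ 2) * (rker t x * rker T x) := by
  unfold dker rker
  have h1 : t ^ 2 + ‖x‖ ^ 2 ≠ 0 := by positivity
  have h2 : T ^ 2 + ‖x‖ ^ 2 ≠ 0 := by positivity
  field_simp; ring

lemma adm_dker {t T : ℝ} (ht : 0 < t) (hT : t ≤ T) : ∃ M, Adm 4 M (dker t T) := by
  obtain ⟨M, hM⟩ := adm_rker ht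
  obtain ⟨N, hN⟩ := adm_rker (ht.trans_le hT)
  refine ⟨(T ^ 2 - t ^ 2) * (4 * M * N), ?_⟩
  have := (hM.mul hN).const_mul (c := T ^ 2 - t ^ 2) (by nlinarith)
  convert this using 1
  ext x
  exact dker_eq ht (ht.trans_le hT) x

lemma rker_conv {s t : ℝ} (hs : 0 < s) (hst : s < t) (x : E3) :
    ∫ y, rker t y * rker s (y - x) ^ 2 = Real.pi ^ 2 / s * rker (s + t) x := by
  rw [← poisson_ker hs hst x, ← integral_add_left_eq_self (fun y => rker t y * rker s (y - x) ^ 2) x]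
  congr 1; ext z; simp [mul_comm]

/-- The regularized half-Laplacian of `dker t T` is an explicit difference quotient in the parameter,
by `poisson_ker`. -/
lemma Aop_dker_pos {s t T : ℝ} (hs : 0 < s) (hst : s < t) (hT : t ≤ T) (x : E3) :
    Aop s (dker t T) x = Real.pi ^ 2 * ((rker t x - rker (s + t) x) / s - (rker T x - rker (s + T) x) / s) := by
  have ht := hs.trans hst
  have hT0 := ht.trans_le hT
  obtain ⟨M, hM⟩ := adm_dker ht hT
  have bdd : ∀ {u : E3 → ℝ} {n : ℕ} {M}, Adm n M u → Integrable (fun y => |u y| * om y) := by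
    intro u n M h
    refine (integrable_om4.const_mul M).mono' (h.cont.abs.mul continuous_om).aestronglyMeasurable
      (Eventually.of_forall fun y => ?_)
    rw [norm_mul, Real.norm_of_nonneg (om_pos y).le, Real.norm_eq_abs, abs_abs]
    gcongr
    · exact (om_pos y).le
    · refine (h.bd y).trans (mul_le_of_le_one_right h.nn ?_)
      apply inv_le_one_of_one_le₀
      apply one_le_pow₀
      linarith [norm_nonneg y]
  obtain ⟨M1, hM1⟩ := adm_rker ht
  obtain ⟨M2, hM2⟩ := adm_rker hT0
  rw [Aop_eq hs hM.cont (bdd hM)]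
  have e : ∀ y, dker t T y * rker s (y - x) ^ 2 = rker t y * rker s (y - x) ^ 2
    - rker T y * rker s (y - x) ^ 2 := fun y => by unfold dker; ring
  simp_rw [e]
  rw [integral_sub (integrable_mul_rker_sq hs hM1.cont (bdd hM1) x)
    (integrable_mul_rker_sq hs hM2.cont (bdd hM2) x), rker_conv hs hst, rker_conv hs (hst.trans_le hT)]
  unfold dker
  field_simp
  ring

lemma rker_slope {t : ℝ} (ht : 0 < t) (x : E3) :
    Tendsto (fun s => (rker t x - rker (s + t) x) / s) (𝓝[>] 0) (𝓝 (2 * (t * rker t x ^ 2))) := by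
  have h : Tendsto (fun s : ℝ => (s + 2 * t) * ((t ^ 2 + ‖x‖ ^ 2)⁻¹ * ((s + t) ^ 2 + ‖x‖ ^ 2)⁻¹))
      (𝓝[>] 0) (𝓝 ((0 + 2 * t) * ((t ^ 2 + ‖x‖ ^ 2)⁻¹ * ((0 + t) ^ 2 + ‖x‖ ^ 2)⁻¹))) := by
    have : ContinuousAt (fun s : ℝ => (s + 2 * t) * ((t ^ 2 + ‖x‖ ^ 2)⁻¹ * ((s + t) ^ 2 + ‖x‖ ^ 2)⁻¹)) 0 := by
      refine ContinuousAt.mul (by fun_prop) (ContinuousAt.mul (by fun_prop) ?_)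
      exact ContinuousAt.inv₀ (by fun_prop) (by positivity)
    exact this.tendsto.mono_left nhdsWithin_le_nhds
  have e0 : (0 + 2 * t) * ((t ^ 2 + ‖x‖ ^ 2)⁻¹ * ((0 + t) ^ 2 + ‖x‖ ^ 2)⁻¹) = 2 * (t * rker t x ^ 2) := by
    unfold rker; ring
  rw [e0] at h
  refine h.congr' ?_
  filter_upwards [self_mem_nhdsWithin] with s hs
  have hs : 0 < s := hs
  unfold rker
  have h1 : t ^ 2 + ‖x‖ ^ 2 ≠ 0 := by positivity
  have h2 : (s + t) ^ 2 + ‖x‖ ^ 2 ≠ 0 := by positivity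
  field_simp; ring

/-- The half-Laplacian of `dker t T` in closed form: the limit `s → 0` of `Aop_dker_pos`. -/
lemma Aop_dker {t T : ℝ} (ht : 0 < t) (hT : t ≤ T) (x : E3) :
    Aop 0 (dker t T) x = 2 * Real.pi ^ 2 * (t * rker t x ^ 2 - T * rker T x ^ 2) := by
  obtain ⟨M, hM⟩ := adm_dker ht hT
  refine tendsto_nhds_unique (Aop_tendsto hM.cont x (hM.integrable 0 x)) ?_
  have h := ((rker_slope ht x).sub (rker_slope (ht.trans_le hT) x)).const_mul (Real.pi ^ 2)
  have e : Real.pi ^ 2 * (2 * (t * rker t x ^ 2) - 2 * (T * rker T x ^ 2)) =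
    2 * Real.pi ^ 2 * (t * rker t x ^ 2 - T * rker T x ^ 2) := by ring
  rw [e] at h
  refine h.congr' ?_
  filter_upwards [Ioo_mem_nhdsGT ht] with s hs
  rw [Aop_dker_pos hs.1 hs.2 hT]

/-! ### Cutoff functions -/

lemma exists_cut : ∃ (χ : E3 → ℝ) (L : ℝ), 0 ≤ L ∧ Continuous χ ∧ (∀ x, 0 ≤ χ x) ∧ (∀ x, χ x ≤ 1) ∧
    (∀ x, ‖x‖ ≤ 1 → χ x = 1) ∧ (∀ x, 2 ≤ ‖x‖ → χ x = 0) ∧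
    (∀ x z, |χ (x + z) - χ x| ≤ L * ‖z‖) ∧ (∀ x z, |sd χ x z| ≤ L * ‖z‖ ^ 2) := by
  let b : ContDiffBump (0 : E3) := ⟨1, 2, by norm_num, by norm_num⟩
  have hb : ContDiff ℝ 2 (b : E3 → ℝ) := b.contDiff
  have hc : HasCompactSupport (b : E3 → ℝ) := b.hasCompactSupport
  obtain ⟨L1, h1⟩ := hb.lipschitzWith_of_hasCompactSupport hc (by norm_num)
  have hb2 : ContDiff ℝ 1 (fderiv ℝ (b : E3 → ℝ)) := hb.fderiv_right (by norm_num)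
  obtain ⟨L2, h2⟩ := hb2.lipschitzWith_of_hasCompactSupport (hc.fderiv ℝ) (by norm_num)
  refine ⟨b, L1 + L2, by positivity, b.continuous, fun x => b.nonneg, fun x => b.le_one,
    fun x hx => b.one_of_mem_closedBall (by simpa using hx),
    fun x hx => b.zero_of_le_dist (by simpa using hx), fun x z => ?_, fun x z => ?_⟩
  · have := h1.dist_le_mul (x + z) x
    rw [Real.dist_eq, dist_eq_norm, add_sub_cancel_left] at this
    refine this.trans ?_
    gcongr
    exact le_add_of_nonneg_right L2.2
  · have d : Differentiable ℝ (b : E3 → ℝ) := hb.differentiable (by norm_num)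
    have dz : Differentiable ℝ (fun y => b (y + z)) := d.comp (differentiable_id.add_const z)
    have hd : ∀ y ∈ (Set.univ : Set E3), DifferentiableAt ℝ (fun y => b (y + z) - b y) y :=
      fun y _ => (dz y).sub (d y)
    have hbd : ∀ y ∈ (Set.univ : Set E3), ‖fderiv ℝ (fun y => b (y + z) - b y) y‖ ≤ L2 * ‖z‖ := by
      intro y _
      rw [fderiv_fun_sub (dz y) (d y), fderiv_comp_add_right]
      have := h2.dist_le_mul (y + z) y
      rwa [dist_eq_norm, dist_eq_norm, add_sub_cancel_left] at this
    have := convex_univ.norm_image_sub_le_of_norm_fderiv_le hd hbd (Set.mem_univ x) (Set.mem_univ (x - z))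
    have e : sd b x z = (b (x - z + z) - b (x - z)) - (b (x + z) - b x) := by
      rw [sub_add_cancel, sd]; ring
    rw [e]
    rw [Real.norm_eq_abs, sub_sub_cancel_left, norm_neg] at this
    refine this.trans ?_
    rw [mul_assoc, ← sq]
    gcongr
    exact le_add_of_nonneg_left L1.2

/-- Dilations of one smooth cutoff, which satisfy the estimates `Adm 0` with a common constant. -/
lemma exists_cuts : ∃ (χ : ℕ → E3 → ℝ) (L : ℝ), (∀ n, Adm 0 L (χ n)) ∧ (∀ n x, 0 ≤ χ n x) ∧
    (∀ n x, χ n x ≤ 1) ∧ (∀ x, ∀ᶠ n in atTop, χ n x = 1) ∧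
    (∀ n : ℕ, ∀ x, 2 * (n + 1) ≤ ‖x‖ → χ n x = 0) := by
  obtain ⟨χ, L, hL, hc, h0, h1, hone, hzero, hlip, hsd⟩ := exists_cut
  have hn : ∀ (n : ℕ) (x : E3), ‖((n : ℝ) + 1)⁻¹ • x‖ = ‖x‖ / (n + 1) := by
    intro n x
    rw [norm_smul, norm_inv, Real.norm_of_nonneg (by positivity)]
    ring
  have hle : ∀ (n : ℕ) (x : E3), ‖((n : ℝ) + 1)⁻¹ • x‖ ≤ ‖x‖ := by
    intro n x
    rw [hn]
    apply div_le_self (norm_nonneg _)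
    have : (0 : ℝ) ≤ n := by positivity
    linarith
  refine ⟨fun n x => χ (((n : ℝ) + 1)⁻¹ • x), L + 1, fun n => ⟨by fun_prop, by positivity, ?_, ?_, ?_⟩,
    fun n x => h0 _, fun n x => h1 _, fun x => ?_, fun n x hx => hzero _ ?_⟩
  · intro x
    rw [abs_of_nonneg (h0 _)]
    simp only [pow_zero, inv_one, mul_one]
    linarith [h1 (((n : ℝ) + 1)⁻¹ • x)]
  · intro x z _
    simp only [pow_zero, inv_one, mul_one]
    rw [smul_add]
    refine (hlip _ _).trans ?_
    gcongr
    · linarith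
    · exact hle n z
  · intro x z _
    simp only [pow_zero, inv_one, mul_one]
    have e : sd (fun x => χ (((n : ℝ) + 1)⁻¹ • x)) x z = sd χ (((n : ℝ) + 1)⁻¹ • x) (((n : ℝ) + 1)⁻¹ • z) := by
      simp only [sd, smul_add, smul_sub]
    rw [e]
    refine (hsd _ _).trans ?_
    gcongr
    · linarith
    · exact hle n z
  · obtain ⟨N, hN⟩ := exists_nat_ge ‖x‖
    filter_upwards [eventually_ge_atTop N] with n hn'
    apply hone
    rw [hn, div_le_one (by positivity)]
    have : (N : ℝ) ≤ n := by exact_mod_cast hn'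
    linarith
  · rw [hn, le_div_iff₀ (by positivity)]
    exact hx

/-- Fatou's lemma as an integrability criterion for nonnegative functions. -/
lemma integrable_of_fatou {X : Type*} [MeasurableSpace X] {ν : Measure X} {F : ℕ → X → ℝ} {f : X → ℝ}
    {B : ℝ} (hF : ∀ n, Integrable (F n) ν)
    (h0 : ∀ n, ∀ᵐ x ∂ν, 0 ≤ F n x) (hlim : ∀ᵐ x ∂ν, Tendsto (fun n => F n x) atTop (𝓝 (f x)))
    (hB : ∀ n, ∫ x, F n x ∂ν ≤ B) : Integrable f ν := by
  have hm : AEStronglyMeasurable f ν := aestronglyMeasurable_of_tendsto_ae _ (fun n => (hF n).1) hlim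
  refine ⟨hm, ?_⟩
  rw [hasFiniteIntegral_iff_enorm]
  have h1 : ∫⁻ x, ‖f x‖ₑ ∂ν ≤ liminf (fun n => ∫⁻ x, ‖F n x‖ₑ ∂ν) atTop := by
    refine le_trans (le_of_eq ?_) (lintegral_liminf_le' fun n => (hF n).1.enorm)
    refine lintegral_congr_ae ?_
    filter_upwards [hlim] with x hx
    exact (hx.enorm.liminf_eq).symm
  refine h1.trans_lt ?_
  have h2 : ∀ n, ∫⁻ x, ‖F n x‖ₑ ∂ν ≤ ENNReal.ofReal B := by
    intro n
    have : ∫⁻ x, ‖F n x‖ₑ ∂ν = ENNReal.ofReal (∫ x, F n x ∂ν) := by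
      rw [ofReal_integral_eq_lintegral_ofReal (hF n) (h0 n)]
      refine lintegral_congr_ae ?_
      filter_upwards [h0 n] with x hx
      exact Real.enorm_of_nonneg hx
    rw [this]
    exact ENNReal.ofReal_le_ofReal (hB n)
  refine lt_of_le_of_lt ?_ (ENNReal.ofReal_lt_top (r := B))
  refine liminf_le_of_le (by isBoundedDefault) fun b hb => ?_
  obtain ⟨n, hn⟩ := hb.exists
  exact hn.trans (h2 n)

/-! ### Functions with a pointwise half-Laplacian -/

/-- A continuous function of tempered growth with locally Hölder continuous gradient (expressed
through second differences) whose half-Laplacian is `f`. -/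
structure Good (u f : E3 → ℝ) : Prop where
  cont : Continuous u
  int : Integrable (fun x => |u x| * om x)
  hol : ∀ R : ℝ, ∃ C a r : ℝ, 0 ≤ C ∧ 0 < a ∧ 0 < r ∧ ∀ x z : E3, ‖x‖ ≤ R → ‖z‖ < r →
    |sd u x z| ≤ C * ‖z‖ ^ (1 + a)
  meas : Measurable f
  eq : ∀ x, HalfLapEq3 u x (f x)

lemma inv_pow4_le_om {r : ℝ} (hr : 0 < r) {z : E3} (hz : r ≤ ‖z‖) :
    1 / ‖z‖ ^ 4 ≤ ((1 + r) / r) ^ 4 * om z := by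
  unfold om
  have hz0 := hr.trans_le hz
  rw [← div_eq_mul_inv, div_le_div_iff₀ (by positivity) (by positivity), one_mul, ← mul_pow]
  gcongr
  rw [div_mul_eq_mul_div, le_div_iff₀ hr]
  nlinarith

lemma int_om_shift {u : E3 → ℝ} (hc : Continuous u) (hi : Integrable (fun x => |u x| * om x)) (x : E3) :
    Integrable (fun z => |u (x + z)| * om z) ∧ Integrable (fun z => |u (x - z)| * om z) ∧
    ∫ z, |u (x + z)| * om z ≤ (1 + ‖x‖) ^ 4 * ∫ y, |u y| * om y ∧
    ∫ z, |u (x - z)| * om z ≤ (1 + ‖x‖) ^ 4 * ∫ y, |u y| * om y := by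
  have i0 : Integrable (fun y => |u y| * om (y - x)) := by
    refine (hi.const_mul ((1 + ‖x‖) ^ 4)).mono'
      (hc.abs.mul (continuous_om.comp (continuous_id.sub continuous_const))).aestronglyMeasurable
      (Eventually.of_forall fun y => ?_)
    rw [norm_mul, Real.norm_of_nonneg (om_pos _).le, Real.norm_eq_abs, abs_abs]
    nlinarith [mul_le_mul_of_nonneg_left (om_shift_le x y) (abs_nonneg (u y))]
  have hle : ∫ y, |u y| * om (y - x) ≤ (1 + ‖x‖) ^ 4 * ∫ y, |u y| * om y := by
    rw [← integral_const_mul]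
    refine integral_mono i0 (hi.const_mul _) fun y => ?_
    simp only
    nlinarith [mul_le_mul_of_nonneg_left (om_shift_le x y) (abs_nonneg (u y))]
  have on : ∀ z, om (-z) = om z := fun z => by simp [om]
  have e1 : ∫ z, |u (x + z)| * om z = ∫ y, |u y| * om (y - x) := by
    rw [← integral_add_left_eq_self (fun y => |u y| * om (y - x)) x]
    simp
  have e2 : ∫ z, |u (x - z)| * om z = ∫ y, |u y| * om (y - x) := by
    rw [← integral_sub_left_eq_self (fun y => |u y| * om (y - x)) _ x]
    simp [on]
  refine ⟨by simpa using i0.comp_add_left x, by simpa [on] using i0.comp_sub_left x, ?_, ?_⟩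
  · rw [e1]; exact hle
  · rw [e2]; exact hle

/-- Local domination of the integrand of the half-Laplacian, uniformly for `x` in a ball. -/
lemma Good.local {u f : E3 → ℝ} (h : Good u f) (R : ℝ) : ∃ B, ∀ x : E3, ‖x‖ ≤ R →
    Integrable (fun z => sd u x z * rker 0 z ^ 2) ∧ ∫ z, |sd u x z| * rker 0 z ^ 2 ≤ B := by
  obtain ⟨C, a, r, hC, ha, hr, hol⟩ := h.hol R
  obtain ⟨U, hU⟩ := (isCompact_closedBall (0 : E3) R).exists_bound_of_continuousOn h.cont.continuousOn
  set K := ((1 + r) / r) ^ 4 with hK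
  have hK0 : 0 ≤ K := by positivity
  set J := ∫ y, |u y| * om y
  have i1 : Integrable (fun z : E3 => (Metric.ball (0 : E3) r).indicator (fun z => ‖z‖ ^ (-(3 - a))) z) := by
    rw [integrable_indicator_iff measurableSet_ball]
    exact integrableOn_ball_rpow (by linarith) r
  set I1 := ∫ z : E3, (Metric.ball (0 : E3) r).indicator (fun z => ‖z‖ ^ (-(3 - a))) z
  refine ⟨C * I1 + K * (2 * U * (∫ z, om z) + (1 + R) ^ 4 * J + (1 + R) ^ 4 * J), fun x hx => ?_⟩
  have hR : 0 ≤ R := (norm_nonneg x).trans hx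
  have hUx : |u x| ≤ U := hU x (by simpa using hx)
  obtain ⟨j1, j2, j3, j4⟩ := int_om_shift h.cont h.int x
  set D : E3 → ℝ := fun z => C * (Metric.ball (0 : E3) r).indicator (fun z => ‖z‖ ^ (-(3 - a))) z
    + K * (2 * |u x| * om z + |u (x + z)| * om z + |u (x - z)| * om z) with hD
  have k12 : Integrable (fun z => 2 * |u x| * om z + |u (x + z)| * om z) := (integrable_om4.const_mul _).add j1
  have k123 : Integrable (fun z => 2 * |u x| * om z + |u (x + z)| * om z + |u (x - z)| * om z) := k12.add j2
  have hDi : Integrable D := (i1.const_mul C).add (k123.const_mul K)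
  have hdom : ∀ᵐ z, |sd u x z| * rker 0 z ^ 2 ≤ D z := by
    filter_upwards [ae_ne_zero] with z hz
    have hz0 := norm_pos_iff.2 hz
    have hom := om_pos z
    rw [rker_zero_sq, hD]
    by_cases hzr : ‖z‖ < r
    · simp only
      rw [Set.indicator_of_mem (by simpa using hzr)]
      have h1 := hol x z hx hzr
      have e : ‖z‖ ^ (-(3 - a)) = ‖z‖ ^ (1 + a) * (1 / ‖z‖ ^ 4) := by
        rw [show -(3 - a) = (1 + a) - (4 : ℕ) by push_cast; ring, Real.rpow_sub hz0, Real.rpow_natCast]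
        ring
      rw [e]
      have h2 : |sd u x z| * (1 / ‖z‖ ^ 4) ≤ C * ‖z‖ ^ (1 + a) * (1 / ‖z‖ ^ 4) := by gcongr
      have h3 : 0 ≤ K * (2 * |u x| * om z + |u (x + z)| * om z + |u (x - z)| * om z) := by positivity
      linarith
    · push Not at hzr
      simp only
      rw [Set.indicator_of_notMem (by simpa using hzr), mul_zero, zero_add]
      have a1 := abs_sub (2 * u x - u (x + z)) (u (x - z))
      have b1 := abs_sub (2 * u x) (u (x + z))
      have c1 : |2 * u x| = 2 * |u x| := by rw [abs_mul]; norm_num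
      have h1 : |sd u x z| ≤ 2 * |u x| + |u (x + z)| + |u (x - z)| := by unfold sd; linarith
      have h2 := inv_pow4_le_om hr hzr
      calc _ ≤ (2 * |u x| + |u (x + z)| + |u (x - z)|) * (K * om z) := by gcongr
        _ = _ := by ring
  refine ⟨?_, ?_⟩
  · refine hDi.mono' ((continuous_sd h.cont x).measurable.mul
      ((measurable_rker 0).pow_const 2)).aestronglyMeasurable ?_
    filter_upwards [hdom] with z hz
    rw [norm_mul, Real.norm_of_nonneg (sq_nonneg (rker 0 z))]
    exact hz
  · have h1 : ∫ z, |sd u x z| * rker 0 z ^ 2 ≤ ∫ z, D z :=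
      integral_mono_of_nonneg (Eventually.of_forall fun z => by positivity) hDi hdom
    refine h1.trans ?_
    rw [hD, integral_add (i1.const_mul C) (k123.const_mul K), integral_const_mul, integral_const_mul,
      integral_add k12 j2, integral_add (integrable_om4.const_mul _) j1, integral_const_mul]
    have hJ : 0 ≤ J := integral_nonneg fun y => mul_nonneg (abs_nonneg _) (om_pos y).le
    have hO : 0 ≤ ∫ z, om z := integral_nonneg fun y => (om_pos y).le
    have hp : (1 + ‖x‖) ^ 4 * J ≤ (1 + R) ^ 4 * J := by gcongr
    gcongr
    · exact j3.trans hp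
    · exact j4.trans hp

lemma Good.Aop_le {u f : E3 → ℝ} (h : Good u f) (R : ℝ) : ∃ B, 0 ≤ B ∧ ∀ (s : ℝ) (x : E3), ‖x‖ ≤ R →
    |Aop s u x| ≤ B := by
  obtain ⟨B, hB⟩ := h.local R
  refine ⟨|B|, abs_nonneg _, fun s x hx => ?_⟩
  obtain ⟨h1, h2⟩ := hB x hx
  have h3 : Integrable (fun z => |sd u x z| * rker 0 z ^ 2) := by
    refine h1.norm.congr (Eventually.of_forall fun z => ?_)
    simp only [norm_mul, Real.norm_of_nonneg (sq_nonneg (rker 0 z)), Real.norm_eq_abs]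
  have h4 : |∫ z, sd u x z * rker s z ^ 2| ≤ ∫ z, |sd u x z| * rker 0 z ^ 2 := by
    rw [← Real.norm_eq_abs]
    refine norm_integral_le_of_norm_le h3 ?_
    filter_upwards [ae_ne_zero] with z hz
    rw [norm_mul, Real.norm_of_nonneg (sq_nonneg (rker s z)), rker_zero_sq, Real.norm_eq_abs]
    exact mul_le_mul_of_nonneg_left (rker_sq_le_zero s hz) (abs_nonneg _)
  unfold Aop
  rw [abs_mul, show |(1 : ℝ) / 2| = 1 / 2 by norm_num]
  have := le_abs_self B
  have := abs_nonneg (∫ z, sd u x z * rker s z ^ 2)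
  linarith

lemma Good.tendsto {u f : E3 → ℝ} (h : Good u f) (x : E3) :
    Tendsto (fun s => Aop s u x) (𝓝[>] 0) (𝓝 (Aop 0 u x)) := by
  obtain ⟨B, hB⟩ := h.local ‖x‖
  exact Aop_tendsto h.cont x (hB x le_rfl).1

/-- The principal value equals the absolutely convergent symmetric integral. -/
lemma Good.f_eq {u f : E3 → ℝ} (h : Good u f) (x : E3) : f x = C3 * Aop 0 u x := by
  obtain ⟨B, hB⟩ := h.local ‖x‖
  have hi := (hB x le_rfl).1
  refine tendsto_nhds_unique (h.eq x) ?_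
  refine Tendsto.const_mul _ ?_
  obtain ⟨j1, j2, -, -⟩ := int_om_shift h.cont h.int x
  have key : ∀ ε : ℝ, 0 < ε → ∫ y in {y : E3 | ε ≤ ‖y - x‖}, (u x - u y) / ‖x - y‖ ^ 4
      = 1 / 2 * ∫ z, {z : E3 | ε ≤ ‖z‖}.indicator (fun z => sd u x z * rker 0 z ^ 2) z := by
    intro ε hε
    have hS : MeasurableSet {z : E3 | ε ≤ ‖z‖} := measurableSet_le measurable_const measurable_norm
    have hS' : MeasurableSet {y : E3 | ε ≤ ‖y - x‖} :=
      measurableSet_le measurable_const (by fun_prop)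
    set G : E3 → ℝ := fun z => {z : E3 | ε ≤ ‖z‖}.indicator (fun z => (u x - u (x + z)) * rker 0 z ^ 2) z
    set H : E3 → ℝ := fun z => {z : E3 | ε ≤ ‖z‖}.indicator (fun z => (u x - u (x - z)) * rker 0 z ^ 2) z
    have bnd : ∀ w : E3 → ℝ, Continuous w → Integrable (fun z => |w z| * om z) →
        Integrable (fun z => {z : E3 | ε ≤ ‖z‖}.indicator (fun z => (u x - w z) * rker 0 z ^ 2) z) := by
      intro w hw hwi
      rw [integrable_indicator_iff hS]
      have : Integrable (fun z => ((1 + ε) / ε) ^ 4 * (|u x| * om z + |w z| * om z)) :=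
        ((integrable_om4.const_mul _).add hwi).const_mul _
      refine this.integrableOn.mono' ((continuous_const.sub hw).measurable.mul
        ((measurable_rker 0).pow_const 2)).aestronglyMeasurable ?_
      refine (ae_restrict_iff' hS).2 (Eventually.of_forall fun z hz => ?_)
      rw [norm_mul, Real.norm_of_nonneg (sq_nonneg (rker 0 z)), rker_zero_sq, Real.norm_eq_abs]
      calc _ ≤ (|u x| + |w z|) * (((1 + ε) / ε) ^ 4 * om z) := by
            gcongr
            · exact abs_sub _ _
            · exact inv_pow4_le_om hε hz
        _ = _ := by ring
    have hG : Integrable G := bnd _ (by have := h.cont; fun_prop) j1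
    have hH : Integrable H := bnd _ (by have := h.cont; fun_prop) j2
    have e1 : ∫ y in {y : E3 | ε ≤ ‖y - x‖}, (u x - u y) / ‖x - y‖ ^ 4 = ∫ z, G z := by
      rw [← integral_indicator hS', ← integral_add_left_eq_self _ x]
      congr 1; ext z
      simp only [G, Set.indicator_apply, Set.mem_ofPred_eq, add_sub_cancel_left, sub_add_cancel_left,
        norm_neg, rker_zero_sq]
      split_ifs <;> ring
    have e2 : ∫ z, G z = ∫ z, H z := by
      rw [← integral_neg_eq_self]
      congr 1; ext z
      simp [G, H, Set.indicator_apply, rker_neg, sub_eq_add_neg]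
    have e3 : ∫ z, {z : E3 | ε ≤ ‖z‖}.indicator (fun z => sd u x z * rker 0 z ^ 2) z
        = ∫ z, (G z + H z) := by
      congr 1; ext z
      simp only [G, H, Set.indicator_apply, sd]
      split_ifs <;> ring
    rw [e3, integral_add hG hH, ← e2, e1]; ring
  unfold Aop
  have lim : Tendsto (fun ε : ℝ => 1 / 2 * ∫ z, {z : E3 | ε ≤ ‖z‖}.indicator
      (fun z => sd u x z * rker 0 z ^ 2) z) (𝓝[>] 0) (𝓝 (1 / 2 * ∫ z, sd u x z * rker 0 z ^ 2)) := by
    refine Tendsto.const_mul _ ?_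
    refine tendsto_integral_filter_of_dominated_convergence (fun z => ‖sd u x z * rker 0 z ^ 2‖)
      (Eventually.of_forall fun ε => ?_) (Eventually.of_forall fun ε => Eventually.of_forall fun z => ?_)
      hi.norm ?_
    · exact hi.1.indicator (measurableSet_le measurable_const measurable_norm)
    · exact norm_indicator_le_norm_self _ _
    · filter_upwards [ae_ne_zero] with z hz
      refine tendsto_const_nhds.congr' ?_
      filter_upwards [Ioo_mem_nhdsGT (norm_pos_iff.2 hz)] with ε hε
      rw [Set.indicator_of_mem]
      exact hε.2.le
  refine lim.congr' ?_
  filter_upwards [self_mem_nhdsWithin] with ε hε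
  exact (key ε hε).symm

/-! ### The weak formulation and its consequences -/

lemma rker_sub_comm (s : ℝ) (x y : E3) : rker s (x - y) = rker s (y - x) := by
  rw [← rker_neg, neg_sub]

lemma measurable_Aop (s : ℝ) {u : E3 → ℝ} (hu : Continuous u) : StronglyMeasurable (Aop s u) := by
  unfold Aop
  refine StronglyMeasurable.const_mul ?_ _
  have : Measurable (Function.uncurry fun x z : E3 => sd u x z * rker s z ^ 2) := by
    refine Measurable.mul ?_ (((measurable_rker s).comp measurable_snd).pow_const 2)
    have : Continuous (fun p : E3 × E3 => sd u p.1 p.2) := by unfold sd; fun_prop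
    exact this.measurable
  exact this.stronglyMeasurable.integral_prod_right

/-- Self-adjointness of the regularized operator. -/
lemma weak_pos {s : ℝ} (hs : 0 < s) {u φ : E3 → ℝ} (hu : Continuous u)
    (hi : Integrable (fun y => |u y| * om y)) (hφ : Continuous φ) {R : ℝ}
    (hR : ∀ x, x ∉ Metric.closedBall (0 : E3) R → φ x = 0) :
    ∫ x, Aop s u x * φ x = ∫ x, u x * Aop s φ x := by
  have hcs : HasCompactSupport φ := HasCompactSupport.intro (isCompact_closedBall 0 R) hR
  have hφo : Integrable (fun y => |φ y| * om y) :=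
    (hφ.abs.mul continuous_om).integrable_of_hasCompactSupport
      (HasCompactSupport.mul_right (hcs.comp_left (g := fun t => |t|) abs_zero))
  have huφ : Integrable (fun y => u y * φ y) :=
    (hu.mul hφ).integrable_of_hasCompactSupport hcs.mul_left
  obtain ⟨C, hC, hk⟩ := rker_sq_le_om hs
  have hF : Integrable (Function.uncurry fun x y : E3 => φ x * (u y * rker s (y - x) ^ 2)) := by
    have hφi : Integrable φ := hφ.integrable_of_hasCompactSupport hcs
    have := hφi.norm.mul_prod (hi.const_mul (C * (1 + R) ^ 4))
    refine this.mono' ?_ (Eventually.of_forall fun q => ?_)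
    · have hr := continuous_rker hs
      apply Continuous.aestronglyMeasurable
      simp only [Function.uncurry_def]
      exact (hφ.comp continuous_fst).mul ((hu.comp continuous_snd).mul
        ((hr.comp (continuous_snd.sub continuous_fst)).pow 2))
    · simp only [Function.uncurry_def]
      by_cases hq : q.1 ∈ Metric.closedBall (0 : E3) R
      · rw [norm_mul, norm_mul, Real.norm_of_nonneg (sq_nonneg (rker _ _)), Real.norm_eq_abs (u q.2)]
        have h0 : ‖q.1‖ ≤ R := by simpa using hq
        have h1 := hk (q.2 - q.1)
        have h2 := om_shift_le q.1 q.2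
        have ho := om_pos q.2
        have h3 : om q.2 * (1 + ‖q.1‖) ^ 4 ≤ om q.2 * (1 + R) ^ 4 := by gcongr
        have h4 : rker s (q.2 - q.1) ^ 2 ≤ C * (om q.2 * (1 + R) ^ 4) :=
          h1.trans (by gcongr; exact h2.trans h3)
        calc _ ≤ ‖φ q.1‖ * (|u q.2| * (C * (om q.2 * (1 + R) ^ 4))) := by gcongr
          _ = _ := by ring
      · rw [hR _ hq]; simp
  have l : ∀ x, Aop s u x * φ x = Real.pi ^ 2 / s * (u x * φ x) - ∫ y, φ x * (u y * rker s (y - x) ^ 2) := by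
    intro x
    rw [Aop_eq hs hu hi, integral_const_mul]; ring
  have r : ∀ y, u y * Aop s φ y = Real.pi ^ 2 / s * (u y * φ y) - ∫ x, φ x * (u y * rker s (y - x) ^ 2) := by
    intro y
    rw [Aop_eq hs hφ hφo]
    have : ∫ x, φ x * (u y * rker s (y - x) ^ 2) = u y * ∫ x, φ x * rker s (x - y) ^ 2 := by
      rw [← integral_const_mul]
      congr 1; ext x; rw [rker_sub_comm s y x]; ring
    rw [this]; ring
  simp_rw [l, r]
  have q1 : Integrable (fun x => ∫ y, φ x * (u y * rker s (y - x) ^ 2)) := hF.integral_prod_left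
  have q2 : Integrable (fun y => ∫ x, φ x * (u y * rker s (y - x) ^ 2)) := hF.integral_prod_right
  rw [integral_sub (huφ.const_mul _) q1, integral_sub (huφ.const_mul _) q2,
    integral_integral_swap hF]

/-- Weak form of the equation for compactly supported test functions, as the limit `s → 0` of
`weak_pos`. -/
lemma weak_zero {u f φ : E3 → ℝ} (h : Good u f) {M : ℝ} (hφ : Adm 4 M φ) {R : ℝ}
    (hR : ∀ x, x ∉ Metric.closedBall (0 : E3) R → φ x = 0) :
    Integrable (fun x => f x * φ x) ∧ ∫ x, f x * φ x = C3 * ∫ x, u x * Aop 0 φ x := by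
  obtain ⟨B, hB0, hB⟩ := h.Aop_le R
  have hcs : HasCompactSupport φ := HasCompactSupport.intro (isCompact_closedBall 0 R) hR
  have hφi : Integrable φ := hφ.cont.integrable_of_hasCompactSupport hcs
  have dom : ∀ s x, ‖Aop s u x * φ x‖ ≤ B * ‖φ x‖ := by
    intro s x
    by_cases hx : x ∈ Metric.closedBall (0 : E3) R
    · rw [norm_mul]
      gcongr
      exact hB s x (by simpa using hx)
    · rw [hR x hx]; simp
  have hm : ∀ s, AEStronglyMeasurable (fun x => Aop s u x * φ x) := fun s =>
    ((measurable_Aop s h.cont).mul hφ.cont.stronglyMeasurable).aestronglyMeasurable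
  have e : ∀ x, f x * φ x = C3 * (Aop 0 u x * φ x) := fun x => by rw [h.f_eq]; ring
  simp_rw [e]
  have i0 : Integrable (fun x => Aop 0 u x * φ x) :=
    (hφi.norm.const_mul B).mono' (hm 0) (Eventually.of_forall fun x => dom 0 x)
  refine ⟨i0.const_mul _, ?_⟩
  rw [integral_const_mul]
  congr 1
  have t1 : Tendsto (fun s => ∫ x, Aop s u x * φ x) (𝓝[>] 0) (𝓝 (∫ x, Aop 0 u x * φ x)) :=
    tendsto_integral_filter_of_dominated_convergence (fun x => B * ‖φ x‖)
      (Eventually.of_forall hm) (Eventually.of_forall fun s => Eventually.of_forall fun x => dom s x)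
      (hφi.norm.const_mul B) (Eventually.of_forall fun x => (h.tendsto x).mul_const _)
  have t2 : Tendsto (fun s => ∫ x, u x * Aop s φ x) (𝓝[>] 0) (𝓝 (∫ x, u x * Aop 0 φ x)) := by
    refine tendsto_integral_filter_of_dominated_convergence (fun x => (cmaj * M) * (|u x| * om x))
      (Eventually.of_forall fun s => (h.cont.stronglyMeasurable.mul
        (measurable_Aop s hφ.cont)).aestronglyMeasurable)
      (Eventually.of_forall fun s => Eventually.of_forall fun x => ?_) (h.int.const_mul _)
      (Eventually.of_forall fun x => (Aop_tendsto hφ.cont x (hφ.integrable 0 x)).const_mul _)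
    rw [norm_mul, Real.norm_eq_abs, Real.norm_eq_abs]
    have := mul_le_mul_of_nonneg_left (hφ.Aop_le s x) (abs_nonneg (u x))
    linarith
  refine tendsto_nhds_unique t1 (t2.congr' ?_)
  filter_upwards [self_mem_nhdsWithin] with s hs
  exact (weak_pos hs h.cont h.int hφ.cont hR).symm

lemma dker_nonneg {t T : ℝ} (ht : 0 < t) (hT : t ≤ T) (x : E3) : 0 ≤ dker t T x := by
  unfold dker; linarith [rker_anti ht hT x]

/-- Testing the equation against `dker t T`, whose half-Laplacian is explicit. -/
lemma weak_dker {u f : E3 → ℝ} (h : Good u f) (hf : ∀ x, 0 ≤ f x) {t T : ℝ} (ht : 0 < t) (hT : t ≤ T) :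
    Integrable (fun x => f x * dker t T x) ∧ ∫ x, f x * dker t T x
      = 2 * C3 * Real.pi ^ 2 * (t * (∫ x, u x * rker t x ^ 2) - T * ∫ x, u x * rker T x ^ 2) := by
  have hT0 := ht.trans_le hT
  obtain ⟨M, hM⟩ := adm_dker ht hT
  obtain ⟨χ, L, hχ, h0, h1, hone, hzero⟩ := exists_cuts
  have hA : ∀ n, Adm 4 (4 * L * M) (fun x => χ n x * dker t T x) := fun n => by
    have := (hχ n).mul hM
    rwa [zero_add] at this
  have hW := fun n : ℕ => weak_zero h (hA n) (R := 2 * (n + 1)) (fun x hx => by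
    rw [hzero n x (by simpa using (not_le.1 (by simpa using hx)).le), zero_mul])
  -- Removing the cutoffs: the second differences converge pointwise, being eventually constant.
  have hsupp : ∀ x z, ∀ᶠ n in atTop, sd (fun x => χ n x * dker t T x) x z = sd (dker t T) x z := by
    intro x z
    filter_upwards [hone x, hone (x + z), hone (x - z)] with n a b c
    simp [sd, a, b, c]
  have tA : ∀ x, Tendsto (fun n => Aop 0 (fun x => χ n x * dker t T x) x) atTop (𝓝 (Aop 0 (dker t T) x)) := by
    intro x
    refine Tendsto.const_mul _ ?_
    refine tendsto_integral_filter_of_dominated_convergence (fun z => 4 * L * M * om x * maj x z)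
      (Eventually.of_forall fun n => ((hA n).integrable 0 x).1)
      (Eventually.of_forall fun n => ?_) ((integrable_maj x).const_mul _)
      (Eventually.of_forall fun z => ?_)
    · filter_upwards [ae_ne_zero] with z hz
      rw [norm_mul, Real.norm_of_nonneg (sq_nonneg (rker _ _))]
      exact (hA n).dom 0 x hz
    · refine tendsto_const_nhds.congr' ?_
      filter_upwards [hsupp x z] with n hn
      rw [hn]
  have tR : Tendsto (fun n => C3 * ∫ x, u x * Aop 0 (fun x => χ n x * dker t T x) x) atTop
      (𝓝 (C3 * ∫ x, u x * Aop 0 (dker t T) x)) := by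
    refine Tendsto.const_mul _ ?_
    refine tendsto_integral_filter_of_dominated_convergence
      (fun x => (cmaj * (4 * L * M)) * (|u x| * om x))
      (Eventually.of_forall fun n => (h.cont.stronglyMeasurable.mul
        (measurable_Aop 0 (hA n).cont)).aestronglyMeasurable)
      (Eventually.of_forall fun n => Eventually.of_forall fun x => ?_) (h.int.const_mul _)
      (Eventually.of_forall fun x => (tA x).const_mul _)
    rw [norm_mul, Real.norm_eq_abs, Real.norm_eq_abs]
    have := mul_le_mul_of_nonneg_left ((hA n).Aop_le 0 x) (abs_nonneg (u x))
    linarith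
  have tP : ∀ x, Tendsto (fun n => f x * (χ n x * dker t T x)) atTop (𝓝 (f x * dker t T x)) := by
    intro x
    refine tendsto_const_nhds.congr' ?_
    filter_upwards [hone x] with n hn
    rw [hn, one_mul]
  -- The convergent right-hand sides bound the integrals of `χ n * f * dker`; as `f ≥ 0`, Fatou's
  -- lemma gives integrability of the limit.
  obtain ⟨B, hB⟩ := tR.bddAbove_range
  have hint : Integrable (fun x => f x * dker t T x) := by
    refine integrable_of_fatou (B := B) (fun n => (hW n).1) (fun n => Eventually.of_forall fun x => ?_)
      (Eventually.of_forall tP) (fun n => ?_)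
    · exact mul_nonneg (hf x) (mul_nonneg (h0 n x) (dker_nonneg ht hT x))
    · rw [(hW n).2]; exact hB ⟨n, rfl⟩
  refine ⟨hint, ?_⟩
  have tL : Tendsto (fun n => ∫ x, f x * (χ n x * dker t T x)) atTop (𝓝 (∫ x, f x * dker t T x)) := by
    refine tendsto_integral_filter_of_dominated_convergence (fun x => ‖f x * dker t T x‖)
      (Eventually.of_forall fun n => (hW n).1.1)
      (Eventually.of_forall fun n => Eventually.of_forall fun x => ?_) hint.norm
      (Eventually.of_forall tP)
    rw [norm_mul, norm_mul, norm_mul, Real.norm_of_nonneg (h0 n x)]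
    have := mul_le_mul_of_nonneg_right (h1 n x) (norm_nonneg (dker t T x))
    rw [one_mul] at this
    gcongr
  have e1 : ∫ x, f x * dker t T x = C3 * ∫ x, u x * Aop 0 (dker t T) x :=
    tendsto_nhds_unique tL (tR.congr fun n => (hW n).2.symm)
  rw [e1]
  simp_rw [Aop_dker ht hT]
  have i1 := integrable_mul_rker_sq ht h.cont h.int 0
  have i2 := integrable_mul_rker_sq hT0 h.cont h.int 0
  simp only [sub_zero] at i1 i2
  have e2 : ∀ x, u x * (2 * Real.pi ^ 2 * (t * rker t x ^ 2 - T * rker T x ^ 2))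
    = 2 * Real.pi ^ 2 * t * (u x * rker t x ^ 2) - 2 * Real.pi ^ 2 * T * (u x * rker T x ^ 2) :=
    fun x => by ring
  simp_rw [e2]
  rw [integral_sub (i1.const_mul _) (i2.const_mul _), integral_const_mul, integral_const_mul]
  ring

/-- Translation invariance. -/
lemma Good.translate {u f : E3 → ℝ} (h : Good u f) (x0 : E3) :
    Good (fun x => u (x0 + x)) (fun x => f (x0 + x)) where
  cont := by have := h.cont; fun_prop
  int := (int_om_shift h.cont h.int x0).1
  hol R := by
    obtain ⟨C, a, r, hC, ha, hr, hh⟩ := h.hol (‖x0‖ + R)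
    refine ⟨C, a, r, hC, ha, hr, fun x z hx hz => ?_⟩
    have := hh (x0 + x) z ((norm_add_le _ _).trans (by linarith)) hz
    rwa [show sd (fun x => u (x0 + x)) x z = sd u (x0 + x) z by simp only [sd, add_assoc, add_sub_assoc]]
  meas := h.meas.comp (measurable_const_add x0)
  eq x := by
    have := h.eq (x0 + x)
    unfold HalfLapEq3 at this ⊢
    refine this.congr fun ε => ?_
    congr 1
    have hS : ∀ x : E3, MeasurableSet {y : E3 | ε ≤ ‖y - x‖} := fun x =>
      measurableSet_le measurable_const (by fun_prop)
    rw [← integral_indicator (hS _), ← integral_indicator (hS _), ← integral_add_left_eq_self _ x0]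
    congr 1; ext y
    simp only [Set.indicator_apply, Set.mem_ofPred_eq, add_sub_add_left_eq_sub]

/-! ### Representation by Riesz potentials -/

lemma C3_nonneg : 0 ≤ C3 := by
  unfold C3
  refine inv_nonneg.2 (integral_nonneg fun ζ => ?_)
  have := Real.cos_le_one (2 * Real.pi * ζ 0)
  exact div_nonneg (by linarith) (by positivity)

/-- Averages of `u` against `t (t² + |x|²)⁻²`, the half-space Poisson kernel up to a factor. -/
def pav (u : E3 → ℝ) (t : ℝ) : ℝ := t * ∫ x, u x * rker t x ^ 2

/-- The averages at small scale recover the value of `u` at the origin. -/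
lemma Good.pav_zero {u f : E3 → ℝ} (h : Good u f) :
    Tendsto (pav u) (𝓝[>] 0) (𝓝 (Real.pi ^ 2 * u 0)) := by
  have h1 : Tendsto (fun t => Real.pi ^ 2 * u 0 - t * Aop t u 0) (𝓝[>] 0)
      (𝓝 (Real.pi ^ 2 * u 0 - 0 * Aop 0 u 0)) := by
    refine tendsto_const_nhds.sub (Tendsto.mul ?_ (h.tendsto 0))
    exact tendsto_id.mono_left nhdsWithin_le_nhds
  rw [zero_mul, sub_zero] at h1
  refine h1.congr' ?_
  filter_upwards [self_mem_nhdsWithin] with t ht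
  have ht : 0 < t := ht
  rw [Aop_eq ht h.cont h.int]
  unfold pav
  simp only [sub_zero]
  field_simp
  ring

lemma tendsto_seq : Tendsto (fun n : ℕ => (1 : ℝ) / (n + 1)) atTop (𝓝[>] 0) := by
  refine tendsto_nhdsWithin_iff.2 ⟨tendsto_one_div_add_atTop_nhds_zero_nat, Eventually.of_forall fun n => ?_⟩
  exact Set.mem_Ioi.2 (by positivity)

/-- The limit `t → 0` of `weak_dker`. -/
lemma weak_dker_zero {u f : E3 → ℝ} (h : Good u f) (hf : ∀ x, 0 ≤ f x) {T : ℝ} (hT : 1 ≤ T) :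
    Integrable (fun x => f x * dker 0 T x) ∧ ∫ x, f x * dker 0 T x
      = 2 * C3 * Real.pi ^ 2 * (Real.pi ^ 2 * u 0 - pav u T) := by
  have ht : ∀ n : ℕ, (0 : ℝ) < 1 / ((n : ℝ) + 1) := fun n => by positivity
  have htT : ∀ n : ℕ, (1 : ℝ) / ((n : ℝ) + 1) ≤ T := fun n => by
    refine le_trans ?_ hT
    rw [div_le_one (by positivity)]
    have : (0 : ℝ) ≤ n := by positivity
    linarith
  have hW := fun n => weak_dker h hf (ht n) (htT n)
  have tP : ∀ᵐ x : E3, Tendsto (fun n : ℕ => f x * dker (1 / ((n : ℝ) + 1)) T x) atTop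
      (𝓝 (f x * dker 0 T x)) := by
    filter_upwards [ae_ne_zero] with x hx
    exact (((tendsto_rker x hx).comp tendsto_seq).sub_const _).const_mul _
  have tR : Tendsto (fun n : ℕ => 2 * C3 * Real.pi ^ 2 * (pav u (1 / ((n : ℝ) + 1)) - pav u T)) atTop
      (𝓝 (2 * C3 * Real.pi ^ 2 * (Real.pi ^ 2 * u 0 - pav u T))) :=
    ((h.pav_zero.comp tendsto_seq).sub_const _).const_mul _
  obtain ⟨B, hB⟩ := tR.bddAbove_range
  have hint : Integrable (fun x => f x * dker 0 T x) := by
    refine integrable_of_fatou (B := B) (fun n => (hW n).1) (fun n => Eventually.of_forall fun x => ?_)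
      tP (fun n => ?_)
    · exact mul_nonneg (hf x) (dker_nonneg (ht n) (htT n) x)
    · rw [(hW n).2]; exact hB ⟨n, rfl⟩
  refine ⟨hint, ?_⟩
  refine tendsto_nhds_unique ?_ (tR.congr fun n => (hW n).2.symm)
  refine tendsto_integral_filter_of_dominated_convergence (fun x => ‖f x * dker 0 T x‖)
      (Eventually.of_forall fun n => (hW n).1.1)
      (Eventually.of_forall fun n => ?_) hint.norm tP
  filter_upwards [ae_ne_zero] with x hx
  have h1 := dker_nonneg (ht n) (htT n) x
  have h2 : dker (1 / ((n : ℝ) + 1)) T x ≤ dker 0 T x := by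
    unfold dker; linarith [rker_le_zero (1 / ((n : ℝ) + 1)) hx]
  rw [norm_mul, norm_mul, Real.norm_of_nonneg h1, Real.norm_of_nonneg (h1.trans h2)]
  gcongr

lemma tendsto_dker_atTop (x : E3) : Tendsto (fun T => dker 0 T x) atTop (𝓝 (rker 0 x)) := by
  have : Tendsto (fun T : ℝ => (T ^ 2 + ‖x‖ ^ 2)⁻¹) atTop (𝓝 0) := by
    refine tendsto_inv_atTop_zero.comp ?_
    exact tendsto_atTop_add_const_right _ _ (tendsto_pow_atTop (by norm_num))
  have := (tendsto_const_nhds (x := rker 0 x)).sub this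
  rwa [sub_zero] at this

lemma tendsto_natT : Tendsto (fun n : ℕ => (n : ℝ) + 1) atTop atTop :=
  tendsto_atTop_add_const_right _ _ tendsto_natCast_atTop_atTop

lemma dker0_nonneg (T : ℝ) {x : E3} (hx : x ≠ 0) : 0 ≤ dker 0 T x := by
  unfold dker; linarith [rker_le_zero T hx]

/-- For `u ≥ 0` the average at scale `T` in `weak_dker_zero` has a favourable sign, so Fatou's lemma
as `T → ∞` gives integrability of `f / |·|²`. -/
lemma Good.integrable_zero {u f : E3 → ℝ} (h : Good u f) (hf : ∀ x, 0 ≤ f x) (hu : ∀ x, 0 ≤ u x) :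
    Integrable (fun x => f x * rker 0 x) := by
  have hT : ∀ n : ℕ, (1 : ℝ) ≤ (n : ℝ) + 1 := fun n => by
    have : (0 : ℝ) ≤ n := by positivity
    linarith
  refine integrable_of_fatou (B := 2 * C3 * Real.pi ^ 2 * (Real.pi ^ 2 * u 0))
    (fun n : ℕ => (weak_dker_zero h hf (hT n)).1) (fun n => ?_)
    (Eventually.of_forall fun x => ((tendsto_dker_atTop x).comp tendsto_natT).const_mul _) (fun n => ?_)
  · filter_upwards [ae_ne_zero] with x hx
    exact mul_nonneg (hf x) (dker0_nonneg _ hx)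
  · rw [(weak_dker_zero h hf (hT n)).2]
    have : 0 ≤ pav u (n + 1) :=
      mul_nonneg (by positivity) (integral_nonneg fun x => mul_nonneg (hu x) (sq_nonneg _))
    have := C3_nonneg
    gcongr
    linarith

lemma Good.pav_top {u f : E3 → ℝ} (h : Good u f) (hf : ∀ x, 0 ≤ f x) (hC : C3 ≠ 0)
    (hi : Integrable (fun x => f x * rker 0 x)) :
    Tendsto (pav u) atTop (𝓝 (Real.pi ^ 2 * u 0 - (∫ x, f x * rker 0 x) / (2 * C3 * Real.pi ^ 2))) := by
  have h1 : Tendsto (fun T => ∫ x, f x * dker 0 T x) atTop (𝓝 (∫ x, f x * rker 0 x)) := by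
    refine tendsto_integral_filter_of_dominated_convergence (fun x => ‖f x * rker 0 x‖)
      (Eventually.of_forall fun T => ?_) (Eventually.of_forall fun T => ?_) hi.norm
      (Eventually.of_forall fun x => (tendsto_dker_atTop x).const_mul _)
    · exact (h.meas.mul ((measurable_rker 0).sub (measurable_rker T))).aestronglyMeasurable
    · filter_upwards [ae_ne_zero] with x hx
      rw [norm_mul, norm_mul, Real.norm_of_nonneg (dker0_nonneg T hx), Real.norm_of_nonneg (rker_nonneg _ _)]
      have : dker 0 T x ≤ rker 0 x := by unfold dker; linarith [rker_nonneg T x]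
      gcongr
  refine (tendsto_const_nhds.sub (h1.div_const _)).congr' ?_
  filter_upwards [eventually_ge_atTop 1] with T hT
  rw [(weak_dker_zero h hf hT).2]
  field_simp
  ring

/-- Averages at large scale do not see translations. -/
lemma pav_translate {u : E3 → ℝ} (hu : Continuous u) (hi : Integrable (fun x => |u x| * om x)) (x0 : E3) :
    Tendsto (fun T => pav (fun x => u (x0 + x)) T - pav u T) atTop (𝓝 0) := by
  have e : ∀ T, 1 ≤ T → pav (fun x => u (x0 + x)) T - pav u T
      = ∫ y, u y * (T * (rker T (y - x0) ^ 2 - rker T y ^ 2)) := by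
    intro T hT
    have hT0 : 0 < T := by linarith
    have i1 := integrable_mul_rker_sq hT0 hu hi x0
    have i2 := integrable_mul_rker_sq hT0 hu hi 0
    simp only [sub_zero] at i2
    have e1 : ∫ x, u (x0 + x) * rker T x ^ 2 = ∫ y, u y * rker T (y - x0) ^ 2 := by
      rw [← integral_add_left_eq_self (fun y => u y * rker T (y - x0) ^ 2) x0]
      simp
    unfold pav
    rw [e1, ← mul_sub, ← integral_sub i1 i2, ← integral_const_mul]
    congr 1; ext y; ring
  obtain ⟨C, hC, hk⟩ := rker_sq_le_om (s := 1) one_pos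
  set N := ‖x0‖ with hN
  have hN0 : 0 ≤ N := norm_nonneg _
  -- The difference of the translated weights gains a factor `1 / T`.
  have key : ∀ T, 1 ≤ T → ∀ y : E3, T * |rker T (y - x0) ^ 2 - rker T y ^ 2| ≤
      2 * N * (1 + N) * (rker T (y - x0) ^ 2 + rker T y ^ 2) := by
    intro T hT y
    have hT0 : 0 < T := by linarith
    have pa := rker_pos hT0 y
    have pb := rker_pos hT0 (y - x0)
    have hin := abs_real_inner_le_norm y x0
    have hd : rker T (y - x0) - rker T y = (2 * inner ℝ y x0 - N ^ 2) * (rker T y * rker T (y - x0)) := by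
      unfold rker
      have h1 : T ^ 2 + ‖y‖ ^ 2 ≠ 0 := by positivity
      have h2 : T ^ 2 + ‖y - x0‖ ^ 2 ≠ 0 := by positivity
      have := norm_sub_sq_real y x0
      field_simp
      rw [this]; ring
    have hA : rker T y * (T ^ 2 + ‖y‖ ^ 2) = 1 := by unfold rker; field_simp
    have h3 : |2 * inner ℝ y x0 - N ^ 2| ≤ N * (2 * ‖y‖ + N) := by
      have := abs_sub (2 * inner ℝ y x0) (N ^ 2)
      rw [abs_mul, abs_of_nonneg (sq_nonneg N), show |(2:ℝ)| = 2 by norm_num] at this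
      nlinarith
    have h4 : T * (2 * ‖y‖ + N) ≤ (1 + N) * (T ^ 2 + ‖y‖ ^ 2) := by
      nlinarith [sq_nonneg (T - ‖y‖), mul_nonneg hN0 (mul_nonneg hT0.le (sub_nonneg.2 hT)),
        mul_nonneg hN0 (sq_nonneg ‖y‖)]
    have h5 : T * (2 * ‖y‖ + N) * rker T y ≤ 1 + N := by
      calc _ ≤ (1 + N) * (T ^ 2 + ‖y‖ ^ 2) * rker T y := by gcongr
        _ = (1 + N) * (rker T y * (T ^ 2 + ‖y‖ ^ 2)) := by ring
        _ = 1 + N := by rw [hA, mul_one]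
    have e1 : rker T (y - x0) ^ 2 - rker T y ^ 2
        = (2 * inner ℝ y x0 - N ^ 2) * (rker T y * rker T (y - x0)) * (rker T (y - x0) + rker T y) := by
      rw [← hd]; ring
    rw [e1, abs_mul, abs_mul, abs_of_pos (mul_pos pa pb), abs_of_pos (add_pos pb pa)]
    calc _ ≤ T * (N * (2 * ‖y‖ + N) * (rker T y * rker T (y - x0)) * (rker T (y - x0) + rker T y)) := by
          gcongr
      _ = N * (T * (2 * ‖y‖ + N) * rker T y) * (rker T (y - x0) * (rker T (y - x0) + rker T y)) := by ring
      _ ≤ N * (1 + N) * (rker T (y - x0) * (rker T (y - x0) + rker T y)) := by gcongr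
      _ ≤ N * (1 + N) * (2 * (rker T (y - x0) ^ 2 + rker T y ^ 2)) := by
          refine mul_le_mul_of_nonneg_left ?_ (by positivity)
          nlinarith [sq_nonneg (rker T (y - x0) - rker T y), sq_nonneg (rker T y)]
      _ = _ := by ring
  have hlim0 : ∀ y : E3, Tendsto (fun T => 2 * N * (1 + N) * (rker T (y - x0) ^ 2 + rker T y ^ 2)) atTop (𝓝 0) := by
    intro y
    have h0 : ∀ x : E3, Tendsto (fun T => rker T x) atTop (𝓝 0) := fun x => by
      refine tendsto_inv_atTop_zero.comp ?_
      exact tendsto_atTop_add_const_right _ _ (tendsto_pow_atTop (by norm_num))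
    have := (((h0 (y - x0)).pow 2).add ((h0 y).pow 2)).const_mul (2 * N * (1 + N))
    simpa using this
  have main : Tendsto (fun T => ∫ y, u y * (T * (rker T (y - x0) ^ 2 - rker T y ^ 2))) atTop
      (𝓝 (∫ y : E3, u y * 0)) := by
    refine tendsto_integral_filter_of_dominated_convergence
      (fun y => 2 * N * (1 + N) * (C * (1 + N) ^ 4 + C) * (|u y| * om y))
      (Eventually.of_forall fun T => ?_) ?_ (hi.const_mul _) (Eventually.of_forall fun y => ?_)
    · exact (hu.measurable.mul (((((measurable_rker T).comp (measurable_sub_const x0)).pow_const 2).sub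
        ((measurable_rker T).pow_const 2)).const_mul T)).aestronglyMeasurable
    · filter_upwards [eventually_ge_atTop 1] with T hT
      refine Eventually.of_forall fun y => ?_
      have hT0 : 0 < T := by linarith
      rw [norm_mul, norm_mul, Real.norm_of_nonneg hT0.le, Real.norm_eq_abs, Real.norm_eq_abs]
      have ho := om_pos y
      have b1 : rker T y ^ 2 ≤ C * om y :=
        (pow_le_pow_left₀ (rker_nonneg _ _) (rker_anti one_pos hT y) 2).trans (hk y)
      have b2 : rker T (y - x0) ^ 2 ≤ C * (om y * (1 + N) ^ 4) :=
        ((pow_le_pow_left₀ (rker_nonneg _ _) (rker_anti one_pos hT _) 2).trans (hk _)).trans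
          (by gcongr; exact om_shift_le x0 y)
      calc _ ≤ |u y| * (2 * N * (1 + N) * (C * (om y * (1 + N) ^ 4) + C * om y)) := by
            refine mul_le_mul_of_nonneg_left ((key T hT y).trans ?_) (abs_nonneg _)
            gcongr
        _ = _ := by ring
    · refine Tendsto.const_mul _ ?_
      refine squeeze_zero_norm' ?_ (hlim0 y)
      filter_upwards [eventually_ge_atTop 1] with T hT
      rw [norm_mul, Real.norm_of_nonneg (by linarith), Real.norm_eq_abs]
      exact key T hT y
  simp only [mul_zero, integral_zero] at main
  refine main.congr' ?_
  filter_upwards [eventually_ge_atTop 1] with T hT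
  exact (e T hT).symm

/-- The constant in the Riesz potential of order one. -/
def kap : ℝ := 1 / (2 * C3 * Real.pi ^ 4)

lemma rker_shift (f : E3 → ℝ) (x : E3) :
    (Integrable (fun y => f (x + y) * rker 0 y) ↔ Integrable (fun y => f y / ‖x - y‖ ^ 2)) ∧
    ∫ y, f (x + y) * rker 0 y = ∫ y, f y / ‖x - y‖ ^ 2 := by
  have e : (fun y => f (x + y) * rker 0 y) = fun y => (fun y => f y / ‖x - y‖ ^ 2) (x + y) := by
    ext y
    simp [rker, div_eq_mul_inv]
  rw [e]
  refine ⟨⟨fun h => ?_, fun h => h.comp_add_left x⟩, integral_add_left_eq_self (fun y => f y / ‖x - y‖ ^ 2) x⟩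
  have := h.comp_add_left (-x)
  simpa using this

lemma Good.integrable {u f : E3 → ℝ} (h : Good u f) (hf : ∀ x, 0 ≤ f x) (hu : ∀ x, 0 ≤ u x) (x : E3) :
    Integrable (fun y => f y / ‖x - y‖ ^ 2) :=
  (rker_shift f x).1.1 ((h.translate x).integrable_zero (fun _ => hf _) (fun _ => hu _))

/-- Up to an additive constant, `u` is the Riesz potential of its half-Laplacian. -/
lemma Good.repr {u f : E3 → ℝ} (h : Good u f) (hf : ∀ x, 0 ≤ f x) (hC : C3 ≠ 0)
    (hi : ∀ x, Integrable (fun y => f y / ‖x - y‖ ^ 2)) :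
    ∃ l : ℝ, ((∀ x, 0 ≤ u x) → 0 ≤ l) ∧ ∀ x, u x = l + kap * ∫ y, f y / ‖x - y‖ ^ 2 := by
  have hp := Real.pi_pos
  have ht : ∀ x, Tendsto (pav (fun y => u (x + y))) atTop
      (𝓝 (Real.pi ^ 2 * u x - (∫ y, f y / ‖x - y‖ ^ 2) / (2 * C3 * Real.pi ^ 2))) := by
    intro x
    have := (h.translate x).pav_top (fun _ => hf _) hC ((rker_shift f x).1.2 (hi x))
    rwa [(rker_shift f x).2, add_zero] at this
  have h0 := ht 0
  simp only [zero_add, zero_sub, norm_neg] at h0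
  refine ⟨u 0 - kap * ∫ y, f y / ‖y‖ ^ 2, fun hu => ?_, fun x => ?_⟩
  · have : 0 ≤ Real.pi ^ 2 * u 0 - (∫ y, f y / ‖y‖ ^ 2) / (2 * C3 * Real.pi ^ 2) := by
      refine ge_of_tendsto h0 ?_
      filter_upwards [eventually_ge_atTop 0] with T hT
      exact mul_nonneg hT (integral_nonneg fun x => mul_nonneg (hu x) (sq_nonneg _))
    have e : u 0 - kap * ∫ y, f y / ‖y‖ ^ 2 =
      (Real.pi ^ 2 * u 0 - (∫ y, f y / ‖y‖ ^ 2) / (2 * C3 * Real.pi ^ 2)) / Real.pi ^ 2 := by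
      unfold kap; field_simp
    rw [e]; positivity
  · have h1 := tendsto_nhds_unique (pav_translate h.cont h.int x) ((ht x).sub h0)
    unfold kap
    field_simp at h1 ⊢
    linarith

/-! ### Applicability to classical solutions -/

/-- Locally Hölder gradients give second-difference bounds, locally uniformly. -/
lemma second_diff_of_holder {u : E3 → ℝ} (hu : ContDiff ℝ 1 u) (hh : LocHolder3 (fderiv ℝ u)) (R : ℝ) :
    ∃ C a r : ℝ, 0 ≤ C ∧ 0 < a ∧ 0 < r ∧ ∀ x z : E3, ‖x‖ ≤ R → ‖z‖ < r →
    |sd u x z| ≤ C * ‖z‖ ^ (1 + a) := by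
  suffices h : ∃ C a r : ℝ, 0 ≤ C ∧ 0 < a ∧ 0 < r ∧ ∀ x ∈ Metric.closedBall (0 : E3) R, ∀ z : E3,
      ‖z‖ < r → |sd u x z| ≤ C * ‖z‖ ^ (1 + a) by
    obtain ⟨C, a, r, h1, h2, h3, h4⟩ := h
    exact ⟨C, a, r, h1, h2, h3, fun x z hx hz => h4 x (by simpa using hx) z hz⟩
  have d : Differentiable ℝ u := hu.differentiable (by norm_num)
  -- Local Hölder continuity lets the exponent and the constant vary from point to point;
  -- compactness makes them uniform on the ball.
  refine (isCompact_closedBall (0 : E3) R).induction_on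
    (p := fun S => ∃ C a r : ℝ, 0 ≤ C ∧ 0 < a ∧ 0 < r ∧ ∀ x ∈ S, ∀ z : E3,
      ‖z‖ < r → |sd u x z| ≤ C * ‖z‖ ^ (1 + a)) ?_ ?_ ?_ ?_
  · exact ⟨0, 1, 1, le_rfl, one_pos, one_pos, by simp⟩
  · rintro s t hst ⟨C, a, r, h1, h2, h3, h4⟩
    exact ⟨C, a, r, h1, h2, h3, fun x hx => h4 x (hst hx)⟩
  · rintro s t ⟨C, a, r, h1, h2, h3, h4⟩ ⟨C', a', r', h1', h2', h3', h4'⟩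
    refine ⟨max C C', min a a', min (min r r') 1, h1.trans (le_max_left _ _), lt_min h2 h2',
      lt_min (lt_min h3 h3') one_pos, fun x hx z hz => ?_⟩
    have hz1 : ‖z‖ ≤ 1 := (hz.trans_le (min_le_right _ _)).le
    have hz2 := hz.trans_le (min_le_left _ _)
    rcases hx with hx | hx
    · refine (h4 x hx z (hz2.trans_le (min_le_left _ _))).trans ?_
      have := Real.rpow_le_rpow_of_exponent_ge' (norm_nonneg z) hz1
        (add_pos one_pos (lt_min h2 h2')).le (add_le_add_right (min_le_left a a') 1)
      exact mul_le_mul (le_max_left _ _) this (by positivity) (h1.trans (le_max_left _ _))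
    · refine (h4' x hx z (hz2.trans_le (min_le_right _ _))).trans ?_
      have := Real.rpow_le_rpow_of_exponent_ge' (norm_nonneg z) hz1
        (add_pos one_pos (lt_min h2 h2')).le (add_le_add_right (min_le_right a a') 1)
      exact mul_le_mul (le_max_right _ _) this (by positivity) (h1.trans (le_max_left _ _))
  · intro x0 _
    obtain ⟨C, a, r, hr, ha, -, hol⟩ := hh x0
    refine ⟨Metric.ball x0 (r / 3), mem_nhdsWithin_of_mem_nhds (Metric.ball_mem_nhds _ (by positivity)),
      C, a, r / 3, C.2, ha, by positivity, fun x hx z hz => ?_⟩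
    have dz : Differentiable ℝ (fun y => u (y + z)) := d.comp (differentiable_id.add_const z)
    have hd : ∀ y ∈ Metric.ball x0 (2 * r / 3), DifferentiableAt ℝ (fun y => u (y + z) - u y) y :=
      fun y _ => (dz y).sub (d y)
    have hx' : dist x x0 < r / 3 := hx
    have hbd : ∀ y ∈ Metric.ball x0 (2 * r / 3), ‖fderiv ℝ (fun y => u (y + z) - u y) y‖ ≤ C * ‖z‖ ^ (a : ℝ) := by
      intro y hy
      rw [fderiv_fun_sub (dz y) (d y), fderiv_comp_add_right]
      have hy : dist y x0 < 2 * r / 3 := hy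
      have h1 : y + z ∈ Metric.ball x0 r := by
        rw [Metric.mem_ball]
        have : dist (y + z) x0 ≤ dist (y + z) y + dist y x0 := dist_triangle _ _ _
        rw [dist_self_add_left] at this
        linarith
      have h2 : y ∈ Metric.ball x0 r := by rw [Metric.mem_ball]; linarith
      have h3 := hol.dist_le h1 h2
      rwa [dist_eq_norm, dist_self_add_left] at h3
    have m1 : x ∈ Metric.ball x0 (2 * r / 3) := by rw [Metric.mem_ball]; linarith
    have m2 : x - z ∈ Metric.ball x0 (2 * r / 3) := by
      rw [Metric.mem_ball]
      have : dist (x - z) x0 ≤ dist (x - z) x + dist x x0 := dist_triangle _ _ _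
      rw [dist_eq_norm (x - z) x, sub_sub_cancel_left, norm_neg] at this
      linarith
    have h5 := (convex_ball x0 (2 * r / 3)).norm_image_sub_le_of_norm_fderiv_le hd hbd m1 m2
    -- The second difference is the increment of `y ↦ u (y + z) - u y` between `x` and `x - z`.
    have e : sd u x z = (u (x - z + z) - u (x - z)) - (u (x + z) - u x) := by
      rw [sub_add_cancel, sd]; ring
    rw [e]
    rw [Real.norm_eq_abs, sub_sub_cancel_left, norm_neg] at h5
    refine h5.trans (le_of_eq ?_)
    rw [mul_assoc]
    congr 1
    rcases eq_or_lt_of_le (norm_nonneg z) with h0 | h0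
    · rw [← h0, mul_zero, Real.zero_rpow (by positivity)]
    · rw [Real.rpow_add h0, Real.rpow_one, mul_comm]

lemma lap3_eq {v : E3 → ℝ} (hv : ContDiff ℝ 3 v) (x : E3) :
    lap3 v x = ∑ i : Fin 3, iteratedFDeriv ℝ 2 v x (fun _ => EuclideanSpace.single i 1) := by
  unfold lap3
  refine Finset.sum_congr rfl fun i _ => ?_
  have h1 : ContDiff ℝ 2 (fderiv ℝ v) := hv.fderiv_right (by norm_num)
  have h2 : DifferentiableAt ℝ (fderiv ℝ v) x := (h1.differentiable (by norm_num)) x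
  rw [iteratedFDeriv_two_apply, fderiv_clm_apply h2 (differentiableAt_const _)]
  simp

lemma fderiv_lap3 {v : E3 → ℝ} (hv : ContDiff ℝ 3 v) (x z : E3) :
    DifferentiableAt ℝ (lap3 v) x ∧ fderiv ℝ (lap3 v) x z
      = ∑ i : Fin 3, iteratedFDeriv ℝ 3 v x (Fin.cons z (fun _ => EuclideanSpace.single i 1)) := by
  have hfun : lap3 v = fun x => ∑ i : Fin 3, iteratedFDeriv ℝ 2 v x (fun _ => EuclideanSpace.single i 1) :=
    funext fun x => lap3_eq hv x
  have hd : DifferentiableAt ℝ (iteratedFDeriv ℝ 2 v) x :=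
    (hv.differentiable_iteratedFDeriv (m := 2) (by norm_num)) x
  have h1 : HasFDerivAt (lap3 v) (∑ i : Fin 3, (ContinuousMultilinearMap.apply ℝ (fun _ : Fin 2 => E3) ℝ
      (fun _ => EuclideanSpace.single i 1)).comp (fderiv ℝ (iteratedFDeriv ℝ 2 v) x)) x := by
    rw [hfun]
    refine HasFDerivAt.fun_sum fun i _ => ?_
    exact ((ContinuousMultilinearMap.apply ℝ (fun _ : Fin 2 => E3) ℝ
      (fun _ => EuclideanSpace.single i 1)).hasFDerivAt).comp x hd.hasFDerivAt
  refine ⟨h1.differentiableAt, ?_⟩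
  rw [h1.fderiv]
  simp [iteratedFDeriv_succ_apply_left, Fin.tail_def]

lemma contDiff_lap3 {v : E3 → ℝ} (hv : ContDiff ℝ 3 v) : ContDiff ℝ 1 (lap3 v) := by
  unfold lap3
  refine ContDiff.sum fun i _ => ?_
  have h1 : ContDiff ℝ 2 (fderiv ℝ v) := hv.fderiv_right (by norm_num)
  have h2 : ContDiff ℝ 2 (fun z => fderiv ℝ v z (EuclideanSpace.single i 1)) := h1.clm_apply contDiff_const
  exact (h2.fderiv_right (m := 1) (by norm_num)).clm_apply contDiff_const

lemma locHolder_lap3 {v : E3 → ℝ} (hv : ContDiff ℝ 3 v) (hh : LocHolder3 (iteratedFDeriv ℝ 3 v)) :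
    LocHolder3 (fderiv ℝ (fun z => -lap3 v z)) := by
  intro x0
  obtain ⟨C, a, r, hr, ha, ha1, hol⟩ := hh x0
  refine ⟨3 * C, a, r, hr, ha, ha1, fun x hx y hy => ?_⟩
  have h := hol.dist_le hx hy
  rw [edist_dist, edist_dist, ENNReal.ofReal_rpow_of_nonneg dist_nonneg ha.le,
    ← ENNReal.ofReal_coe_nnreal, ← ENNReal.ofReal_mul (by positivity)]
  apply ENNReal.ofReal_le_ofReal
  push_cast
  refine le_trans ?_ (le_of_eq (mul_assoc 3 (C : ℝ) _).symm)
  refine le_trans ?_ (mul_le_mul_of_nonneg_left h (by norm_num))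
  rw [dist_eq_norm, dist_eq_norm, fderiv_fun_neg, fderiv_fun_neg]
  refine ContinuousLinearMap.opNorm_le_bound _ (by positivity) fun z => ?_
  have e : (-fderiv ℝ (lap3 v) x - -fderiv ℝ (lap3 v) y) z
      = -∑ i : Fin 3, (iteratedFDeriv ℝ 3 v x - iteratedFDeriv ℝ 3 v y)
        (Fin.cons z (fun _ => EuclideanSpace.single i 1)) := by
    simp only [sub_apply, neg_apply, (fderiv_lap3 hv _ z).2, Finset.sum_sub_distrib]
    ring
  rw [e, norm_neg]
  refine (norm_sum_le _ _).trans ?_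
  have hb : ∀ i ∈ (Finset.univ : Finset (Fin 3)), ‖(iteratedFDeriv ℝ 3 v x - iteratedFDeriv ℝ 3 v y)
        (Fin.cons z (fun _ => EuclideanSpace.single i 1))‖ ≤ ‖iteratedFDeriv ℝ 3 v x - iteratedFDeriv ℝ 3 v y‖ * ‖z‖ := by
    intro i _
    refine (ContinuousMultilinearMap.le_opNorm _ _).trans (le_of_eq ?_)
    simp [Fin.prod_univ_succ]
  refine (Finset.sum_le_sum hb).trans (le_of_eq ?_)
  simp; ring

lemma om_integrable {u : E3 → ℝ} (hu : Continuous u)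
    (h : Integrable (fun x : E3 => |u x| / (1 + ‖x‖ ^ 4))) : Integrable (fun x => |u x| * om x) := by
  refine h.mono' (hu.abs.mul continuous_om).aestronglyMeasurable (Eventually.of_forall fun x => ?_)
  rw [norm_mul, Real.norm_of_nonneg (om_pos x).le, Real.norm_eq_abs, abs_abs, div_eq_mul_inv]
  exact mul_le_mul_of_nonneg_left (om_eq x).1 (abs_nonneg _)

lemma measurable_P3 {u : E3 → ℝ} (hu : Continuous u) : Measurable (P3 u) := by
  unfold P3
  refine Measurable.mul ?_ (hu.pow 2).measurable
  have : Measurable (Function.uncurry fun y z : E3 => u z ^ 2 / ‖y - z‖ ^ 2) := by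
    have h1 : Measurable (fun q : E3 × E3 => u q.2 ^ 2) := ((hu.comp continuous_snd).pow 2).measurable
    have h2 : Measurable (fun q : E3 × E3 => ‖q.1 - q.2‖ ^ 2) := by fun_prop
    exact h1.div h2
  exact this.stronglyMeasurable.integral_prod_right.measurable

lemma good_u {p : ℝ} {u v : E3 → ℝ} (h : IsSolution3 p u v) : Good u (fun x => Real.exp (p * v x)) where
  cont := h.u_C1.continuous
  int := om_integrable h.u_C1.continuous h.u_int
  hol := second_diff_of_holder h.u_C1 h.u_grad_holder
  meas := by have := h.v_C3.continuous; fun_prop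
  eq := h.eq_u

lemma good_v {p : ℝ} {u v : E3 → ℝ} (h : IsSolution3 p u v) : Good (fun z => -lap3 v z) (P3 u) where
  cont := (contDiff_lap3 h.v_C3).continuous.neg
  int := om_integrable (contDiff_lap3 h.v_C3).continuous.neg (by simpa using h.lapv_int)
  hol := second_diff_of_holder (contDiff_lap3 h.v_C3).neg (locHolder_lap3 h.v_C3 h.v_D3_holder)
  meas := measurable_P3 h.u_C1.continuous
  eq := h.eq_v

/-- `C3` is nonzero because otherwise every half-Laplacian would vanish, while `exp (p v)` does not. -/
lemma C3_pos {p : ℝ} {u v : E3 → ℝ} (h : IsSolution3 p u v) : 0 < C3 := by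
  refine lt_of_le_of_ne C3_nonneg fun h0 => ?_
  have := (good_u h).f_eq 0
  rw [← h0, zero_mul] at this
  exact absurd this (Real.exp_pos _).ne'

/-! ### Bounds on the potential of `u²` -/

lemma poly_bound {u : E3 → ℝ} (hu : Continuous u) (h0 : ∀ x, 0 ≤ u x)
    (hg : ∃ K C R : ℝ, 0 < K ∧ 0 < C ∧ 0 < R ∧ ∀ x : E3, R ≤ ‖x‖ → u x ≤ C * ‖x‖ ^ K) :
    ∃ (C : ℝ) (N : ℕ), 0 ≤ C ∧ ∀ x, u x ≤ C * (1 + ‖x‖) ^ N := by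
  obtain ⟨K, C, R, hK, hC, hR, h⟩ := hg
  obtain ⟨U, hU⟩ := (isCompact_closedBall (0 : E3) R).exists_bound_of_continuousOn hu.continuousOn
  obtain ⟨N, hN⟩ := exists_nat_ge K
  have hU0 : 0 ≤ U := (norm_nonneg _).trans (hU 0 (by simp [hR.le]))
  refine ⟨C + U, N, by positivity, fun x => ?_⟩
  have h1 : 1 ≤ 1 + ‖x‖ := by linarith [norm_nonneg x]
  have h2 := one_le_pow₀ h1 (n := N)
  rcases le_total R ‖x‖ with hx | hx
  · have h3 : ‖x‖ ^ K ≤ (1 + ‖x‖) ^ N := by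
      rw [← Real.rpow_natCast]
      exact (Real.rpow_le_rpow (norm_nonneg x) (by linarith) hK.le).trans
        (Real.rpow_le_rpow_of_exponent_le h1 hN)
    have := h x hx
    nlinarith
  · have := hU x (by simpa using hx)
    rw [Real.norm_of_nonneg (h0 x)] at this
    nlinarith

lemma integrableOn_ball_shift (x : E3) (r : ℝ) :
    IntegrableOn (fun z => 1 / ‖x - z‖ ^ 2) (Metric.ball x r) ∧
    (0 ≤ r → ∫ z in Metric.ball x r, 1 / ‖x - z‖ ^ 2 = 4 * Real.pi * r) := by
  have h := (integrable_indicator_iff (measurableSet_ball (x := (0 : E3)) (ε := r))).2 (integrableOn_ball_inv_sq r)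
  have e : ∀ z, (Metric.ball x r).indicator (fun z => 1 / ‖x - z‖ ^ 2) z
      = (Metric.ball (0 : E3) r).indicator (fun x => 1 / ‖x‖ ^ 2) (x - z) := by
    intro z
    have hm : z ∈ Metric.ball x r ↔ x - z ∈ Metric.ball (0 : E3) r := by
      rw [Metric.mem_ball, mem_ball_zero_iff, dist_comm, dist_eq_norm]
    by_cases hz : z ∈ Metric.ball x r
    · rw [Set.indicator_of_mem hz, Set.indicator_of_mem (hm.1 hz)]
    · rw [Set.indicator_of_notMem hz, Set.indicator_of_notMem (fun h => hz (hm.2 h))]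
  constructor
  · rw [← integrable_indicator_iff measurableSet_ball]
    exact (h.comp_sub_left x).congr (Eventually.of_forall fun z => (e z).symm)
  · intro hr
    rw [← integral_indicator measurableSet_ball, ← integral_ball_inv_sq hr,
      ← integral_indicator measurableSet_ball]
    simp_rw [e]
    exact integral_sub_left_eq_self (fun z => (Metric.ball (0 : E3) r).indicator (fun x => 1 / ‖x‖ ^ 2) z) _ x

/-- Some potential `∫ u²(z)/|y₀-z|² dz` converges: finiteness of the mass gives this for almost every
`y₀` with `u(y₀) ≠ 0`, and if no such point existed, `P3 u` would vanish almost everywhere. -/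
lemma exists_slice {u : E3 → ℝ} (hmass : FiniteMass3 u) (hP : ∫ y, P3 u y ≠ 0) :
    ∃ y0, Integrable (fun z => u z ^ 2 / ‖y0 - z‖ ^ 2) := by
  have h1 := (integrable_prod_iff hmass.1).1 hmass |>.1
  by_contra hcon
  push Not at hcon
  apply hP
  refine integral_eq_zero_of_ae ?_
  filter_upwards [h1] with x hx
  by_cases h0 : u x = 0
  · simp [P3, h0]
  · exfalso
    apply hcon x
    have := hx.const_mul ((u x ^ 2)⁻¹)
    refine this.congr (Eventually.of_forall fun z => ?_)
    field_simp

/-- If the potential of a polynomially bounded `g` converges at one point `y₀`, it grows polynomially: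
away from `y` the kernel is compared with the one centred at `y₀`, and near `y` the bound on `g` is
integrated directly. -/
lemma pot_bound {g : E3 → ℝ} (hg : Continuous g) (h0 : ∀ x, 0 ≤ g x) {C : ℝ} {N : ℕ} (hC : 0 ≤ C)
    (hb : ∀ x, g x ≤ C * (1 + ‖x‖) ^ N) {y0 : E3} (hy0 : Integrable (fun z => g z / ‖y0 - z‖ ^ 2)) :
    ∃ (D : ℝ) (M : ℕ), 0 ≤ D ∧ ∀ y, Integrable (fun z => g z / ‖y - z‖ ^ 2) ∧
      ∫ z, g z / ‖y - z‖ ^ 2 ≤ D * (1 + ‖y‖) ^ M := by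
  set J := ∫ z, g z / ‖y0 - z‖ ^ 2 with hJ
  have hJ0 : 0 ≤ J := integral_nonneg fun z => div_nonneg (h0 z) (by positivity)
  refine ⟨C * 2 ^ N * (4 * Real.pi) + (2 + ‖y0‖) ^ 2 * J, N + 2, by positivity, fun y => ?_⟩
  obtain ⟨i1, i2⟩ := integrableOn_ball_shift y 1
  have i1' := (integrable_indicator_iff measurableSet_ball).2 i1
  set D : E3 → ℝ := fun z => C * (2 + ‖y‖) ^ N * (Metric.ball y 1).indicator (fun z => 1 / ‖y - z‖ ^ 2) z
    + (1 + ‖y0 - y‖) ^ 2 * (g z / ‖y0 - z‖ ^ 2) with hD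
  have hDi : Integrable D := (i1'.const_mul _).add (hy0.const_mul _)
  have hdom : ∀ᵐ z, g z / ‖y - z‖ ^ 2 ≤ D z := by
    have hne : ∀ᵐ z : E3, z ≠ y0 := by simp [ae_iff, measure_singleton]
    filter_upwards [hne] with z hz
    rw [hD]
    by_cases h : z ∈ Metric.ball y 1
    · simp only
      rw [Set.indicator_of_mem h]
      have h1 : ‖z‖ ≤ 1 + ‖y‖ := by
        rw [Metric.mem_ball, dist_eq_norm] at h
        have := norm_add_le (z - y) y
        rw [sub_add_cancel] at this
        linarith
      have h2 : g z ≤ C * (2 + ‖y‖) ^ N := (hb z).trans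
        (mul_le_mul_of_nonneg_left (pow_le_pow_left₀ (by positivity) (by linarith) N) hC)
      have h3 : 0 ≤ (1 + ‖y0 - y‖) ^ 2 * (g z / ‖y0 - z‖ ^ 2) := mul_nonneg (by positivity)
        (div_nonneg (h0 z) (by positivity))
      have h4 : g z / ‖y - z‖ ^ 2 ≤ C * (2 + ‖y‖) ^ N * (1 / ‖y - z‖ ^ 2) := by
        rw [mul_one_div]; gcongr
      linarith
    · simp only
      rw [Set.indicator_of_notMem h, mul_zero, zero_add]
      rw [Metric.mem_ball, dist_eq_norm, norm_sub_rev] at h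
      push Not at h
      have h1 : ‖y0 - z‖ ≤ (1 + ‖y0 - y‖) * ‖y - z‖ := by
        have := norm_add_le (y0 - y) (y - z)
        rw [sub_add_sub_cancel] at this
        nlinarith [norm_nonneg (y0 - y)]
      have h2 : 0 < ‖y0 - z‖ := norm_pos_iff.2 (sub_ne_zero.2 (Ne.symm hz))
      rw [← mul_div_assoc, div_le_div_iff₀ (by positivity) (by positivity)]
      have h3 := pow_le_pow_left₀ h2.le h1 2
      have := mul_le_mul_of_nonneg_left h3 (h0 z)
      linarith
  have hi : Integrable (fun z => g z / ‖y - z‖ ^ 2) := by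
    refine hDi.mono' (hg.measurable.div (by fun_prop)).aestronglyMeasurable ?_
    filter_upwards [hdom] with z hz
    rw [Real.norm_of_nonneg (div_nonneg (h0 z) (by positivity))]
    exact hz
  refine ⟨hi, (integral_mono_ae hi hDi hdom).trans ?_⟩
  rw [hD, integral_add (i1'.const_mul _) (hy0.const_mul _), integral_const_mul, integral_const_mul,
    integral_indicator measurableSet_ball, i2 zero_le_one, ← hJ]
  have hy := norm_nonneg y
  have h1 : (2 + ‖y‖) ^ N ≤ 2 ^ N * (1 + ‖y‖) ^ (N + 2) := by
    calc (2 + ‖y‖) ^ N ≤ (2 * (1 + ‖y‖)) ^ N := pow_le_pow_left₀ (by positivity) (by linarith) N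
      _ = 2 ^ N * (1 + ‖y‖) ^ N := mul_pow _ _ _
      _ ≤ _ := by
        gcongr
        · linarith
        · omega
  have h2 : (1 + ‖y0 - y‖) ^ 2 ≤ (2 + ‖y0‖) ^ 2 * (1 + ‖y‖) ^ (N + 2) := by
    have h3 := norm_sub_le y0 y
    calc (1 + ‖y0 - y‖) ^ 2 ≤ ((2 + ‖y0‖) * (1 + ‖y‖)) ^ 2 := by
          gcongr
          nlinarith [norm_nonneg y0, mul_nonneg (norm_nonneg y0) hy]
      _ = (2 + ‖y0‖) ^ 2 * (1 + ‖y‖) ^ 2 := mul_pow _ _ _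
      _ ≤ _ := by
        gcongr
        · linarith
        · omega
  calc _ ≤ C * (2 ^ N * (1 + ‖y‖) ^ (N + 2)) * (4 * Real.pi * 1) + ((2 + ‖y0‖) ^ 2 * (1 + ‖y‖) ^ (N + 2)) * J := by
        gcongr
    _ = _ := by ring

/-! ### Integral representations of `u` and `-Δv` -/

lemma kap_pos {p : ℝ} {u v : E3 → ℝ} (h : IsSolution3 p u v) : 0 < kap := by
  have := C3_pos h
  unfold kap
  positivity

lemma P3_nonneg (u : E3 → ℝ) (y : E3) : 0 ≤ P3 u y :=
  mul_nonneg (integral_nonneg fun z => by positivity) (sq_nonneg _)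

/-- A nonzero Bochner integral excludes the junk value. -/
lemma P3_integrable {u : E3 → ℝ} (hP : ∫ y, P3 u y ≠ 0) : Integrable (P3 u) := by
  by_contra h
  exact hP (integral_undef h)

lemma P3_poly {u : E3 → ℝ} (hu : Continuous u) (h0 : ∀ x, 0 ≤ u x) (hmass : FiniteMass3 u)
    (hg : ∃ K C R : ℝ, 0 < K ∧ 0 < C ∧ 0 < R ∧ ∀ x : E3, R ≤ ‖x‖ → u x ≤ C * ‖x‖ ^ K)
    (hP : ∫ y, P3 u y ≠ 0) :
    ∃ (D : ℝ) (M : ℕ), 0 ≤ D ∧ ∀ y, P3 u y ≤ D * (1 + ‖y‖) ^ M := by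
  obtain ⟨C, N, hC, hb⟩ := poly_bound hu h0 hg
  obtain ⟨y0, hy0⟩ := exists_slice hmass hP
  have hb2 : ∀ x, u x ^ 2 ≤ C ^ 2 * (1 + ‖x‖) ^ (N * 2) := by
    intro x
    rw [pow_mul, ← mul_pow]
    exact pow_le_pow_left₀ (h0 x) (hb x) 2
  obtain ⟨D, M, hD, h⟩ := pot_bound (hu.pow 2) (fun x => sq_nonneg _) (by positivity) hb2 hy0
  refine ⟨D * C ^ 2, M + N * 2, by positivity, fun y => ?_⟩
  have := mul_le_mul (h y).2 (hb2 y) (sq_nonneg _) (by positivity)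
  unfold P3
  refine this.trans (le_of_eq ?_)
  rw [pow_add]; ring

lemma P3_riesz_integrable {u : E3 → ℝ} (hu : Continuous u) (hi : Integrable (P3 u))
    {D : ℝ} {M : ℕ} (hD : 0 ≤ D) (hb : ∀ y, P3 u y ≤ D * (1 + ‖y‖) ^ M) (x : E3) :
    Integrable (fun y => P3 u y / ‖x - y‖ ^ 2) := by
  obtain ⟨i1, -⟩ := integrableOn_ball_shift x 1
  have i1' := (integrable_indicator_iff measurableSet_ball).2 i1
  refine ((i1'.const_mul (D * (2 + ‖x‖) ^ M)).add hi).mono'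
    ((measurable_P3 hu).div (by fun_prop)).aestronglyMeasurable (Eventually.of_forall fun z => ?_)
  rw [Real.norm_of_nonneg (div_nonneg (P3_nonneg u z) (by positivity)), Pi.add_apply]
  by_cases h : z ∈ Metric.ball x 1
  · rw [Set.indicator_of_mem h]
    have h1 : ‖z‖ ≤ 1 + ‖x‖ := by
      rw [Metric.mem_ball, dist_eq_norm] at h
      have := norm_add_le (z - x) x
      rw [sub_add_cancel] at this
      linarith
    have h2 : P3 u z ≤ D * (2 + ‖x‖) ^ M := (hb z).trans
      (mul_le_mul_of_nonneg_left (pow_le_pow_left₀ (by positivity) (by linarith) M) hD)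
    have h4 : P3 u z / ‖x - z‖ ^ 2 ≤ D * (2 + ‖x‖) ^ M * (1 / ‖x - z‖ ^ 2) := by
      rw [mul_one_div]; gcongr
    linarith [P3_nonneg u z]
  · rw [Set.indicator_of_notMem h, mul_zero, zero_add]
    rw [Metric.mem_ball, dist_eq_norm, norm_sub_rev] at h
    push Not at h
    exact div_le_self (P3_nonneg u z) (one_le_pow₀ h)

/-- The Riesz potential representation of `u`; the additive constant vanishes because the
mass is finite. -/
lemma u_repr {p : ℝ} {u v : E3 → ℝ} (h : IsSolution3 p u v) (h0 : ∀ x, 0 ≤ u x)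
    (hmass : FiniteMass3 u) (hP : ∫ y, P3 u y ≠ 0) (x : E3) :
    Integrable (fun y => Real.exp (p * v y) / ‖x - y‖ ^ 2) ∧
    u x = kap * ∫ y, Real.exp (p * v y) / ‖x - y‖ ^ 2 := by
  have hi := fun x => (good_u h).integrable (fun x => (Real.exp_pos (p * v x)).le) h0 x
  obtain ⟨l, hl, hr⟩ := (good_u h).repr (fun x => (Real.exp_pos (p * v x)).le) (C3_pos h).ne' hi
  refine ⟨hi x, ?_⟩
  have hl0 := hl h0
  rcases hl0.lt_or_eq with hl1 | hl1
  · exfalso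
    -- If `l > 0` then `u ≥ l`, so finiteness of one slice of the mass would make
    -- `1 / ‖y0 - z‖ ^ 2` integrable at infinity.
    obtain ⟨y0, hy0⟩ := exists_slice hmass hP
    have hge : ∀ z, l ≤ u z := fun z => by
      rw [hr z]
      have : 0 ≤ kap * ∫ y, Real.exp (p * v y) / ‖z - y‖ ^ 2 :=
        mul_nonneg (kap_pos h).le (integral_nonneg fun y => by positivity)
      linarith
    have h1 : Integrable (fun z => 1 / ‖y0 - z‖ ^ 2) := by
      refine (hy0.const_mul ((l ^ 2)⁻¹)).mono'
        (measurable_const.div (by fun_prop)).aestronglyMeasurable (Eventually.of_forall fun z => ?_)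
      rw [Real.norm_of_nonneg (by positivity), ← mul_div_assoc]
      have : 1 ≤ (l ^ 2)⁻¹ * u z ^ 2 := by
        rw [inv_mul_eq_div, one_le_div (by positivity)]
        exact pow_le_pow_left₀ hl0 (hge z) 2
      gcongr
    apply not_integrable_inv_sq
    have := h1.comp_sub_left y0
    simpa using this
  · rw [hr x, ← hl1, zero_add]

lemma lap_repr {p : ℝ} {u v : E3 → ℝ} (h : IsSolution3 p u v)
    (hi : ∀ x, Integrable (fun y => P3 u y / ‖x - y‖ ^ 2)) :
    ∃ l, ∀ x, -lap3 v x = l + kap * ∫ y, P3 u y / ‖x - y‖ ^ 2 := by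
  obtain ⟨l, -, hl⟩ := (good_v h).repr (P3_nonneg u) (C3_pos h).ne' hi
  exact ⟨l, hl⟩

/-! ### A smoothed mean value formula -/

/-- The averaging weight `(1 - ‖y‖²)₊²`. -/
def k2 (y : E3) : ℝ := (max (1 - ‖y‖ ^ 2) 0) ^ 2

/-- The weight `(1 - ‖y‖²)₊³`, whose gradient is `-6 y (1 - ‖y‖²)₊²`. -/
def k3 (y : E3) : ℝ := (max (1 - ‖y‖ ^ 2) 0) ^ 3

lemma k2_cont : Continuous k2 := by unfold k2; fun_prop
lemma k3_cont : Continuous k3 := by unfold k3; fun_prop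
lemma k2_nonneg (y : E3) : 0 ≤ k2 y := sq_nonneg _
lemma k3_nonneg (y : E3) : 0 ≤ k3 y := pow_nonneg (le_max_right _ _) 3

lemma max_mem (y : E3) : max (1 - ‖y‖ ^ 2) 0 ≤ 1 := max_le (by nlinarith [norm_nonneg y]) zero_le_one

lemma k2_le_one (y : E3) : k2 y ≤ 1 := pow_le_one₀ (le_max_right _ _) (max_mem y)
lemma k3_le_one (y : E3) : k3 y ≤ 1 := pow_le_one₀ (le_max_right _ _) (max_mem y)

lemma max_zero_of {y : E3} (h : 1 ≤ ‖y‖) : max (1 - ‖y‖ ^ 2) 0 = 0 :=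
  max_eq_right (by nlinarith)

lemma k2_zero {y : E3} (h : 1 ≤ ‖y‖) : k2 y = 0 := by rw [k2, max_zero_of h]; norm_num
lemma k3_zero {y : E3} (h : 1 ≤ ‖y‖) : k3 y = 0 := by rw [k3, max_zero_of h]; norm_num

lemma k2_supp : HasCompactSupport k2 :=
  HasCompactSupport.intro (isCompact_closedBall 0 1) fun y hy => k2_zero (by
    simp only [Metric.mem_closedBall, dist_zero_right, not_le] at hy; exact hy.le)
lemma k3_supp : HasCompactSupport k3 :=
  HasCompactSupport.intro (isCompact_closedBall 0 1) fun y hy => k3_zero (by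
    simp only [Metric.mem_closedBall, dist_zero_right, not_le] at hy; exact hy.le)

lemma k2_int : Integrable k2 := k2_cont.integrable_of_hasCompactSupport k2_supp
lemma k3_int : Integrable k3 := k3_cont.integrable_of_hasCompactSupport k3_supp

lemma int_pos_of {f : E3 → ℝ} (hf : Continuous f) (hi : Integrable f) (h0 : ∀ x, 0 ≤ f x) {x : E3} (hx : f x ≠ 0) :
    0 < ∫ y, f y := by
  exact integral_pos_of_integrable_nonneg_nonzero hf hi h0 hx

lemma k2_pos : 0 < ∫ y, k2 y := int_pos_of k2_cont k2_int k2_nonneg (x := 0) (by simp [k2])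
lemma k3_pos : 0 < ∫ y, k3 y := int_pos_of k3_cont k3_int k3_nonneg (x := 0) (by simp [k3])

lemma k2_mul_int {g : E3 → ℝ} (hg : Continuous g) : Integrable (fun y => k2 y * g y) :=
  (k2_cont.mul hg).integrable_of_hasCompactSupport k2_supp.mul_right
lemma k3_mul_int {g : E3 → ℝ} (hg : Continuous g) : Integrable (fun y => k3 y * g y) :=
  (k3_cont.mul hg).integrable_of_hasCompactSupport k3_supp.mul_right

lemma hasDerivAt_max_cube (s : ℝ) : HasDerivAt (fun s : ℝ => (max s 0) ^ 3) (3 * (max s 0) ^ 2) s := by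
  refine hasDerivAt_of_hasDerivAt_of_ne' (g := fun s => 3 * (max s 0) ^ 2) (x := 0) (fun y hy => ?_)
    (by fun_prop) (by fun_prop) s
  rcases lt_or_gt_of_ne hy with h | h
  · have : (fun s : ℝ => (max s 0) ^ 3) =ᶠ[𝓝 y] fun _ => 0 := by
      filter_upwards [Iio_mem_nhds h] with t ht
      rw [max_eq_right (le_of_lt ht)]; norm_num
    simp only [max_eq_right h.le]
    norm_num
    exact (hasDerivAt_const y (0 : ℝ)).congr_of_eventuallyEq this
  · have : (fun s : ℝ => (max s 0) ^ 3) =ᶠ[𝓝 y] fun s => s ^ 3 := by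
      filter_upwards [Ioi_mem_nhds h] with t ht
      rw [max_eq_left (le_of_lt ht)]
    simp only [max_eq_left h.le]
    simpa using (hasDerivAt_pow 3 y).congr_of_eventuallyEq this

lemma hasFDerivAt_k3 (y : E3) : HasFDerivAt k3 ((-6 * k2 y) • innerSL ℝ y) y := by
  have h1 : HasFDerivAt (fun y : E3 => 1 - ‖y‖ ^ 2) (-(2 • innerSL ℝ y)) y := by
    have := (hasStrictFDerivAt_norm_sq y).hasFDerivAt.const_sub 1
    simpa using this
  have h2 := (hasDerivAt_max_cube (1 - ‖y‖ ^ 2)).comp_hasFDerivAt y h1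
  refine h2.congr_fderiv ?_
  ext z
  simp [k2]
  ring

/-- Differentiating the averages of `g` in the radius. -/
lemma mean_hasDerivAt {g : E3 → ℝ} (hg : ContDiff ℝ 1 g) (x : E3) (r : ℝ) :
    HasDerivAt (fun r : ℝ => ∫ y, k2 y * g (x + r • y)) (∫ y, k2 y * fderiv ℝ g (x + r • y) y) r := by
  have hc := hg.continuous
  have hc' : Continuous (fderiv ℝ g) := hg.continuous_fderiv (by norm_num)
  obtain ⟨B, hB⟩ := (isCompact_closedBall x (|r| + 1)).exists_bound_of_continuousOn hc'.continuousOn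
  refine (hasDerivAt_integral_of_dominated_loc_of_deriv_le (F := fun r y => k2 y * g (x + r • y))
    (F' := fun r y => k2 y * fderiv ℝ g (x + r • y) y) (bound := fun y => k2 y * B)
    (Metric.ball_mem_nhds r one_pos) (Eventually.of_forall fun s => ?_) (k2_mul_int (by fun_prop)) ?_
    (Eventually.of_forall fun y => ?_) (k2_int.mul_const B) (Eventually.of_forall fun y => ?_)).2
  · exact (k2_cont.mul (by fun_prop)).aestronglyMeasurable
  · exact (k2_cont.mul ((hc'.comp (by fun_prop)).clm_apply continuous_id)).aestronglyMeasurable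
  · intro s hs
    rw [norm_mul, Real.norm_of_nonneg (k2_nonneg y)]
    rcases le_total 1 ‖y‖ with h | h
    · simp [k2_zero h]
    · refine mul_le_mul_of_nonneg_left ?_ (k2_nonneg y)
      have hs' : |s| ≤ |r| + 1 := by
        rw [Metric.mem_ball, Real.dist_eq] at hs
        have := abs_add_le (s - r) r
        rw [sub_add_cancel] at this
        linarith
      have h1 := hB (x + s • y) (by
        rw [Metric.mem_closedBall, dist_self_add_left, norm_smul, Real.norm_eq_abs]
        nlinarith [norm_nonneg y, abs_nonneg s])
      refine (ContinuousLinearMap.le_opNorm _ _).trans ?_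
      nlinarith [norm_nonneg y, norm_nonneg (fderiv ℝ g (x + s • y))]
  · intro s _
    have h1 : HasDerivAt (fun s : ℝ => x + s • y) y s := by
      simpa using ((hasDerivAt_id s).smul_const y).const_add x
    exact (((hg.differentiable (by norm_num) (x + s • y)).hasFDerivAt.comp_hasDerivAt s h1)).const_mul (k2 y)

/-- The divergence theorem, applied with `∇k3 = -6 y k2`. -/
lemma mean_ibp {g : E3 → ℝ} (hg : ContDiff ℝ 2 g) (x : E3) (r : ℝ) :
    ∫ y, k2 y * fderiv ℝ g (x + r • y) y = r / 6 * ∫ y, k3 y * lap3 g (x + r • y) := by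
  have hg1 : ContDiff ℝ 1 (fderiv ℝ g) := hg.fderiv_right (by norm_num)
  have hG : ∀ i : Fin 3, ContDiff ℝ 1 (fun z => fderiv ℝ g z (EuclideanSpace.single i 1)) :=
    fun i => hg1.clm_apply contDiff_const
  have hGc : ∀ i : Fin 3, Continuous (fun z => fderiv ℝ (fun z => fderiv ℝ g z (EuclideanSpace.single i 1)) z
      (EuclideanSpace.single i 1)) :=
    fun i => ((hG i).continuous_fderiv (by norm_num)).clm_apply continuous_const
  have hk : ∀ (i : Fin 3) y, fderiv ℝ k3 y (EuclideanSpace.single i 1) = -6 * k2 y * y i := by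
    intro i y
    rw [(hasFDerivAt_k3 y).fderiv]
    simp [EuclideanSpace.inner_single_right]
  have hcomp : ∀ i : Fin 3, ∫ y, k2 y * (y i * fderiv ℝ g (x + r • y) (EuclideanSpace.single i 1))
      = r / 6 * ∫ y, k3 y * fderiv ℝ (fun z => fderiv ℝ g z (EuclideanSpace.single i 1)) (x + r • y)
        (EuclideanSpace.single i 1) := by
    intro i
    have hGi := hG i
    have hGci := hGc i
    have hki := hk i
    clear hG hGc hk
    generalize EuclideanSpace.single i (1 : ℝ) = e at *
    have hd : ∀ y, fderiv ℝ (fun y => fderiv ℝ g (x + r • y) e) y e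
        = r * fderiv ℝ (fun z => fderiv ℝ g z e) (x + r • y) e := by
      intro y
      have h1 : HasFDerivAt (fun y : E3 => x + r • y) (r • ContinuousLinearMap.id ℝ E3) y :=
        ((hasFDerivAt_id y).const_smul r).const_add x
      have h2 := (hGi.differentiable (by norm_num) (x + r • y)).hasFDerivAt.comp y h1
      have h3 : fderiv ℝ (fun y => fderiv ℝ g (x + r • y) e) y = _ := h2.fderiv
      rw [h3]
      simp
    have hdiff : Differentiable ℝ (fun y => fderiv ℝ g (x + r • y) e) := by
      have := hGi.differentiable (by norm_num)
      exact this.comp (by fun_prop)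
    have c1 : Continuous (fun y : E3 => fderiv ℝ g (x + r • y) e) := hdiff.continuous
    have key := integral_mul_fderiv_eq_neg_fderiv_mul_of_integrable (μ := (volume : Measure E3))
      (f := k3) (g := fun y => fderiv ℝ g (x + r • y) e) (v := e) ?_ ?_ (k3_mul_int c1)
      (fun y _ => (hasFDerivAt_k3 y).differentiableAt) (fun y _ => hdiff y)
    · simp_rw [hd, hki] at key
      have e1 : ∀ y : E3, -6 * k2 y * y i * fderiv ℝ g (x + r • y) e
          = -6 * (k2 y * (y i * fderiv ℝ g (x + r • y) e)) := fun y => by ring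
      have e2 : ∀ y : E3, k3 y * (r * fderiv ℝ (fun z => fderiv ℝ g z e) (x + r • y) e)
          = r * (k3 y * fderiv ℝ (fun z => fderiv ℝ g z e) (x + r • y) e) := fun y => by ring
      simp_rw [e1, e2] at key
      rw [integral_const_mul, integral_const_mul] at key
      linarith
    · simp_rw [hki]
      have := (k2_mul_int (g := fun y : E3 => y i * fderiv ℝ g (x + r • y) e) (by fun_prop)).const_mul (-6)
      refine this.congr (Eventually.of_forall fun y => ?_)
      beta_reduce
      ring
    · simp_rw [hd]
      exact k3_mul_int (continuous_const.mul (hGci.comp (by fun_prop)))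
  have hs : ∀ y : E3, k2 y * fderiv ℝ g (x + r • y) y
      = ∑ i : Fin 3, k2 y * (y i * fderiv ℝ g (x + r • y) (EuclideanSpace.single i 1)) := by
    intro y
    rw [← Finset.mul_sum]
    congr 1
    generalize fderiv ℝ g (x + r • y) = L
    conv_lhs => rw [← (EuclideanSpace.basisFun (Fin 3) ℝ).sum_repr y]
    simp
  have hc1 : ∀ i : Fin 3, Continuous (fun y : E3 => fderiv ℝ g (x + r • y) (EuclideanSpace.single i 1)) :=
    fun i => (hG i).continuous.comp (by fun_prop)
  simp_rw [hs]
  rw [integral_finsetSum _ (fun i _ => k2_mul_int (by have := hc1 i; fun_prop))]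
  simp_rw [hcomp, lap3, Finset.mul_sum]
  have hc2 : ∀ i : Fin 3, Continuous (fun y : E3 => fderiv ℝ (fun z => fderiv ℝ g z
      (EuclideanSpace.single i 1)) (x + r • y) (EuclideanSpace.single i 1)) :=
    fun i => (hGc i).comp (by fun_prop : Continuous fun y : E3 => x + r • y)
  rw [integral_finsetSum _ (fun i _ => k3_mul_int (hc2 i)), Finset.mul_sum]

/-- The measure `dr dy` on `(0, R] × ℝ³`. -/
def muR (R : ℝ) : Measure (ℝ × E3) := (volume.restrict (Set.Ioc 0 R)).prod volume

/-- The weight `(r/6) (1 - ‖y‖²)₊³` of the mean value formula. -/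
def wk (q : ℝ × E3) : ℝ := q.1 / 6 * k3 q.2

instance (R : ℝ) : SFinite (muR R) := by unfold muR; infer_instance

lemma wk_cont : Continuous wk := by
  unfold wk
  have := k3_cont
  fun_prop

lemma wk_int {R : ℝ} {G : ℝ × E3 → ℝ} (hG : Continuous G) : Integrable (fun q => wk q * G q) (muR R) := by
  have hsupp : HasCompactSupport (fun q : ℝ × E3 => wk q * G q * (if q.1 ∈ Set.Icc 0 R then 1 else 0)) := by
    refine HasCompactSupport.intro (isCompact_Icc (a := 0) (b := R) |>.prod (isCompact_closedBall (0 : E3) 1)) ?_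
    intro q hq
    by_cases h : q.1 ∈ Set.Icc 0 R
    · have : q.2 ∉ Metric.closedBall (0 : E3) 1 := fun h2 => hq ⟨h, h2⟩
      simp only [Metric.mem_closedBall, dist_zero_right, not_le] at this
      simp [wk, k3_zero this.le]
    · simp [h]
  have hK : IsCompact (Set.Icc 0 R ×ˢ Metric.closedBall (0 : E3) 1) :=
    isCompact_Icc.prod (isCompact_closedBall (0 : E3) 1)
  have h1 : IntegrableOn (fun q => wk q * G q) (Set.Icc 0 R ×ˢ Metric.closedBall (0 : E3) 1)
      ((volume : Measure ℝ).prod (volume : Measure E3)) :=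
    (wk_cont.mul hG).continuousOn.integrableOn_compact hK
  have h2 : muR R = ((volume : Measure ℝ).prod (volume : Measure E3)).restrict (Set.Ioc 0 R ×ˢ Set.univ) := by
    rw [← Measure.prod_restrict, Measure.restrict_univ]; rfl
  rw [h2]
  have h3 : IntegrableOn (fun q => wk q * G q) (Set.Ioc 0 R ×ˢ Metric.closedBall (0 : E3) 1)
      ((volume : Measure ℝ).prod (volume : Measure E3)) :=
    h1.mono_set (Set.prod_mono Set.Ioc_subset_Icc_self le_rfl)
  refine h3.of_forall_sdiff_eq_zero (measurableSet_Ioc.prod MeasurableSet.univ) ?_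
  rintro q ⟨hq1, hq2⟩
  have : q.2 ∉ Metric.closedBall (0 : E3) 1 := fun h => hq2 ⟨hq1.1, h⟩
  simp only [Metric.mem_closedBall, dist_zero_right, not_le] at this
  simp [wk, k3_zero this.le]

/-- The mean value formula with remainder. -/
lemma mean_formula {g : E3 → ℝ} (hg : ContDiff ℝ 2 g) (hl : Continuous (lap3 g)) (x : E3) {R : ℝ} (hR : 0 ≤ R) :
    (∫ y, k2 y * g (x + R • y)) - (∫ y, k2 y) * g x
      = ∫ q, wk q * lap3 g (x + q.1 • q.2) ∂(muR R) := by
  have hi : Integrable (fun q : ℝ × E3 => wk q * lap3 g (x + q.1 • q.2)) (muR R) :=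
    wk_int (hl.comp (by fun_prop))
  unfold muR at hi ⊢
  rw [integral_prod _ hi, ← intervalIntegral.integral_of_le hR]
  have hd : ∀ r : ℝ, HasDerivAt (fun r : ℝ => ∫ y, k2 y * g (x + r • y))
      (∫ y, wk (r, y) * lap3 g (x + r • y)) r := by
    intro r
    have := mean_hasDerivAt (hg.of_le (by norm_num)) x r
    rw [mean_ibp hg, ← integral_const_mul] at this
    simpa only [wk, mul_assoc] using this
  have h2 := intervalIntegral.integral_eq_sub_of_hasDerivAt (a := 0) (b := R) (fun r _ => hd r)
    ((intervalIntegrable_iff_integrableOn_Ioc_of_le hR).2 hi.integral_prod_left)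
  rw [h2]
  simp [integral_mul_const]

/-! ### Averages of the logarithm -/

/-- The regularised logarithm `log (t² + ‖x‖²) / 2`. -/
def qlog (t : ℝ) (x : E3) : ℝ := Real.log (t ^ 2 + ‖x‖ ^ 2) / 2

/-- The Laplacian of the regularised logarithm. -/
def lker (t : ℝ) (x : E3) : ℝ := rker t x + 2 * t ^ 2 * rker t x ^ 2

lemma contDiff_qlog {t : ℝ} (ht : 0 < t) : ContDiff ℝ 2 (qlog t) := by
  unfold qlog
  have h1 : ContDiff ℝ 2 (fun x : E3 => t ^ 2 + ‖x‖ ^ 2) := contDiff_const.add (contDiff_norm_sq ℝ)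
  exact (h1.log (fun x => by positivity)).div_const 2

lemma lker_cont {t : ℝ} (ht : 0 < t) : Continuous (lker t) := by
  unfold lker
  have := continuous_rker ht
  fun_prop

lemma lap_qlog {t : ℝ} (ht : 0 < t) : lap3 (qlog t) = lker t := by
  have hne : ∀ x : E3, t ^ 2 + ‖x‖ ^ 2 ≠ 0 := fun x => by positivity
  have h1 : ∀ x : E3, HasFDerivAt (fun x : E3 => t ^ 2 + ‖x‖ ^ 2) (2 • innerSL ℝ x) x := fun x =>
    (hasStrictFDerivAt_norm_sq x).hasFDerivAt.const_add _
  have h2 : ∀ (i : Fin 3) (x : E3), fderiv ℝ (qlog t) x (EuclideanSpace.single i 1) = rker t x * x i := by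
    intro i x
    have h3 := ((h1 x).log (hne x)).mul_const (1 / 2)
    have h4 : fderiv ℝ (qlog t) x = (1 / 2 : ℝ) • (t ^ 2 + ‖x‖ ^ 2)⁻¹ • 2 • innerSL ℝ x := by
      refine HasFDerivAt.fderiv (h3.congr_of_eventuallyEq (Eventually.of_forall fun x => ?_))
      simp [qlog, div_eq_mul_inv]
    rw [h4]
    simp [rker, EuclideanSpace.inner_single_right]
    ring
  have h5 : ∀ (i : Fin 3) (x : E3), fderiv ℝ (fun x : E3 => rker t x * x i) x (EuclideanSpace.single i 1)
      = rker t x - 2 * rker t x ^ 2 * (x i) ^ 2 := by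
    intro i x
    have h3 : HasFDerivAt (rker t) (-(rker t x ^ 2) • (2 • innerSL ℝ x)) x := by
      have := (hasDerivAt_inv (hne x)).comp_hasFDerivAt x (h1 x)
      refine this.congr_fderiv ?_
      simp [rker]
    have h4 : HasFDerivAt (fun x : E3 => x i) (EuclideanSpace.proj (𝕜 := ℝ) i) x :=
      (EuclideanSpace.proj (𝕜 := ℝ) i).hasFDerivAt
    have h6 := (h3.mul h4).fderiv
    have h7 : fderiv ℝ (fun x : E3 => rker t x * x i) x = _ := h6
    rw [h7]
    simp [EuclideanSpace.inner_single_right]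
    ring
  funext x
  unfold lap3
  simp_rw [h2, h5]
  have h6 : ‖x‖ ^ 2 = ∑ i, x i ^ 2 := by rw [EuclideanSpace.norm_sq_eq]; simp
  have h7 : rker t x * (t ^ 2 + ‖x‖ ^ 2) = 1 := inv_mul_cancel₀ (hne x)
  rw [h6] at h7
  rw [Fin.sum_univ_three] at h7 ⊢
  unfold lker
  linear_combination (-2 * rker t x) * h7

lemma lker_nonneg (t : ℝ) (x : E3) : 0 ≤ lker t x := by
  have := rker_nonneg t x
  unfold lker; positivity

lemma lker_le (t : ℝ) {x : E3} (hx : x ≠ 0) : lker t x ≤ 3 * rker 0 x := by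
  have h1 := rker_le_zero t hx
  have h2 := rker_nonneg t x
  have h3 : t ^ 2 * rker t x ≤ 1 := by
    unfold rker
    have := norm_pos_iff.2 hx
    rw [← div_eq_mul_inv, div_le_one (by positivity)]
    nlinarith
  unfold lker
  nlinarith

lemma lker_tendsto {x : E3} (hx : x ≠ 0) :
    Tendsto (fun n : ℕ => lker (1 / ((n : ℝ) + 1)) x) atTop (𝓝 (rker 0 x)) := by
  have h1 := (tendsto_rker x hx).comp tendsto_seq
  have h2 : Tendsto (fun n : ℕ => (1 : ℝ) / (n + 1)) atTop (𝓝 0) := tendsto_one_div_add_atTop_nhds_zero_nat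
  have := h1.add (((h2.pow 2).const_mul 2).mul (h1.pow 2))
  simpa [lker, Function.comp_def] using this

lemma qlog_sub_le {t : ℝ} (ht : 0 < t) {b : E3} (hb : b ≠ 0) (x : E3) :
    qlog t (b + x) - qlog t b ≤ Real.log (1 + ‖x‖ / ‖b‖) := by
  have hb' := norm_pos_iff.2 hb
  have h1 : t ^ 2 + ‖b + x‖ ^ 2 ≤ (t ^ 2 + ‖b‖ ^ 2) * (1 + ‖x‖ / ‖b‖) ^ 2 := by
    have h2 : ‖b + x‖ ≤ ‖b‖ * (1 + ‖x‖ / ‖b‖) := by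
      have : ‖b‖ * (1 + ‖x‖ / ‖b‖) = ‖b‖ + ‖x‖ := by field_simp
      rw [this]; exact norm_add_le _ _
    have h3 := pow_le_pow_left₀ (norm_nonneg _) h2 2
    have h4 : 1 ≤ (1 + ‖x‖ / ‖b‖) ^ 2 := one_le_pow₀ (by
      have : 0 ≤ ‖x‖ / ‖b‖ := by positivity
      linarith)
    have h5 := sq_nonneg t
    nlinarith
  have h2 := Real.log_le_log (by positivity) h1
  rw [Real.log_mul (by positivity) (by positivity), Real.log_pow] at h2
  unfold qlog
  push_cast at h2
  linarith

lemma qlog_sub_le' {t : ℝ} (ht : 0 < t) {b : E3} (hb : b ≠ 0) (x : E3) :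
    qlog t (b + x) - qlog t b ≤ ‖x‖ * (1 / ‖b‖) := by
  refine (qlog_sub_le ht hb x).trans ?_
  have : 0 ≤ ‖x‖ / ‖b‖ := by positivity
  have := Real.log_le_sub_one_of_pos (by linarith : 0 < 1 + ‖x‖ / ‖b‖)
  rw [mul_one_div]
  linarith

lemma ae_add_smul_ne (b : E3) {R : ℝ} (hR : R ≠ 0) : ∀ᵐ y : E3, b + R • y ≠ 0 := by
  have : ∀ᵐ y : E3, y ≠ -(R⁻¹ • b) := by simp [ae_iff, measure_singleton]
  filter_upwards [this] with y hy h
  apply hy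
  rw [eq_neg_iff_add_eq_zero, ← smul_right_injective E3 hR |>.eq_iff]
  simp only [smul_add, smul_zero, smul_inv_smul₀ hR]
  rw [add_comm]; exact h

/-- The universal constant bounding averages of `1/‖·‖`. -/
def Kc : ℝ := (∫ y, k2 y) + ∫ w in Metric.ball (0 : E3) 1, 1 / ‖w‖

lemma Kc_nonneg : 0 ≤ Kc := add_nonneg k2_pos.le (setIntegral_nonneg measurableSet_ball fun w _ => by positivity)

lemma k2_inv_int (b : E3) {R : ℝ} (hR : 0 < R) : Integrable (fun y => k2 y * (1 / ‖b + R • y‖)) ∧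
    ∫ y, k2 y * (1 / ‖b + R • y‖) ≤ Kc / R := by
  have i1 := (integrable_indicator_iff (measurableSet_ball (x := (0 : E3)) (ε := 1))).2 (integrableOn_ball_inv 1)
  have i2 := i1.comp_add_left (R⁻¹ • b)
  have hdom : ∀ y, k2 y * (1 / ‖b + R • y‖) ≤ R⁻¹ * (k2 y +
      (Metric.ball (0 : E3) 1).indicator (fun x => 1 / ‖x‖) (R⁻¹ • b + y)) := by
    intro y
    have e : ‖b + R • y‖ = R * ‖R⁻¹ • b + y‖ := by
      rw [← Real.norm_of_nonneg hR.le, ← norm_smul, smul_add, Real.norm_of_nonneg hR.le, smul_inv_smul₀ hR.ne']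
    rw [e, one_div, mul_inv, mul_left_comm]
    refine mul_le_mul_of_nonneg_left ?_ (by positivity)
    have h2 := k2_nonneg y
    have h3 := k2_le_one y
    by_cases hm : R⁻¹ • b + y ∈ Metric.ball (0 : E3) 1
    · rw [Set.indicator_of_mem hm, one_div]
      have : 0 ≤ ‖R⁻¹ • b + y‖⁻¹ := by positivity
      nlinarith
    · rw [Set.indicator_of_notMem hm, add_zero]
      rw [mem_ball_zero_iff, not_lt] at hm
      exact mul_le_of_le_one_right h2 (inv_le_one_of_one_le₀ hm)
  have hi : Integrable (fun y => R⁻¹ * (k2 y +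
      (Metric.ball (0 : E3) 1).indicator (fun x => 1 / ‖x‖) (R⁻¹ • b + y))) := (k2_int.add i2).const_mul _
  have hi2 : Integrable (fun y => k2 y * (1 / ‖b + R • y‖)) := by
    refine hi.mono' (k2_cont.measurable.mul (measurable_const.div (by fun_prop))).aestronglyMeasurable
      (Eventually.of_forall fun y => ?_)
    rw [Real.norm_of_nonneg (mul_nonneg (k2_nonneg y) (by positivity))]
    exact hdom y
  refine ⟨hi2, (integral_mono hi2 hi hdom).trans (le_of_eq ?_)⟩
  rw [integral_const_mul, integral_add k2_int i2, integral_add_left_eq_self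
    (fun y => (Metric.ball (0 : E3) 1).indicator (fun x => 1 / ‖x‖) y), integral_indicator measurableSet_ball,
    Kc, div_eq_inv_mul]

lemma qlog_mean_diff {t : ℝ} (ht : 0 < t) (b x : E3) {R : ℝ} (hR : 0 < R) :
    (∫ y, k2 y * qlog t (b + x + R • y)) - ∫ y, k2 y * qlog t (b + R • y) ≤ ‖x‖ * (Kc / R) := by
  have hc := (contDiff_qlog ht).continuous
  obtain ⟨i1, i2⟩ := k2_inv_int b hR
  rw [← integral_sub (k2_mul_int (by fun_prop)) (k2_mul_int (by fun_prop))]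
  refine le_trans ?_ (mul_le_mul_of_nonneg_left i2 (norm_nonneg x))
  rw [← integral_const_mul]
  refine integral_mono_ae ((k2_mul_int (by fun_prop)).sub (k2_mul_int (by fun_prop))) (i1.const_mul _) ?_
  filter_upwards [ae_add_smul_ne b hR.ne'] with y hy
  have := qlog_sub_le' ht hy x
  rw [add_right_comm, ← mul_sub, mul_left_comm]
  exact mul_le_mul_of_nonneg_left this (k2_nonneg y)

/-- The average over scales up to `R` of the kernel `1/‖·‖²` around `a`. -/
def ER (R : ℝ) (a : E3) : ℝ := ∫ q, wk q * rker 0 (a + q.1 • q.2) ∂(muR R)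

lemma wk_nonneg_ae (R : ℝ) : ∀ᵐ q ∂(muR R), 0 < q.1 ∧ 0 ≤ wk q := by
  have h : muR R = ((volume : Measure ℝ).prod (volume : Measure E3)).restrict (Set.Ioc 0 R ×ˢ Set.univ) := by
    rw [← Measure.prod_restrict, Measure.restrict_univ]; rfl
  rw [h]
  refine (ae_restrict_iff' (measurableSet_Ioc.prod MeasurableSet.univ)).2 (Eventually.of_forall fun q hq => ?_)
  have h1 : 0 < q.1 := hq.1.1
  exact ⟨h1, mul_nonneg (by positivity) (k3_nonneg _)⟩

lemma ae_muR_ne (R : ℝ) (a : E3) : ∀ᵐ q ∂(muR R), a + q.1 • q.2 ≠ 0 := by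
  unfold muR
  have hm : MeasurableSet {q : ℝ × E3 | a + q.1 • q.2 ≠ 0} := by
    apply IsOpen.measurableSet
    exact isOpen_ne_fun (by fun_prop) continuous_const
  refine (Measure.ae_prod_iff_ae_ae hm).2 ?_
  filter_upwards [ae_restrict_mem measurableSet_Ioc] with r hr
  exact ae_add_smul_ne a hr.1.ne'

lemma qlog_mean {t : ℝ} (ht : 0 < t) (a : E3) {R : ℝ} (hR : 0 ≤ R) :
    ∫ q, wk q * lker t (a + q.1 • q.2) ∂(muR R)
      = (∫ y, k2 y * qlog t (a + R • y)) - (∫ y, k2 y) * qlog t a := by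
  rw [mean_formula (contDiff_qlog ht) (by rw [lap_qlog ht]; exact lker_cont ht) a hR, lap_qlog ht]

lemma qlog_mean_le {t : ℝ} (ht : 0 < t) {a : E3} (ha : a ≠ 0) {R : ℝ} (hR : 0 ≤ R) :
    ∫ q, wk q * lker t (a + q.1 • q.2) ∂(muR R) ≤ (∫ y, k2 y) * Real.log (1 + R / ‖a‖) := by
  have hc := (contDiff_qlog ht).continuous
  rw [qlog_mean ht a hR, ← integral_mul_const, ← integral_mul_const,
    ← integral_sub (k2_mul_int (by fun_prop)) (k2_int.mul_const _)]
  refine integral_mono ((k2_mul_int (by fun_prop)).sub (k2_int.mul_const _)) (k2_int.mul_const _) fun y => ?_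
  beta_reduce
  rw [← mul_sub]
  rcases le_total 1 ‖y‖ with h | h
  · simp [k2_zero h]
  · refine mul_le_mul_of_nonneg_left ((qlog_sub_le ht ha _).trans ?_) (k2_nonneg y)
    have : ‖R • y‖ ≤ R := by
      rw [norm_smul, Real.norm_of_nonneg hR]; exact mul_le_of_le_one_right hR h
    have h0 : 0 ≤ ‖R • y‖ / ‖a‖ := by positivity
    apply Real.log_le_log (by linarith)
    gcongr

lemma wk_rker_int {a : E3} (ha : a ≠ 0) {R : ℝ} (hR : 0 ≤ R) :
    Integrable (fun q => wk q * rker 0 (a + q.1 • q.2)) (muR R) := by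
  refine integrable_of_fatou (F := fun n q => wk q * lker (1 / ((n : ℝ) + 1)) (a + q.1 • q.2))
    (B := (∫ y, k2 y) * Real.log (1 + R / ‖a‖)) (fun n => ?_) (fun n => ?_) ?_ (fun n => ?_)
  · exact wk_int ((lker_cont (by positivity)).comp (by fun_prop))
  · filter_upwards [wk_nonneg_ae R] with q hq
    exact mul_nonneg hq.2 (lker_nonneg _ _)
  · filter_upwards [ae_muR_ne R a] with q hq
    exact (lker_tendsto hq).const_mul _
  · exact qlog_mean_le (by positivity) ha hR

lemma ER_tendsto {a : E3} (ha : a ≠ 0) {R : ℝ} (hR : 0 ≤ R) :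
    Tendsto (fun n : ℕ => ∫ q, wk q * lker (1 / ((n : ℝ) + 1)) (a + q.1 • q.2) ∂(muR R)) atTop (𝓝 (ER R a)) := by
  refine tendsto_integral_of_dominated_convergence (fun q => 3 * (wk q * rker 0 (a + q.1 • q.2)))
    (fun n => ?_) ((wk_rker_int ha hR).const_mul 3) (fun n => ?_) ?_
  · exact (wk_int ((lker_cont (by positivity)).comp (by fun_prop))).1
  · filter_upwards [wk_nonneg_ae R, ae_muR_ne R a] with q hq hq2
    rw [Real.norm_of_nonneg (mul_nonneg hq.2 (lker_nonneg _ _)), mul_left_comm]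
    exact mul_le_mul_of_nonneg_left (lker_le _ hq2) hq.2
  · filter_upwards [ae_muR_ne R a] with q hq
    exact (lker_tendsto hq).const_mul _

lemma ER_nonneg (R : ℝ) (a : E3) : 0 ≤ ER R a := by
  refine integral_nonneg_of_ae ?_
  filter_upwards [wk_nonneg_ae R] with q hq
  exact mul_nonneg hq.2 (rker_nonneg _ _)

lemma ER_le {a : E3} (ha : a ≠ 0) {R : ℝ} (hR : 0 ≤ R) : ER R a ≤ (∫ y, k2 y) * Real.log (1 + R / ‖a‖) :=
  le_of_tendsto' (ER_tendsto ha hR) fun _ => qlog_mean_le (by positivity) ha hR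

lemma ER_le_sqrt {a : E3} (ha : a ≠ 0) {R : ℝ} (hR : 0 ≤ R) :
    ER R a ≤ (∫ y, k2 y) * (2 * √R) * (1 + 1 / ‖a‖ ^ 2) := by
  refine (ER_le ha hR).trans ?_
  rw [mul_assoc]
  refine mul_le_mul_of_nonneg_left ?_ k2_pos.le
  have hp := norm_pos_iff.2 ha
  have h0 : 0 ≤ R / ‖a‖ := by positivity
  have h1 : Real.log (1 + R / ‖a‖) ≤ 2 * √(R / ‖a‖) := by
    have h2 : 1 + R / ‖a‖ ≤ (1 + √(R / ‖a‖)) ^ 2 := by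
      nlinarith [Real.sq_sqrt h0, Real.sqrt_nonneg (R / ‖a‖)]
    have h3 := Real.log_le_log (by linarith) h2
    rw [Real.log_pow] at h3
    have h4 := Real.log_le_sub_one_of_pos (by positivity : 0 < 1 + √(R / ‖a‖))
    push_cast at h3
    linarith
  refine h1.trans ?_
  rw [div_eq_mul_inv, Real.sqrt_mul hR, mul_assoc]
  have h5 : √‖a‖⁻¹ ≤ 1 + 1 / ‖a‖ ^ 2 := by
    rw [Real.sqrt_le_left (by positivity), one_div, ← inv_pow]
    have : 0 < ‖a‖⁻¹ := by positivity
    nlinarith [sq_nonneg (‖a‖⁻¹ - 1), pow_pos this 2, pow_pos this 4]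
  gcongr

lemma qlog_tendsto {a : E3} (ha : a ≠ 0) :
    Tendsto (fun n : ℕ => qlog (1 / ((n : ℝ) + 1)) a) atTop (𝓝 (Real.log ‖a‖)) := by
  have h2 : Tendsto (fun n : ℕ => (1 : ℝ) / (n + 1)) atTop (𝓝 0) := tendsto_one_div_add_atTop_nhds_zero_nat
  have hp := norm_pos_iff.2 ha
  have h3 := ((h2.pow 2).add_const (‖a‖ ^ 2)).log (by positivity)
  have h4 := h3.div_const 2
  have e : Real.log (0 ^ 2 + ‖a‖ ^ 2) / 2 = Real.log ‖a‖ := by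
    rw [zero_pow two_ne_zero, zero_add, Real.log_pow]; push_cast; ring
  rw [e] at h4
  exact h4

/-- `ER R` behaves like a constant minus `(∫ k2) log ‖·‖` for large `R`. -/
lemma ER_diff {a b : E3} (ha : a ≠ 0) (hb : b ≠ 0) {R : ℝ} (hR : 0 < R) :
    ER R a - ER R b ≤ (∫ y, k2 y) * (Real.log ‖b‖ - Real.log ‖a‖) + ‖a - b‖ * (Kc / R) := by
  have h1 := (ER_tendsto ha hR.le).sub (ER_tendsto hb hR.le)
  have h2 := (((qlog_tendsto hb).sub (qlog_tendsto ha)).const_mul (∫ y, k2 y)).add_const (‖a - b‖ * (Kc / R))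
  refine le_of_tendsto_of_tendsto' h1 h2 fun n => ?_
  rw [qlog_mean (by positivity) a hR.le, qlog_mean (by positivity) b hR.le]
  have := qlog_mean_diff (t := 1 / ((n : ℝ) + 1)) (by positivity) b (a - b) hR
  rw [add_sub_cancel] at this
  linarith

/-! ### Comparison of `v` with the logarithmic potential -/

/-- `-Δv = l + κ ∫ P(y)/|·-y|² dy` with a nonnegative integrable density `P`. -/
structure Pot (v P : E3 → ℝ) (κ l : ℝ) : Prop where
  smooth : ContDiff ℝ 3 v
  pos : 0 < κ
  nonneg : ∀ y, 0 ≤ P y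
  meas : Measurable P
  int : Integrable P
  rint : ∀ x, Integrable (fun y => P y / ‖x - y‖ ^ 2)
  eq : ∀ x, -lap3 v x = l + κ * ∫ y, P y / ‖x - y‖ ^ 2

lemma integral_wk {R : ℝ} (hR : 0 ≤ R) : ∫ q, wk q ∂(muR R) = R ^ 2 / 12 * ∫ y, k3 y := by
  unfold wk muR
  rw [integral_prod_mul (fun r : ℝ => r / 6) k3, ← intervalIntegral.integral_of_le hR]
  congr 1
  rw [intervalIntegral.integral_div, integral_id]
  ring

/-- The mean value formula for `v`, with the remainder expressed through `ER`. -/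
lemma Pot.formula {v P : E3 → ℝ} {κ l : ℝ} (h : Pot v P κ l) (x : E3) {R : ℝ} (hR : 0 ≤ R) :
    Integrable (fun z => P z * ER R (x - z)) ∧
    (∫ y, k2 y * v (x + R • y)) - (∫ y, k2 y) * v x
      = -(l * (R ^ 2 / 12 * ∫ y, k3 y)) - κ * ∫ z, P z * ER R (x - z) := by
  have hlc : Continuous (lap3 v) := (contDiff_lap3 h.smooth).continuous
  set H : E3 → ℝ := fun x => ∫ y, P y / ‖x - y‖ ^ 2 with hH
  have hHeq : H = fun x => (-lap3 v x - l) / κ := by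
    funext x
    rw [h.eq x, add_sub_cancel_left, mul_div_cancel_left₀ _ h.pos.ne']
  have hHc : Continuous H := by rw [hHeq]; fun_prop
  have hHw : Integrable (fun q : ℝ × E3 => wk q * H (x + q.1 • q.2)) (muR R) :=
    wk_int (hHc.comp (by fun_prop))
  have hF : Integrable (Function.uncurry fun (q : ℝ × E3) (z : E3) =>
      wk q * (P z * rker 0 (x - z + q.1 • q.2))) ((muR R).prod volume) := by
    have hm : Measurable (Function.uncurry fun (q : ℝ × E3) (z : E3) =>
      wk q * (P z * rker 0 (x - z + q.1 • q.2))) := by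
      have h1 := wk_cont.measurable
      have h2 := h.meas
      have h3 := measurable_rker 0
      refine (h1.comp measurable_fst).mul ((h2.comp measurable_snd).mul (h3.comp ?_))
      fun_prop
    have e : ∀ (q : ℝ × E3) (z : E3), P z * rker 0 (x - z + q.1 • q.2) = P z / ‖x + q.1 • q.2 - z‖ ^ 2 := by
      intro q z
      rw [← add_sub_right_comm]
      simp [rker, div_eq_mul_inv]
    refine (integrable_prod_iff hm.aestronglyMeasurable).2 ⟨Eventually.of_forall fun q => ?_, ?_⟩
    · simp only [Function.uncurry_apply_pair, e]
      exact (h.rint _).const_mul _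
    · refine hHw.norm.congr (Eventually.of_forall fun q => ?_)
      simp only [Function.uncurry_apply_pair, e, norm_mul]
      rw [integral_const_mul, hH]
      congr 1
      rw [Real.norm_of_nonneg (integral_nonneg fun y => div_nonneg (h.nonneg y) (by positivity))]
      congr 1
      ext z
      rw [Real.norm_of_nonneg (div_nonneg (h.nonneg z) (by positivity))]
  have e3 : ∀ z, ∫ q, wk q * (P z * rker 0 (x - z + q.1 • q.2)) ∂(muR R) = P z * ER R (x - z) := by
    intro z
    rw [ER, ← integral_const_mul]
    congr 1; ext q; ring
  have hI : Integrable (fun z => P z * ER R (x - z)) := by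
    have := hF.integral_prod_right
    simpa only [Function.uncurry_apply_pair, e3] using this
  refine ⟨hI, ?_⟩
  rw [mean_formula (h.smooth.of_le (by norm_num)) hlc x hR]
  have e1 : ∀ q : ℝ × E3, wk q * lap3 v (x + q.1 • q.2) = -(wk q * l) - κ * (wk q * H (x + q.1 • q.2)) := by
    intro q
    have := h.eq (x + q.1 • q.2)
    have h2 : lap3 v (x + q.1 • q.2) = -l - κ * H (x + q.1 • q.2) := by rw [hH]; linarith
    rw [h2]; ring
  simp_rw [e1]
  have i1 : Integrable (fun q => -(wk q * l)) (muR R) :=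
    (wk_int (G := fun _ => l) continuous_const).neg
  rw [integral_sub i1 (hHw.const_mul κ), integral_neg,
    integral_mul_const, integral_const_mul, integral_wk hR]
  have e2 : ∫ q, wk q * H (x + q.1 • q.2) ∂(muR R) = ∫ z, P z * ER R (x - z) := by
    have hsw := integral_integral_swap hF
    simp_rw [e3] at hsw
    rw [← hsw]
    congr 1; ext q
    rw [integral_const_mul, hH]
    congr 1
    refine integral_congr_ae (Eventually.of_forall fun z => ?_)
    beta_reduce
    rw [← add_sub_right_comm]
    simp [rker, div_eq_mul_inv]
  rw [e2]
  ring

lemma Pot.ER_bound {v P : E3 → ℝ} {κ l : ℝ} (h : Pot v P κ l) : ∃ A, 0 ≤ A ∧ ∀ R, 0 ≤ R →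
    0 ≤ κ * ∫ z, P z * ER R (0 - z) ∧ κ * ∫ z, P z * ER R (0 - z) ≤ A * √R := by
  have i0 : Integrable (fun z => P z * (1 + 1 / ‖z‖ ^ 2)) := by
    refine (h.int.add (h.rint 0)).congr (Eventually.of_forall fun z => ?_)
    simp [mul_add, div_eq_mul_inv]
  refine ⟨κ * ((∫ y, k2 y) * 2 * ∫ z, P z * (1 + 1 / ‖z‖ ^ 2)), ?_, fun R hR => ⟨?_, ?_⟩⟩
  · have := h.pos
    have := k2_pos
    have : 0 ≤ ∫ z, P z * (1 + 1 / ‖z‖ ^ 2) :=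
      integral_nonneg fun z => mul_nonneg (h.nonneg z) (by positivity)
    positivity
  · exact mul_nonneg h.pos.le (integral_nonneg fun z => mul_nonneg (h.nonneg z) (ER_nonneg _ _))
  · rw [mul_assoc κ]
    refine mul_le_mul_of_nonneg_left ?_ h.pos.le
    have hb : ∫ z, P z * ER R (0 - z) ≤ ∫ z, ((∫ y, k2 y) * (2 * √R)) * (P z * (1 + 1 / ‖z‖ ^ 2)) := by
      refine integral_mono_ae (h.formula 0 hR).1 (i0.const_mul _) ?_
      filter_upwards [ae_ne_zero] with z hz
      have := ER_le_sqrt (a := 0 - z) (by simpa using hz) hR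
      rw [zero_sub, norm_neg] at this
      rw [zero_sub, mul_left_comm]
      exact mul_le_mul_of_nonneg_left this (h.nonneg z)
    refine hb.trans (le_of_eq ?_)
    rw [integral_const_mul]
    ring

/-- Subquadratic growth of `v` forces the constant in `-Δv` to vanish. -/
lemma Pot.l_zero {v P : E3 → ℝ} {κ l : ℝ} (h : Pot v P κ l)
    (hd : Tendsto (fun x : E3 => v x / ‖x‖ ^ 2) (cocompact E3) (𝓝 0)) : l = 0 := by
  by_contra hl
  obtain ⟨A, hA, hAR⟩ := h.ER_bound
  have hc := k2_pos
  set c := ∫ y, k2 y with hcdef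
  have hk := k3_pos
  -- A nonzero `l` contributes `2 m R ^ 2` to the averages of `v`, the potential contributes `O(√R)`,
  -- and `v = o(‖x‖ ^ 2)` bounds the averages by `m R ^ 2 + O(1)`.
  set m := |l| * (∫ y, k3 y) / 24 with hm
  have hm0 : 0 < m := by have := abs_pos.2 hl; positivity
  have hvc : Continuous v := h.smooth.continuous
  obtain ⟨C, hC0, hC⟩ : ∃ C, 0 ≤ C ∧ ∀ y, |v y| ≤ (m / c) * ‖y‖ ^ 2 + C := by
    have h1 : ∀ᶠ x : E3 in cocompact E3, |v x / ‖x‖ ^ 2| < m / c := by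
      have := hd.abs
      rw [abs_zero] at this
      exact this.eventually (gt_mem_nhds (by positivity))
    obtain ⟨r, hr⟩ := (Metric.mem_cocompact_iff_closedBall_compl_subset (0 : E3)).1 h1
    replace hr : ∀ y : E3, y ∈ (Metric.closedBall (0 : E3) r)ᶜ → |v y / ‖y‖ ^ 2| < m / c :=
      fun _ hy => hr hy
    obtain ⟨C, hC⟩ := (isCompact_closedBall (0 : E3) (max r 1)).exists_bound_of_continuousOn hvc.continuousOn
    have hC0 : 0 ≤ C := (norm_nonneg _).trans (hC 0 (by simp))
    refine ⟨C, hC0, fun y => ?_⟩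
    by_cases hy : y ∈ Metric.closedBall (0 : E3) (max r 1)
    · have := hC y hy
      rw [Real.norm_eq_abs] at this
      have h2 : 0 ≤ m / c * ‖y‖ ^ 2 := by positivity
      linarith
    · have hy' : max r 1 < ‖y‖ := by simpa using hy
      have hy1 : 1 < ‖y‖ := (le_max_right _ _).trans_lt hy'
      have h2 := hr y (show y ∈ (Metric.closedBall (0 : E3) r)ᶜ by
        simpa using (le_max_left r 1).trans_lt hy')
      rw [abs_div, abs_of_nonneg (by positivity : 0 ≤ ‖y‖ ^ 2), div_lt_iff₀ (by positivity)] at h2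
      linarith
  have key : ∀ R, 1 ≤ R → m * R ≤ A + c * |v 0| + c * C := by
    intro R hR
    have hR0 : 0 ≤ R := by linarith
    obtain ⟨-, hf⟩ := h.formula 0 hR0
    obtain ⟨hs0, hs1⟩ := hAR R hR0
    have hmr : |∫ y, k2 y * v (0 + R • y)| ≤ m * R ^ 2 + c * C := by
      have hb : ∀ y, ‖k2 y * v (0 + R • y)‖ ≤ k2 y * (m / c * R ^ 2 + C) := by
        intro y
        rw [norm_mul, Real.norm_of_nonneg (k2_nonneg y), zero_add]
        rcases le_total 1 ‖y‖ with hy | hy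
        · simp [k2_zero hy]
        · refine mul_le_mul_of_nonneg_left ((hC _).trans ?_) (k2_nonneg y)
          rw [norm_smul, Real.norm_of_nonneg hR0, mul_pow]
          have : ‖y‖ ^ 2 ≤ 1 := pow_le_one₀ (norm_nonneg y) hy
          have h2 : R ^ 2 * ‖y‖ ^ 2 ≤ R ^ 2 := mul_le_of_le_one_right (by positivity) this
          gcongr
      have := norm_integral_le_of_norm_le (k2_int.mul_const _) (Eventually.of_forall hb)
      rw [integral_mul_const, ← hcdef] at this
      refine this.trans (le_of_eq ?_)
      field_simp
    have h1 : √R ≤ R := by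
      rw [Real.sqrt_le_left hR0]; nlinarith
    have h2 : |l * (R ^ 2 / 12 * ∫ y, k3 y)| = 2 * m * R ^ 2 := by
      rw [abs_mul, abs_of_nonneg (by positivity : 0 ≤ R ^ 2 / 12 * ∫ y, k3 y), hm]; ring
    have h3 : |l * (R ^ 2 / 12 * ∫ y, k3 y)| ≤ |∫ y, k2 y * v (0 + R • y)| + c * |v 0|
        + κ * ∫ z, P z * ER R (0 - z) := by
      have e : l * (R ^ 2 / 12 * ∫ y, k3 y) = -(∫ y, k2 y * v (0 + R • y)) + c * v 0
        + -(κ * ∫ z, P z * ER R (0 - z)) := by linarith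
      rw [e]
      refine (abs_add_three _ _ _).trans ?_
      rw [abs_neg, abs_neg, abs_of_nonneg hs0, abs_mul, abs_of_pos hc]
    have h4 : A * √R ≤ A * R := mul_le_mul_of_nonneg_left h1 hA
    have h5 : m * R ^ 2 ≤ (A + c * |v 0| + c * C) * R := by
      have h6 : 0 ≤ c * |v 0| + c * C := by positivity
      nlinarith
    have : 0 < R := by linarith
    nlinarith
  have hB : 0 ≤ A + c * |v 0| + c * C := by positivity
  have := key ((A + c * |v 0| + c * C) / m + 1) (by
    have : 0 ≤ (A + c * |v 0| + c * C) / m := by positivity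
    linarith)
  rw [mul_add, mul_div_cancel₀ _ hm0.ne'] at this
  linarith

/-- Lipschitz bound for the weight; the dilated weight on the right is positive on both supports. -/
lemma k2_diff (y e : E3) (he : ‖e‖ ≤ 1) : |k2 (y - e) - k2 y| ≤ 20 * ‖e‖ * k2 ((1 / 4 : ℝ) • y) := by
  have h0 := k2_nonneg ((1 / 4 : ℝ) • y)
  have htri : |‖y - e‖ - ‖y‖| ≤ ‖e‖ := by
    have := abs_norm_sub_norm_le (y - e) y
    rwa [sub_sub_cancel_left, norm_neg] at this
  rcases le_total 2 ‖y‖ with hy | hy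
  · have a1 : k2 (y - e) = 0 := k2_zero (by have := (abs_le.1 htri).1; linarith)
    have a2 : k2 y = 0 := k2_zero (by linarith)
    rw [a1, a2, sub_zero, abs_zero]
    exact mul_nonneg (by positivity) h0
  · have h1 : 1 / 2 ≤ k2 ((1 / 4 : ℝ) • y) := by
      have h2 : 3 / 4 ≤ max (1 - ‖(1 / 4 : ℝ) • y‖ ^ 2) 0 := by
        refine le_max_of_le_left ?_
        rw [norm_smul, Real.norm_of_nonneg (by norm_num)]
        nlinarith [norm_nonneg y]
      unfold k2
      nlinarith
    have h3 : |max (1 - ‖y - e‖ ^ 2) 0 - max (1 - ‖y‖ ^ 2) 0| ≤ 5 * ‖e‖ := by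
      refine (abs_max_sub_max_le_abs _ _ _).trans ?_
      have : 1 - ‖y - e‖ ^ 2 - (1 - ‖y‖ ^ 2) = -((‖y - e‖ + ‖y‖) * (‖y - e‖ - ‖y‖)) := by ring
      rw [this, abs_neg, abs_mul, abs_of_nonneg (by positivity)]
      have h4 : ‖y - e‖ ≤ 3 := by have := (abs_le.1 htri).2; linarith
      exact mul_le_mul (by linarith) htri (abs_nonneg _) (by norm_num)
    have h5 : |k2 (y - e) - k2 y| ≤ 2 * (5 * ‖e‖) := by
      unfold k2
      rw [sq_sub_sq, abs_mul]
      have m1 := max_mem (y - e)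
      have m2 := max_mem y
      have n1 : 0 ≤ max (1 - ‖y - e‖ ^ 2) 0 := le_max_right _ _
      have n2 : 0 ≤ max (1 - ‖y‖ ^ 2) 0 := le_max_right _ _
      rw [abs_of_nonneg (add_nonneg n1 n2)]
      exact mul_le_mul (by linarith) h3 (abs_nonneg _) (by norm_num)
    nlinarith [norm_nonneg e]

/-- The averages of `|v|` over balls grow at most like the square root of the radius. -/
lemma Pot.abs_mean {v P : E3 → ℝ} {κ : ℝ} (h : Pot v P κ 0) {p : ℝ} (hp : 0 < p)
    (hW : Integrable (fun y => Real.exp (p * v y) / ‖(0 : E3) - y‖ ^ 2)) :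
    ∃ B, ∀ R, 1 ≤ R → ∫ y, k2 y * |v (R • y)| ≤ B * √R := by
  obtain ⟨A, hA, hAR⟩ := h.ER_bound
  have hvc : Continuous v := h.smooth.continuous
  set J := ∫ y, Real.exp (p * v y) / ‖y‖ ^ 2 with hJ
  have hW' : Integrable (fun y => Real.exp (p * v y) / ‖y‖ ^ 2) := by simpa using hW
  have hJ0 : 0 ≤ J := integral_nonneg fun y => by positivity
  have hc := k2_pos
  refine ⟨2 * (J / p) + (∫ y, k2 y) * |v 0| + A, fun R hR => ?_⟩
  have hR0 : 0 < R := by linarith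
  obtain ⟨-, hf⟩ := h.formula 0 hR0.le
  obtain ⟨hs0, hs1⟩ := hAR R hR0.le
  have hexp : ∫ y, k2 y * (Real.exp (p * v (R • y)) / p) ≤ J / p := by
    have hi := (hW'.comp_smul hR0.ne').const_mul (R ^ 2 / p)
    have hval := Measure.integral_comp_smul (volume : Measure E3) (fun y => Real.exp (p * v y) / ‖y‖ ^ 2) R
    have h1 : ∫ y, k2 y * (Real.exp (p * v (R • y)) / p)
        ≤ ∫ y, R ^ 2 / p * (Real.exp (p * v (R • y)) / ‖R • y‖ ^ 2) := by
      refine integral_mono_ae (k2_mul_int (by fun_prop)) hi ?_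
      filter_upwards [ae_ne_zero] with y hy
      have hy' := norm_pos_iff.2 hy
      have e : R ^ 2 / p * (Real.exp (p * v (R • y)) / ‖R • y‖ ^ 2)
          = (1 / ‖y‖ ^ 2) * (Real.exp (p * v (R • y)) / p) := by
        rw [norm_smul, Real.norm_of_nonneg hR0.le]; field_simp
      rw [e]
      refine mul_le_mul_of_nonneg_right ?_ (by positivity)
      rcases le_total 1 ‖y‖ with h1 | h1
      · rw [k2_zero h1]; positivity
      · refine (k2_le_one y).trans ?_
        rw [le_div_iff₀ (by positivity), one_mul]
        exact pow_le_one₀ hy'.le h1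
    refine h1.trans ?_
    rw [integral_const_mul, hval, ← hJ]
    simp only [finrank_euclideanSpace, Fintype.card_fin, smul_eq_mul]
    rw [abs_of_nonneg (by positivity)]
    have e : R ^ 2 / p * ((R ^ 3)⁻¹ * J) = (J / p) / R := by field_simp
    rw [e]
    exact div_le_self (by positivity) hR
  -- Since `v ≤ exp (p v) / p`, one has `|v| ≤ 2 exp (p v) / p - v`.
  have h2 : ∫ y, k2 y * |v (R • y)| ≤ 2 * (∫ y, k2 y * (Real.exp (p * v (R • y)) / p))
      - ∫ y, k2 y * v (0 + R • y) := by
    rw [← integral_const_mul, ← integral_sub ((k2_mul_int (by fun_prop)).const_mul 2) (k2_mul_int (by fun_prop))]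
    refine integral_mono (k2_mul_int (by fun_prop))
      (((k2_mul_int (by fun_prop)).const_mul 2).sub (k2_mul_int (by fun_prop))) fun y => ?_
    beta_reduce
    rw [zero_add, mul_left_comm, ← mul_sub]
    refine mul_le_mul_of_nonneg_left ?_ (k2_nonneg y)
    have h3 := Real.add_one_le_exp (p * v (R • y))
    have h4 : v (R • y) ≤ Real.exp (p * v (R • y)) / p := by
      rw [le_div_iff₀ hp]; linarith
    have h5 : 0 ≤ Real.exp (p * v (R • y)) / p := by positivity
    rcases abs_cases (v (R • y)) with ⟨h6, -⟩ | ⟨h6, -⟩ <;> rw [h6] <;> linarith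
  have h3 : 1 ≤ √R := Real.one_le_sqrt.2 hR
  have h4 : -((∫ y, k2 y) * |v 0|) ≤ (∫ y, k2 y) * v 0 := by
    have := mul_le_mul_of_nonneg_left (neg_abs_le (v 0)) hc.le
    linarith
  have h5 : 0 ≤ 2 * (J / p) + (∫ y, k2 y) * |v 0| := by positivity
  nlinarith

/-- Averages around different centres agree asymptotically. -/
lemma mean_center {v : E3 → ℝ} (hv : Continuous v) {B : ℝ}
    (hB : ∀ R, 1 ≤ R → ∫ y, k2 y * |v (R • y)| ≤ B * √R) (x : E3) {R : ℝ} (hR1 : 1 ≤ R) (hRx : ‖x‖ ≤ R) :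
    (∫ y, k2 y * v (x + R • y)) - ∫ y, k2 y * v (0 + R • y) ≤ 2560 * B * ‖x‖ / √R := by
  have hR : 0 < R := by linarith
  set e : E3 := R⁻¹ • x with he
  have hne : ‖e‖ = ‖x‖ / R := by
    rw [he, norm_smul, norm_inv, Real.norm_of_nonneg hR.le, div_eq_inv_mul]
  have he1 : ‖e‖ ≤ 1 := by rw [hne, div_le_one hR]; exact hRx
  -- Move the translation onto the weight, where `k2_diff` controls it.
  have h1 : ∫ y, k2 y * v (x + R • y) = ∫ y, k2 (y - e) * v (R • y) := by
    rw [← integral_sub_right_eq_self (fun y => k2 y * v (x + R • y)) e]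
    congr 1; ext y
    rw [smul_sub, he, smul_inv_smul₀ hR.ne', add_sub_cancel]
  have i1 : Integrable (fun y => k2 (y - e) * v (R • y)) := by
    have := (k2_mul_int (g := fun y => v (R • (y + e))) (by fun_prop)).comp_sub_right e
    simpa using this
  have i2 : Integrable (fun y => k2 y * v (0 + R • y)) := k2_mul_int (by fun_prop)
  have i3 : Integrable (fun y => k2 y * |v ((4 * R) • y)|) := k2_mul_int (by fun_prop)
  have i4 : Integrable (fun y => 20 * ‖e‖ * (k2 ((1 / 4 : ℝ) • y) * |v (R • y)|)) := by
    have := (i3.comp_smul (R := (1 / 4 : ℝ)) (by norm_num)).const_mul (20 * ‖e‖)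
    refine this.congr (Eventually.of_forall fun y => ?_)
    simp only [smul_smul]
    congr 5
    ring
  have hval := Measure.integral_comp_smul (volume : Measure E3) (fun y => k2 y * |v ((4 * R) • y)|) (1 / 4)
  have h4 : ∀ y : E3, (4 * R) • (1 / 4 : ℝ) • y = R • y := fun y => by rw [smul_smul]; congr 1; ring
  simp_rw [h4] at hval
  simp only [finrank_euclideanSpace, Fintype.card_fin, smul_eq_mul] at hval
  rw [h1, ← integral_sub i1 i2]
  have h2 : ∫ y, (k2 (y - e) * v (R • y) - k2 y * v (0 + R • y))
      ≤ ∫ y, 20 * ‖e‖ * (k2 ((1 / 4 : ℝ) • y) * |v (R • y)|) := by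
    refine integral_mono (i1.sub i2) i4 fun y => ?_
    beta_reduce
    rw [zero_add, ← sub_mul, ← mul_assoc]
    refine (le_abs_self _).trans ?_
    rw [abs_mul]
    exact mul_le_mul_of_nonneg_right (k2_diff y e he1) (abs_nonneg _)
  refine h2.trans ?_
  rw [integral_const_mul, hval, hne]
  have h3 := hB (4 * R) (by linarith)
  have h5 : √(4 * R) = 2 * √R := by
    rw [Real.sqrt_mul (by norm_num), show (4 : ℝ) = 2 ^ 2 by norm_num, Real.sqrt_sq (by norm_num)]
  rw [h5] at h3
  have hs : 0 < √R := Real.sqrt_pos.2 hR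
  have hRs : R = √R * √R := (Real.mul_self_sqrt hR.le).symm
  have e1 : |((1 / 4 : ℝ) ^ 3)⁻¹| = 64 := by norm_num
  rw [e1]
  calc 20 * (‖x‖ / R) * (64 * ∫ y, k2 y * |v ((4 * R) • y)|) ≤ 20 * (‖x‖ / R) * (64 * (B * (2 * √R))) := by
        gcongr
    _ = 2560 * B * ‖x‖ * (√R / R) := by ring
    _ = _ := by
      rw [div_eq_mul_inv _ √R, Real.sqrt_div_self]

lemma log_diff_bound {x z : E3} (hz : z ≠ 0) (hxz : x - z ≠ 0) :
    |Real.log ‖z‖ - Real.log ‖x - z‖| ≤ ‖x‖ * (2 + 1 / ‖z‖ ^ 2 + 1 / ‖x - z‖ ^ 2) := by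
  have hg : ∀ a b : E3, a ≠ 0 → b ≠ 0 → ‖a‖ ≤ ‖b‖ + ‖x‖ →
      Real.log ‖a‖ - Real.log ‖b‖ ≤ ‖x‖ * (1 + 1 / ‖b‖ ^ 2) := by
    intro a b ha hb hab
    have ha' := norm_pos_iff.2 ha
    have hb' := norm_pos_iff.2 hb
    rw [← Real.log_div ha'.ne' hb'.ne']
    refine (Real.log_le_sub_one_of_pos (by positivity)).trans ?_
    have h1 : ‖a‖ / ‖b‖ - 1 ≤ ‖x‖ * (1 / ‖b‖) := by
      rw [div_sub_one hb'.ne', mul_one_div]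
      gcongr; linarith
    refine h1.trans (mul_le_mul_of_nonneg_left ?_ (norm_nonneg x))
    have : 1 / ‖b‖ ^ 2 = (1 / ‖b‖) ^ 2 := by rw [div_pow, one_pow]
    rw [this]
    nlinarith [sq_nonneg (1 / ‖b‖ - 1), sq_nonneg (1 / ‖b‖)]
  have hx := norm_nonneg x
  have p1 : 0 ≤ ‖x‖ * (1 + 1 / ‖z‖ ^ 2) := by positivity
  have p2 : 0 ≤ ‖x‖ * (1 + 1 / ‖x - z‖ ^ 2) := by positivity
  have h1 := hg z (x - z) hz hxz (by
    have := norm_sub_le x (x - z)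
    rw [sub_sub_cancel] at this; linarith)
  have h2 := hg (x - z) z hxz hz (by have := norm_sub_le x z; linarith)
  rw [abs_le]
  constructor <;> nlinarith

/-- `v` is bounded by the logarithmic potential of `P`. -/
lemma Pot.v_le {v P : E3 → ℝ} {κ : ℝ} (h : Pot v P κ 0) {p : ℝ} (hp : 0 < p)
    (hW : Integrable (fun y => Real.exp (p * v y) / ‖(0 : E3) - y‖ ^ 2)) (x : E3) :
    Integrable (fun z => P z * (Real.log ‖z‖ - Real.log ‖x - z‖)) ∧
    v x - v 0 ≤ κ * ∫ z, P z * (Real.log ‖z‖ - Real.log ‖x - z‖) := by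
  obtain ⟨B, hB⟩ := h.abs_mean hp hW
  have hae : ∀ᵐ z : E3, z ≠ 0 ∧ x - z ≠ 0 := by
    have h1 : ∀ᵐ z : E3, z ≠ x := by simp [ae_iff, measure_singleton]
    filter_upwards [ae_ne_zero, h1] with z hz hz1
    exact ⟨hz, sub_ne_zero.2 (Ne.symm hz1)⟩
  have hL : Integrable (fun z => P z * (Real.log ‖z‖ - Real.log ‖x - z‖)) := by
    refine ((((h.int.const_mul 2).add (h.rint 0)).add (h.rint x)).const_mul ‖x‖).mono'
      (h.meas.mul (by fun_prop)).aestronglyMeasurable ?_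
    filter_upwards [hae] with z hz
    rw [norm_mul, Real.norm_of_nonneg (h.nonneg z), Real.norm_eq_abs]
    refine (mul_le_mul_of_nonneg_left (log_diff_bound hz.1 hz.2) (h.nonneg z)).trans (le_of_eq ?_)
    simp only [Pi.add_apply, zero_sub, norm_neg]
    ring
  refine ⟨hL, ?_⟩
  have hc := k2_pos
  set c := ∫ y, k2 y with hcdef
  have hmain : ∀ R : ℝ, 1 ≤ R → ‖x‖ ≤ R → c * (v x - v 0) ≤ 2560 * B * ‖x‖ / √R +
      κ * (c * (∫ z, P z * (Real.log ‖z‖ - Real.log ‖x - z‖)) + (∫ z, P z) * (‖x‖ * (Kc / R))) := by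
    intro R h1 h2
    have hR : 0 < R := by linarith
    obtain ⟨ix, fx⟩ := h.formula x hR.le
    obtain ⟨i0, f0⟩ := h.formula 0 hR.le
    have hm := mean_center h.smooth.continuous hB x h1 h2
    have hE : (∫ z, P z * ER R (x - z)) - ∫ z, P z * ER R (0 - z)
        ≤ c * (∫ z, P z * (Real.log ‖z‖ - Real.log ‖x - z‖)) + (∫ z, P z) * (‖x‖ * (Kc / R)) := by
      rw [← integral_sub ix i0, ← integral_const_mul, ← integral_mul_const,
        ← integral_add (hL.const_mul c) (h.int.mul_const _)]
      refine integral_mono_ae (ix.sub i0) ((hL.const_mul c).add (h.int.mul_const _)) ?_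
      filter_upwards [hae] with z hz
      have := ER_diff (a := x - z) (b := 0 - z) hz.2 (by simpa using hz.1) hR
      rw [sub_sub_sub_cancel_right, sub_zero, zero_sub, norm_neg, ← hcdef] at this
      have := mul_le_mul_of_nonneg_left this (h.nonneg z)
      rw [zero_sub, ← mul_sub]
      refine this.trans (le_of_eq ?_)
      ring
    have := mul_le_mul_of_nonneg_left hE h.pos.le
    rw [mul_sub] at this
    rw [zero_mul] at fx f0
    linarith
  have hlim : Tendsto (fun R : ℝ => 2560 * B * ‖x‖ / √R +
      κ * (c * (∫ z, P z * (Real.log ‖z‖ - Real.log ‖x - z‖)) + (∫ z, P z) * (‖x‖ * (Kc / R)))) atTop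
      (𝓝 (0 + κ * (c * (∫ z, P z * (Real.log ‖z‖ - Real.log ‖x - z‖)) + (∫ z, P z) * (‖x‖ * 0)))) := by
    refine Tendsto.add ?_ ?_
    · exact Tendsto.div_atTop tendsto_const_nhds Real.tendsto_sqrt_atTop
    · exact ((((tendsto_const_nhds.div_atTop tendsto_id).const_mul _).const_mul _).const_add _).const_mul _
  have hfin := ge_of_tendsto hlim (by
    filter_upwards [eventually_ge_atTop 1, eventually_ge_atTop ‖x‖] with R h1 h2
    exact hmain R h1 h2)
  rw [zero_add, mul_zero, mul_zero, add_zero, mul_left_comm] at hfin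
  exact le_of_mul_le_mul_left hfin hc

/-! ### The size of the normalizing constant and the decay of `exp (p v)` -/

lemma integrableOn_coord (i : Fin 3) :
    IntegrableOn (fun ζ : E3 => ζ i ^ 2 / ‖ζ‖ ^ 4) (Metric.ball 0 (1 / 2)) := by
  refine (integrableOn_ball_inv_sq (1 / 2)).mono' (Measurable.aestronglyMeasurable (by fun_prop)) (Eventually.of_forall fun ζ => ?_)
  have h1 : ζ i ^ 2 ≤ ‖ζ‖ ^ 2 := by
    have := PiLp.norm_apply_le ζ i
    rw [Real.norm_eq_abs] at this
    exact sq_le_sq' (by have := (abs_le.1 this).1; linarith) (abs_le.1 this).2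
  rw [Real.norm_of_nonneg (by positivity)]
  rcases eq_or_ne ζ 0 with rfl | hz
  · simp
  · have := norm_pos_iff.2 hz
    rw [div_le_div_iff₀ (by positivity) (by positivity)]
    nlinarith [sq_nonneg (‖ζ‖)]

/-- By symmetry in the three coordinates,
`∫_{|ζ|<1/2} ζ₁²/|ζ|⁴ = (1/3) ∫_{|ζ|<1/2} 1/|ζ|² = 2π/3`. -/
lemma integral_coord : ∫ ζ in Metric.ball (0 : E3) (1 / 2), ζ 0 ^ 2 / ‖ζ‖ ^ 4 = 2 * Real.pi / 3 := by
  have hs : ∀ i : Fin 3, ∫ ζ in Metric.ball (0 : E3) (1 / 2), ζ i ^ 2 / ‖ζ‖ ^ 4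
      = ∫ ζ in Metric.ball (0 : E3) (1 / 2), ζ 0 ^ 2 / ‖ζ‖ ^ 4 := by
    intro i
    let e : E3 ≃ₗᵢ[ℝ] E3 := LinearIsometryEquiv.piLpCongrLeft 2 ℝ ℝ (Equiv.swap 0 i)
    have hmp : MeasurePreserving e volume volume := e.measurePreserving
    have hpre : e ⁻¹' Metric.ball (0 : E3) (1 / 2) = Metric.ball (0 : E3) (1 / 2) := by
      ext ζ; simp
    have := hmp.setIntegral_preimage_emb e.toHomeomorph.measurableEmbedding
      (fun ζ : E3 => ζ i ^ 2 / ‖ζ‖ ^ 4) (Metric.ball (0 : E3) (1 / 2))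
    rw [hpre] at this
    rw [← this]
    congr 1
    ext ζ
    have h1 : (e ζ) i = ζ 0 := by
      simp [e, LinearIsometryEquiv.piLpCongrLeft_apply, Equiv.piCongrLeft']
    rw [h1, e.norm_map]
  have h3 : ∫ ζ in Metric.ball (0 : E3) (1 / 2), 1 / ‖ζ‖ ^ 2
      = ∑ i : Fin 3, ∫ ζ in Metric.ball (0 : E3) (1 / 2), ζ i ^ 2 / ‖ζ‖ ^ 4 := by
    rw [← integral_finsetSum _ (fun i _ => integrableOn_coord i)]
    congr 1
    ext ζ
    rw [← Finset.sum_div, ← EuclideanSpace.real_norm_sq_eq ζ]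
    rcases eq_or_ne ζ 0 with rfl | hz
    · simp
    · have := norm_pos_iff.2 hz
      field_simp
  rw [integral_ball_inv_sq (by norm_num), Fin.sum_univ_three, hs 1, hs 2] at h3
  linarith

/-- `1 - cos t ≥ 2 t²/π²` for `|t| ≤ π` gives `C₃⁻¹ ≥ ∫_{|ζ|<1/2} 8 ζ₁²/|ζ|⁴ = 16π/3`. -/
lemma C3_inv_lower (h : C3 ≠ 0) : 16 * Real.pi / 3 ≤ C3⁻¹ := by
  have hI : Integrable (fun ζ : E3 => (1 - Real.cos (2 * Real.pi * ζ 0)) / ‖ζ‖ ^ 4) := by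
    -- Without integrability the integral, hence `C3`, would be the junk value `0`.
    by_contra hn
    exact h (by rw [C3, integral_undef hn, inv_zero])
  have hpi := Real.pi_pos
  rw [C3, inv_inv]
  calc 16 * Real.pi / 3 = ∫ ζ in Metric.ball (0 : E3) (1 / 2), 8 * (ζ 0 ^ 2 / ‖ζ‖ ^ 4) := by
        rw [integral_const_mul, integral_coord]; ring
    _ ≤ ∫ ζ in Metric.ball (0 : E3) (1 / 2), (1 - Real.cos (2 * Real.pi * ζ 0)) / ‖ζ‖ ^ 4 := by
        refine setIntegral_mono_on ((integrableOn_coord 0).const_mul 8) hI.integrableOn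
          measurableSet_ball fun ζ hζ => ?_
        rw [mul_div_assoc']
        refine div_le_div_of_nonneg_right ?_ (by positivity)
        have h1 : |ζ 0| ≤ 1 / 2 := by
          have h2 := PiLp.norm_apply_le ζ 0
          rw [Real.norm_eq_abs] at h2
          have h3 : ‖ζ‖ < 1 / 2 := by simpa using hζ
          linarith
        have h4 : |2 * Real.pi * ζ 0| ≤ Real.pi := by
          rw [abs_mul, abs_of_pos (by positivity)]
          nlinarith
        have h5 := Real.cos_le_one_sub_mul_cos_sq h4
        have h6 : 2 / Real.pi ^ 2 * (2 * Real.pi * ζ 0) ^ 2 = 8 * ζ 0 ^ 2 := by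
          field_simp; ring
        linarith
    _ ≤ _ := by
        refine setIntegral_le_integral hI (Eventually.of_forall fun ζ => ?_)
        have := Real.cos_le_one (2 * Real.pi * ζ 0)
        exact div_nonneg (by linarith) (by positivity)

/-- The condition `α > 3/p` bounds the coefficient `p κ ∫ P₃` of the logarithmic decay of `p v`
from below by `4`, thanks to `C3_inv_lower`. -/
lemma mass_gt_four {p J : ℝ} (hp : 0 < p) (h : 0 < C3) (hJ : 3 / p < 1 / (2 * Real.pi ^ 2) * J) :
    4 < p * kap * J := by
  have hI := C3_inv_lower h.ne'
  have hpi := Real.pi_pos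
  have h4 := Real.pi_lt_four
  have h1 : 6 * Real.pi ^ 2 < p * J := by
    rw [div_lt_iff₀ hp] at hJ
    have : 1 / (2 * Real.pi ^ 2) * J * p * (2 * Real.pi ^ 2) = p * J := by field_simp
    nlinarith [mul_lt_mul_of_pos_right hJ (by positivity : 0 < 2 * Real.pi ^ 2)]
  have h2 : p * kap * J = (p * J) * (C3⁻¹ / (2 * Real.pi ^ 4)) := by
    unfold kap; field_simp
  have h3 : (6 * Real.pi ^ 2) * ((16 * Real.pi / 3) / (2 * Real.pi ^ 4)) = 16 / Real.pi := by
    field_simp; ring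
  have h5 : 4 < 16 / Real.pi := by
    rw [lt_div_iff₀ hpi]; linarith
  rw [h2]
  calc 4 < 16 / Real.pi := h5
    _ = _ := h3.symm
    _ ≤ (p * J) * ((16 * Real.pi / 3) / (2 * Real.pi ^ 4)) := by gcongr
    _ ≤ _ := by
      have : 0 ≤ p * J := by nlinarith
      gcongr

/-- Pointwise majorant of the logarithmic kernel for large `x`: mass inside `|z| ≤ R₀` contributes
`-log|x|`, mass outside at most `(M+1) log|x|` up to a local singularity near `x`. -/
lemma log_kernel_le {x z : E3} {R₀ : ℝ} (M : ℕ) (hR : 1 ≤ R₀) (hx : 2 * R₀ ≤ ‖x‖) (hx2 : 2 ≤ ‖x‖)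
    (hzx : z ≠ x) :
    Real.log ‖z‖ - Real.log ‖x - z‖ ≤ (Real.log R₀ + Real.log 2 - Real.log ‖x‖)
      + (Metric.closedBall (0 : E3) R₀)ᶜ.indicator (fun _ => (M + 2) * Real.log ‖x‖) z
      + (Metric.ball x (‖x‖ ^ M)⁻¹).indicator (fun z => 1 / ‖x - z‖ ^ 2) z := by
  have hx0 : 0 < ‖x‖ := by linarith
  have hL : 0 ≤ Real.log ‖x‖ := Real.log_nonneg (by linarith)
  have hR0 : 0 ≤ Real.log R₀ := Real.log_nonneg hR
  have hl2 : 0 ≤ Real.log 2 := Real.log_nonneg (by norm_num)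
  have hd : 0 < ‖x - z‖ := norm_pos_iff.2 (sub_ne_zero.2 hzx.symm)
  have hn : 0 ≤ (Metric.ball x (‖x‖ ^ M)⁻¹).indicator (fun z => 1 / ‖x - z‖ ^ 2) z :=
    Set.indicator_nonneg (fun _ _ => by positivity) _
  have ht1 : ‖x‖ ≤ ‖z‖ + ‖x - z‖ := by
    have := norm_add_le z (x - z); simpa using this
  have ht2 : ‖z‖ ≤ ‖x‖ + ‖x - z‖ := by
    have := norm_sub_le x (x - z); simpa using this
  by_cases hz : ‖z‖ ≤ R₀
  · have e : (Metric.closedBall (0 : E3) R₀)ᶜ.indicator (fun _ => (M + 2) * Real.log ‖x‖) z = 0 :=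
      Set.indicator_of_notMem (by simpa using hz) _
    have h1 : Real.log ‖z‖ ≤ Real.log R₀ := by
      rcases (norm_nonneg z).eq_or_lt with h0 | h0
      · rw [← h0, Real.log_zero]; exact hR0
      · exact Real.log_le_log h0 hz
    have h2 : Real.log ‖x‖ - Real.log 2 ≤ Real.log ‖x - z‖ := by
      rw [← Real.log_div hx0.ne' (by norm_num)]
      exact Real.log_le_log (by positivity) (by linarith)
    rw [e]; linarith
  · have hz' : R₀ < ‖z‖ := not_le.1 hz
    have hz0 : 0 < ‖z‖ := by linarith
    have e : (Metric.closedBall (0 : E3) R₀)ᶜ.indicator (fun _ => (M + 2) * Real.log ‖x‖) z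
        = (M + 2) * Real.log ‖x‖ := Set.indicator_of_mem (by simpa using hz') _
    rw [e]
    have hML : 0 ≤ (M : ℝ) * Real.log ‖x‖ := by positivity
    rcases le_total 1 ‖x - z‖ with h1 | h1
    · have : Real.log ‖z‖ ≤ Real.log 2 + Real.log ‖x‖ + Real.log ‖x - z‖ := by
        rw [← Real.log_mul (by norm_num) hx0.ne', ← Real.log_mul (by positivity) hd.ne']
        exact Real.log_le_log hz0 (by nlinarith)
      linarith
    · have h2 : Real.log ‖z‖ ≤ Real.log 2 + Real.log ‖x‖ := by
        rw [← Real.log_mul (by norm_num) hx0.ne']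
        exact Real.log_le_log hz0 (by linarith)
      by_cases h3 : ‖x - z‖ < (‖x‖ ^ M)⁻¹
      · have e2 : (Metric.ball x (‖x‖ ^ M)⁻¹).indicator (fun z => 1 / ‖x - z‖ ^ 2) z
            = 1 / ‖x - z‖ ^ 2 :=
          Set.indicator_of_mem (by rwa [mem_ball_iff_norm, norm_sub_rev]) _
        have h4 : -Real.log ‖x - z‖ ≤ 1 / ‖x - z‖ ^ 2 := by
          rw [← Real.log_inv]
          have h5 := Real.log_le_self (x := ‖x - z‖⁻¹) (by positivity)
          have h6 : 1 ≤ ‖x - z‖⁻¹ := (one_le_inv₀ hd).2 h1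
          have h7 : 1 / ‖x - z‖ ^ 2 = ‖x - z‖⁻¹ * ‖x - z‖⁻¹ := by
            rw [one_div, ← inv_pow, sq]
          rw [h7]
          nlinarith
        rw [e2]; linarith
      · have h4 : -(M * Real.log ‖x‖) ≤ Real.log ‖x - z‖ := by
          rw [← Real.log_pow, ← Real.log_inv]
          exact Real.log_le_log (by positivity) (not_lt.1 h3)
        linarith

/-- If `p κ ∫P > 4` then `exp (p v) = O((1+|x|)⁻⁴)`. The polynomial bound on `P` controls the
logarithmic singularity at `z = x`. -/
lemma Pot.decay {v P : E3 → ℝ} {κ : ℝ} (h : Pot v P κ 0) {p : ℝ} (hp : 0 < p)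
    (hW : Integrable (fun y => Real.exp (p * v y) / ‖(0 : E3) - y‖ ^ 2))
    {D : ℝ} {M : ℕ} (hD : 0 ≤ D) (hb : ∀ y, P y ≤ D * (1 + ‖y‖) ^ M)
    (hT : 4 < p * κ * ∫ z, P z) : ∃ C, 0 ≤ C ∧ ∀ x, Real.exp (p * v x) ≤ C * om x := by
  have hκ := h.pos
  have hvc : Continuous v := h.smooth.continuous
  set m := ∫ z, P z with hm
  set T := p * κ * m with hTd
  have hm0 : 0 ≤ m := integral_nonneg h.nonneg
  -- Choose `R₀` so large that the mass outside costs at most the surplus `T - 4` in the decay rate.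
  obtain ⟨R₀, hR1, hη⟩ : ∃ R₀ : ℝ, 1 ≤ R₀ ∧
      p * κ * (∫ z in (Metric.closedBall (0 : E3) R₀)ᶜ, P z) * (M + 2) ≤ T - 4 := by
    have h1 : Tendsto (fun n : ℕ => ∫ z in (Metric.closedBall (0 : E3) n)ᶜ, P z) atTop (𝓝 0) := by
      have := tendsto_setIntegral_of_antitone (μ := (volume : Measure E3)) (f := P)
        (s := fun n : ℕ => (Metric.closedBall (0 : E3) n)ᶜ)
        (fun n => Metric.isClosed_closedBall.measurableSet.compl)
        (fun a b hab => Set.compl_subset_compl.2 (Metric.closedBall_subset_closedBall (by exact_mod_cast hab)))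
        ⟨0, h.int.integrableOn⟩
      have he : ⋂ n : ℕ, (Metric.closedBall (0 : E3) n)ᶜ = ∅ := by
        rw [← Set.compl_iUnion, Metric.iUnion_closedBall_nat, Set.compl_univ]
      rwa [he, setIntegral_empty] at this
    have h2 := ((h1.const_mul (p * κ)).mul_const ((M : ℝ) + 2))
    rw [mul_zero, zero_mul] at h2
    obtain ⟨n, hn, hn1⟩ := ((h2.eventually (gt_mem_nhds (sub_pos.2 hT))).and
      (eventually_ge_atTop 1)).exists
    exact ⟨n, by exact_mod_cast hn1, hn.le⟩
  set m' := ∫ z in (Metric.closedBall (0 : E3) R₀)ᶜ, P z with hm'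
  set A := p * v 0 + p * κ * ((Real.log R₀ + Real.log 2) * m + D * 2 ^ M * (4 * Real.pi)) with hA
  have hlarge : ∀ x : E3, 2 * R₀ ≤ ‖x‖ → 2 ≤ ‖x‖ → p * v x ≤ A - 4 * Real.log ‖x‖ := by
    intro x hx hx2
    have hx0 : 0 < ‖x‖ := by linarith
    obtain ⟨i1, hle⟩ := h.v_le hp hW x
    -- At this radius the polynomial bound on `P` near `x` is compensated exactly.
    set ρ := (‖x‖ ^ M)⁻¹ with hρ
    have hρ0 : 0 < ρ := by positivity
    have hρ1 : ρ ≤ 1 := inv_le_one_of_one_le₀ (one_le_pow₀ (by linarith))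
    set c := Real.log R₀ + Real.log 2 - Real.log ‖x‖ with hc
    set L := Real.log ‖x‖ with hL
    have hL0 : 0 ≤ L := Real.log_nonneg (by linarith)
    have j1 : Integrable (fun z => P z * c) := h.int.mul_const c
    have j2 : Integrable ((Metric.closedBall (0 : E3) R₀)ᶜ.indicator (fun z => P z * ((M + 2) * L))) :=
      (h.int.mul_const _).indicator Metric.isClosed_closedBall.measurableSet.compl
    have j3 : Integrable ((Metric.ball x ρ).indicator (fun z => P z / ‖x - z‖ ^ 2)) :=
      (h.rint x).indicator measurableSet_ball
    have hnear : ∫ z, (Metric.ball x ρ).indicator (fun z => P z / ‖x - z‖ ^ 2) z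
        ≤ D * 2 ^ M * (4 * Real.pi) := by
      obtain ⟨k1, k2⟩ := integrableOn_ball_shift x ρ
      rw [integral_indicator measurableSet_ball]
      calc ∫ z in Metric.ball x ρ, P z / ‖x - z‖ ^ 2
          ≤ ∫ z in Metric.ball x ρ, (D * (2 * ‖x‖) ^ M) * (1 / ‖x - z‖ ^ 2) := by
            refine setIntegral_mono_on (h.rint x).integrableOn (k1.const_mul _)
              measurableSet_ball fun z hz => ?_
            rw [div_eq_mul_one_div]
            refine mul_le_mul_of_nonneg_right ((hb z).trans ?_) (by positivity)
            have hz2 : ‖z - x‖ < ρ := mem_ball_iff_norm.1 hz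
            have hz3 : ‖z‖ ≤ ‖z - x‖ + ‖x‖ := by
              have := norm_add_le (z - x) x; simpa using this
            gcongr
            linarith
        _ = D * (2 * ‖x‖) ^ M * (4 * Real.pi * ρ) := by
            rw [integral_const_mul, k2 hρ0.le]
        _ = D * 2 ^ M * (4 * Real.pi) * (‖x‖ ^ M * ρ) := by rw [mul_pow]; ring
        _ = _ := by rw [hρ, mul_inv_cancel₀ (by positivity), mul_one]
    have j12 : Integrable (fun z => P z * c
        + (Metric.closedBall (0 : E3) R₀)ᶜ.indicator (fun z => P z * ((M + 2) * L)) z) := j1.add j2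
    have j123 : Integrable (fun z => P z * c
        + (Metric.closedBall (0 : E3) R₀)ᶜ.indicator (fun z => P z * ((M + 2) * L)) z
        + (Metric.ball x ρ).indicator (fun z => P z / ‖x - z‖ ^ 2) z) := j12.add j3
    have hint : ∫ z, P z * (Real.log ‖z‖ - Real.log ‖x - z‖)
        ≤ m * c + m' * ((M + 2) * L) + D * 2 ^ M * (4 * Real.pi) := by
      calc _ ≤ ∫ z, (P z * c + (Metric.closedBall (0 : E3) R₀)ᶜ.indicator (fun z => P z * ((M + 2) * L)) z
            + (Metric.ball x ρ).indicator (fun z => P z / ‖x - z‖ ^ 2) z) := by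
            refine integral_mono_ae i1 j123 ?_
            filter_upwards [compl_mem_ae_iff.2 (measure_singleton x)] with z hz
            have hz' : z ≠ x := hz
            have h1 := mul_le_mul_of_nonneg_left (log_kernel_le M hR1 hx hx2 hz') (h.nonneg z)
            rw [mul_add, mul_add] at h1
            refine h1.trans (le_of_eq ?_)
            rw [← Set.indicator_mul_right _ (i := z) P, ← Set.indicator_mul_right _ (i := z) P]
            simp only [mul_one_div]
            rfl
        _ = m * c + m' * ((M + 2) * L)
            + ∫ z, (Metric.ball x ρ).indicator (fun z => P z / ‖x - z‖ ^ 2) z := by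
            rw [integral_add j12 j3, integral_add j1 j2, integral_mul_const,
              integral_indicator Metric.isClosed_closedBall.measurableSet.compl, integral_mul_const]
        _ ≤ _ := by linarith
    have h1 : p * (v x - v 0) ≤ p * κ * (m * c + m' * ((M + 2) * L) + D * 2 ^ M * (4 * Real.pi)) := by
      rw [mul_assoc]
      exact mul_le_mul_of_nonneg_left (hle.trans (mul_le_mul_of_nonneg_left hint hκ.le)) hp.le
    have h2 : p * κ * m' * (M + 2) * L ≤ (T - 4) * L := mul_le_mul_of_nonneg_right hη hL0
    have h3 : p * κ * (m * c + m' * ((M + 2) * L) + D * 2 ^ M * (4 * Real.pi))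
        = A - p * v 0 - T * L + p * κ * m' * (M + 2) * L := by
      rw [hA, hTd, hc]; ring
    linarith
  obtain ⟨C₀, hC₀⟩ := (isCompact_closedBall (0 : E3) (max (2 * R₀) 2)).exists_bound_of_continuousOn
    (f := fun x => Real.exp (p * v x) / om x)
    ((Continuous.div (by fun_prop) continuous_om (fun x => (om_pos x).ne')).continuousOn)
  refine ⟨max C₀ (16 * Real.exp A), le_max_of_le_right (by positivity), fun x => ?_⟩
  by_cases hx : x ∈ Metric.closedBall (0 : E3) (max (2 * R₀) 2)
  · have := (le_abs_self _).trans (hC₀ x hx)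
    rw [div_le_iff₀ (om_pos x)] at this
    exact this.trans (mul_le_mul_of_nonneg_right (le_max_left _ _) (om_pos x).le)
  · have hx' : max (2 * R₀) 2 < ‖x‖ := by simpa using hx
    have ha := (le_max_left _ _).trans_lt hx'
    have hb2 := (le_max_right _ _).trans_lt hx'
    have hx0 : 0 < ‖x‖ := by linarith
    have h1 := Real.exp_le_exp.2 (hlarge x ha.le hb2.le)
    rw [Real.exp_sub, show (4 : ℝ) * Real.log ‖x‖ = Real.log (‖x‖ ^ 4) by
      rw [Real.log_pow]; norm_num, Real.exp_log (by positivity)] at h1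
    refine h1.trans (le_trans ?_ (mul_le_mul_of_nonneg_right (le_max_right _ _) (om_pos x).le))
    rw [om, ← div_eq_mul_inv, div_le_div_iff₀ (by positivity) (by positivity)]
    have h2 : (1 + ‖x‖) ^ 4 ≤ (2 * ‖x‖) ^ 4 := by gcongr; linarith
    calc Real.exp A * (1 + ‖x‖) ^ 4 ≤ Real.exp A * (2 * ‖x‖) ^ 4 := by gcongr
      _ = _ := by ring

/-! ### Asymptotics of the potential of a decaying density -/

lemma tendsto_ratio (y : E3) :
    Tendsto (fun x : E3 => ‖x‖ ^ 2 / ‖x - y‖ ^ 2) (cocompact E3) (𝓝 1) := by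
  have hinf := tendsto_norm_cocompact_atTop (E := E3)
  have h1 : Tendsto (fun x : E3 => ‖x - y‖ / ‖x‖ - 1) (cocompact E3) (𝓝 0) := by
    refine squeeze_zero_norm' ?_ ((tendsto_const_nhds (x := ‖y‖)).div_atTop hinf)
    filter_upwards [hinf.eventually_gt_atTop 0] with x hx
    have e : ‖x - y‖ / ‖x‖ - 1 = (‖x - y‖ - ‖x‖) / ‖x‖ := by field_simp
    rw [e, norm_div, norm_norm, Real.norm_eq_abs]
    refine div_le_div_of_nonneg_right ?_ hx.le
    have := abs_norm_sub_norm_le (x - y) x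
    simpa using this
  have h2 : Tendsto (fun x : E3 => ‖x - y‖ / ‖x‖) (cocompact E3) (𝓝 1) := by
    simpa using h1.add_const 1
  have h3 := (h2.inv₀ one_ne_zero).pow 2
  simpa [inv_div, div_pow] using h3

/-- If `0 ≤ f = O((1+|y|)⁻⁴)` then `|x|² ∫ f(y)/|x-y|² dy → ∫ f`: the region `|x-y| < |x|/2`
contributes `O(1/|x|)`, and dominated convergence applies on its complement. -/
lemma tendsto_potential {f : E3 → ℝ} (hf : Continuous f) (h0 : ∀ y, 0 ≤ f y) {C : ℝ}
    (hC : ∀ y, f y ≤ C * om y) :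
    Tendsto (fun x : E3 => ∫ y, ‖x‖ ^ 2 * f y / ‖x - y‖ ^ 2) (cocompact E3) (𝓝 (∫ y, f y)) := by
  have hinf := tendsto_norm_cocompact_atTop (E := E3)
  have hC0 : 0 ≤ C := by
    have := (h0 0).trans (hC 0)
    exact nonneg_of_mul_nonneg_left this (om_pos 0)
  have hm : ∀ x : E3, Measurable (fun y => ‖x‖ ^ 2 * f y / ‖x - y‖ ^ 2) := fun x => by
    have := hf.measurable
    fun_prop
  have hnear : ∀ x : E3, ∀ y ∈ Metric.ball x (‖x‖ / 2),
      ‖x‖ ^ 2 * f y / ‖x - y‖ ^ 2 ≤ 16 * C / ‖x‖ ^ 2 * (1 / ‖x - y‖ ^ 2) := by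
    intro x y hy
    have hy1 : ‖x - y‖ < ‖x‖ / 2 := by rw [norm_sub_rev]; exact mem_ball_iff_norm.1 hy
    have hx : 0 < ‖x‖ := by have := norm_nonneg (x - y); linarith
    have hy2 : ‖x‖ / 2 ≤ ‖y‖ := by
      have := norm_sub_norm_le x y; linarith
    rw [div_eq_mul_one_div]
    refine mul_le_mul_of_nonneg_right ?_ (by positivity)
    have h1 : f y ≤ C * (16 / ‖x‖ ^ 4) := by
      refine (hC y).trans (mul_le_mul_of_nonneg_left ?_ hC0)
      have h2 : (‖x‖ / 2) ^ 4 ≤ (1 + ‖y‖) ^ 4 := by gcongr; linarith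
      calc om y ≤ ((‖x‖ / 2) ^ 4)⁻¹ := by unfold om; gcongr
        _ = _ := by rw [div_pow, inv_div]; norm_num
    calc ‖x‖ ^ 2 * f y ≤ ‖x‖ ^ 2 * (C * (16 / ‖x‖ ^ 4)) := by gcongr
      _ = _ := by field_simp
  have hfar : ∀ x y : E3, ‖(Metric.ball x (‖x‖ / 2))ᶜ.indicator
      (fun y => ‖x‖ ^ 2 * f y / ‖x - y‖ ^ 2) y‖ ≤ 4 * (C * om y) := by
    intro x y
    by_cases hy : y ∈ (Metric.ball x (‖x‖ / 2))ᶜ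
    · rw [Set.indicator_of_mem hy, Real.norm_of_nonneg
        (div_nonneg (mul_nonneg (by positivity) (h0 y)) (by positivity))]
      have hy1 : ‖x‖ / 2 ≤ ‖x - y‖ := by
        rw [norm_sub_rev]
        exact not_lt.1 fun hlt => hy (mem_ball_iff_norm.2 hlt)
      have h2 : ‖x‖ ^ 2 / ‖x - y‖ ^ 2 ≤ 4 := by
        refine div_le_of_le_mul₀ (by positivity) (by norm_num) ?_
        nlinarith [norm_nonneg x]
      calc ‖x‖ ^ 2 * f y / ‖x - y‖ ^ 2 = ‖x‖ ^ 2 / ‖x - y‖ ^ 2 * f y := by ring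
        _ ≤ 4 * (C * om y) := mul_le_mul h2 (hC y) (h0 y) (by norm_num)
    · rw [Set.indicator_of_notMem hy, norm_zero]
      exact mul_nonneg (by norm_num) (mul_nonneg hC0 (om_pos y).le)
  have iom : Integrable (fun y => 4 * (C * om y)) := (integrable_om4.const_mul C).const_mul 4
  have ifar : ∀ x : E3, Integrable ((Metric.ball x (‖x‖ / 2))ᶜ.indicator
      (fun y => ‖x‖ ^ 2 * f y / ‖x - y‖ ^ 2)) := fun x =>
    iom.mono' ((hm x).indicator measurableSet_ball.compl).aestronglyMeasurable
      (Eventually.of_forall (hfar x))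
  have inear : ∀ x : E3, IntegrableOn (fun y => ‖x‖ ^ 2 * f y / ‖x - y‖ ^ 2)
      (Metric.ball x (‖x‖ / 2)) := fun x =>
    ((integrableOn_ball_shift x (‖x‖ / 2)).1.const_mul (16 * C / ‖x‖ ^ 2)).mono'
      (hm x).aestronglyMeasurable (by
        filter_upwards [ae_restrict_mem measurableSet_ball] with y hy
        rw [Real.norm_of_nonneg (div_nonneg (mul_nonneg (by positivity) (h0 y)) (by positivity))]
        exact hnear x y hy)
  -- Far from `x` the kernel `‖x‖ ^ 2 / ‖x - y‖ ^ 2` is at most `4`: dominated convergence.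
  have t1 : Tendsto (fun x : E3 => ∫ y, (Metric.ball x (‖x‖ / 2))ᶜ.indicator
      (fun y => ‖x‖ ^ 2 * f y / ‖x - y‖ ^ 2) y) (cocompact E3) (𝓝 (∫ y, f y)) := by
    have : (cocompact E3).IsCountablyGenerated := by
      rw [← Metric.cobounded_eq_cocompact, ← comap_norm_atTop]
      infer_instance
    refine tendsto_integral_filter_of_dominated_convergence _
      (Eventually.of_forall fun x => (ifar x).aestronglyMeasurable)
      (Eventually.of_forall fun x => Eventually.of_forall (hfar x)) iom
      (Eventually.of_forall fun y => ?_)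
    have h1 := (tendsto_ratio y).mul_const (f y)
    rw [one_mul] at h1
    refine h1.congr' ?_
    filter_upwards [hinf.eventually_ge_atTop (2 * ‖y‖)] with x hx
    have hy : y ∈ (Metric.ball x (‖x‖ / 2))ᶜ := by
      intro hy
      have h2 : ‖y - x‖ < ‖x‖ / 2 := mem_ball_iff_norm.1 hy
      rw [norm_sub_rev] at h2
      have := norm_sub_norm_le x y
      linarith
    rw [Set.indicator_of_mem hy]
    ring
  have t2 : Tendsto (fun x : E3 => ∫ y in Metric.ball x (‖x‖ / 2), ‖x‖ ^ 2 * f y / ‖x - y‖ ^ 2)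
      (cocompact E3) (𝓝 0) := by
    refine squeeze_zero' (Eventually.of_forall fun x => integral_nonneg fun y =>
      div_nonneg (mul_nonneg (by positivity) (h0 y)) (by positivity)) ?_
      ((tendsto_const_nhds (x := 32 * C * Real.pi)).div_atTop hinf)
    filter_upwards [hinf.eventually_gt_atTop 0] with x hx
    obtain ⟨k1, k2⟩ := integrableOn_ball_shift x (‖x‖ / 2)
    refine (setIntegral_mono_on (inear x) (k1.const_mul _) measurableSet_ball (hnear x)).trans
      (le_of_eq ?_)
    rw [integral_const_mul, k2 (by positivity)]
    field_simp
    ring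
  have := t1.add t2
  rw [add_zero] at this
  refine this.congr fun x => ?_
  have i2 := (integrable_indicator_iff measurableSet_ball).2 (inear x)
  rw [← integral_indicator measurableSet_ball, ← integral_add (ifar x) i2]
  congr 1
  ext y
  exact Set.indicator_compl_add_self_apply _ _ y

/-- Quadratic decay of `u` follows from that of the density `exp (p v)` through the representation
`u = κ ∫ exp (p v(y))/|·-y|² dy`. -/
lemma sq_decay {u f : E3 → ℝ} {κ C : ℝ} (hu : Continuous u) (h0 : ∀ x, 0 ≤ u x)
    (hf : Continuous f) (hf0 : ∀ y, 0 ≤ f y) (hC : ∀ y, f y ≤ C * om y)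
    (hr : ∀ x, u x = κ * ∫ y, f y / ‖x - y‖ ^ 2) : ∃ B, ∀ x, u x ^ 2 ≤ B * om x := by
  have h1 := (tendsto_potential hf hf0 hC).const_mul κ
  have h2 : Tendsto (fun x => ‖x‖ ^ 2 * u x) (cocompact E3) (𝓝 (κ * ∫ y, f y)) := by
    refine h1.congr fun x => ?_
    simp_rw [mul_div_assoc]
    rw [hr x, integral_const_mul]
    ring
  obtain ⟨b, hb⟩ : ∃ b, κ * ∫ y, f y < b := exists_gt _
  have h3 := (h2.eventually (gt_mem_nhds hb)).and
    ((tendsto_norm_cocompact_atTop (E := E3)).eventually_ge_atTop 1)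
  obtain ⟨r, hrr⟩ := (Metric.mem_cocompact_iff_closedBall_compl_subset (0 : E3)).1 h3
  obtain ⟨B, hB⟩ := (isCompact_closedBall (0 : E3) r).exists_bound_of_continuousOn
    (f := fun x => u x ^ 2 / om x)
    ((Continuous.div (by fun_prop) continuous_om (fun x => (om_pos x).ne')).continuousOn)
  refine ⟨max B (16 * b ^ 2), fun x => ?_⟩
  by_cases hx : x ∈ Metric.closedBall (0 : E3) r
  · have := (le_abs_self _).trans (hB x hx)
    rw [div_le_iff₀ (om_pos x)] at this
    exact this.trans (mul_le_mul_of_nonneg_right (le_max_left _ _) (om_pos x).le)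
  · obtain ⟨h4, h5⟩ := hrr hx
    refine le_trans ?_ (mul_le_mul_of_nonneg_right (le_max_right _ _) (om_pos x).le)
    have hux := h0 x
    have h6 : (1 + ‖x‖) ^ 4 ≤ (2 * ‖x‖) ^ 4 := by gcongr; linarith
    rw [om, ← div_eq_mul_inv, le_div_iff₀ (by positivity)]
    calc u x ^ 2 * (1 + ‖x‖) ^ 4 ≤ u x ^ 2 * (2 * ‖x‖) ^ 4 := by gcongr
      _ = 16 * (‖x‖ ^ 2 * u x) ^ 2 := by ring
      _ ≤ 16 * b ^ 2 := by gcongr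

theorem stmt10 (p : ℝ) (hp : 0 < p) (u v : E3 → ℝ)
    (hsol : IsSolution3 p u v)
    (hu_nonneg : ∀ x : E3, 0 ≤ u x)
    (hmass : FiniteMass3 u)
    (hv_decay : Tendsto (fun x : E3 => v x / ‖x‖ ^ 2) (cocompact E3) (𝓝 0))
    (hu_growth : ∃ K C R : ℝ, 0 < K ∧ 0 < C ∧ 0 < R ∧
      ∀ x : E3, R ≤ ‖x‖ → u x ≤ C * ‖x‖ ^ K)
    (α : ℝ) (hα : α = 1 / (2 * Real.pi ^ 2) * (∫ y : E3, P3 u y))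
    (hαp : 3 / p < α) :
    Tendsto (fun x : E3 => ∫ y : E3, ‖x‖ ^ 2 * u y ^ 2 / ‖x - y‖ ^ 2)
      (cocompact E3) (𝓝 (∫ y : E3, u y ^ 2)) := by
  rw [hα] at hαp
  -- `α > 3 / p > 0` excludes the junk value `0` of a nonintegrable `P3 u`.
  have hP : ∫ y, P3 u y ≠ 0 := by
    intro h0
    rw [h0, mul_zero] at hαp
    exact absurd hαp (not_lt.2 (by positivity))
  have huc := hsol.u_C1.continuous
  have hvc := hsol.v_C3.continuous
  have hPi := P3_integrable hP
  obtain ⟨D, M, hD, hb⟩ := P3_poly huc hu_nonneg hmass hu_growth hP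
  have hri := P3_riesz_integrable huc hPi hD hb
  obtain ⟨l, hl⟩ := lap_repr hsol hri
  have hpot : Pot v (P3 u) kap l :=
    ⟨hsol.v_C3, kap_pos hsol, P3_nonneg u, measurable_P3 huc, hPi, hri, hl⟩
  obtain rfl := hpot.l_zero hv_decay
  have hrep := u_repr hsol hu_nonneg hmass hP
  obtain ⟨C, -, hC⟩ := hpot.decay hp (hrep 0).1 hD hb (mass_gt_four hp (C3_pos hsol) hαp)
  obtain ⟨B, hB⟩ := sq_decay huc hu_nonneg (by fun_prop) (fun y => (Real.exp_pos (p * v y)).le) hC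
    (fun x => (hrep x).2)
  exact tendsto_potential (huc.pow 2) (fun y => sq_nonneg _) hB
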